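/- arXiv:1302.7228 — 2 statements merged into one kernel-verified Lean document; each statement's English description precedes it below -/
import Mathlib

section
/- There is a constant b ≥ 1 such that for every real ε with 0 < ε ≤ 1, every string graph with n ≥ 2 vertices and at least ε·n² edges contains a complete bipartite subgraph whose two parts each have size at least ε^b·n/log₂ n; that is, there exist disjoint vertex sets A and B with |A|, |B| ≥ ε^b·n/log₂ n such that every vertex of A is adjacent to every vertex of B. -/
/-- A curve in the plane: the image of a continuous map from `[0,1]` to `ℝ²`. -/
def IsCurve (c : Set (ℝ × ℝ)) : Prop :=
  ∃ f : ℝ → ℝ × ℝ, ContinuousOn f (Set.Icc 0 1) ∧ c = f '' Set.Icc 0 1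

/-- A string graph: an intersection graph of curves in the plane. -/
def IsStringGraph {V : Type*} (G : SimpleGraph V) : Prop :=
  ∃ γ : V → Set (ℝ × ℝ), (∀ v, IsCurve (γ v)) ∧
    ∀ u v : V, u ≠ v → (G.Adj u v ↔ (γ u ∩ γ v).Nonempty)


namespace SG

/-- Adjacency of the square grid. -/
def Hadj (a b : ℤ × ℤ) : Prop :=
  (a.1 = b.1 ∧ (a.2 = b.2 + 1 ∨ b.2 = a.2 + 1)) ∨ (a.2 = b.2 ∧ (a.1 = b.1 + 1 ∨ b.1 = a.1 + 1))

lemma Hadj.symm {a b : ℤ × ℤ} (h : Hadj a b) : Hadj b a := by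
  unfold Hadj at *; omega

lemma Hadj.ne {a b : ℤ × ℤ} (h : Hadj a b) : a ≠ b := by
  rintro rfl; unfold Hadj at *; omega

/-- Reachability inside `S`. -/
def Jn (S : Set (ℤ × ℤ)) (x y : ℤ × ℤ) : Prop :=
  Relation.ReflTransGen (fun a b => Hadj a b ∧ a ∈ S ∧ b ∈ S) x y

/-- Connected sets (empty set allowed). -/
def Conn (S : Set (ℤ × ℤ)) : Prop := ∀ x ∈ S, ∀ y ∈ S, Jn S x y

/-- Touching sets. -/
def Tch (S T : Set (ℤ × ℤ)) : Prop := ∃ x ∈ S, ∃ y ∈ T, Hadj x y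

lemma Tch.symm {S T : Set (ℤ × ℤ)} (h : Tch S T) : Tch T S := by
  obtain ⟨x, hx, y, hy, h⟩ := h
  exact ⟨y, hy, x, hx, h.symm⟩

lemma Tch.mono {S T S' T' : Set (ℤ × ℤ)} (h : Tch S T) (h1 : S ⊆ S') (h2 : T ⊆ T') :
    Tch S' T' := by
  obtain ⟨x, hx, y, hy, h⟩ := h
  exact ⟨x, h1 hx, y, h2 hy, h⟩

lemma Tch.ne_left {S T : Set (ℤ × ℤ)} (h : Tch S T) : S.Nonempty := by
  obtain ⟨x, hx, y, hy, h⟩ := h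
  exact ⟨x, hx⟩

lemma Tch.ne_right {S T : Set (ℤ × ℤ)} (h : Tch S T) : T.Nonempty := by
  obtain ⟨x, hx, y, hy, h⟩ := h
  exact ⟨y, hy⟩

lemma Jn.mono {S T : Set (ℤ × ℤ)} (h : S ⊆ T) {x y} (hj : Jn S x y) : Jn T x y :=
  Relation.ReflTransGen.mono (fun _ _ h' => ⟨h'.1, h h'.2.1, h h'.2.2⟩) _ _ hj

lemma Jn.symm {S : Set (ℤ × ℤ)} {x y} (hj : Jn S x y) : Jn S y x := by
  induction hj with
  | refl => exact Relation.ReflTransGen.refl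
  | tail _ hbc ih => exact Relation.ReflTransGen.head ⟨hbc.1.symm, hbc.2.2, hbc.2.1⟩ ih

lemma Jn.trans {S : Set (ℤ × ℤ)} {x y z} (h : Jn S x y) (h' : Jn S y z) : Jn S x z :=
  Relation.ReflTransGen.trans h h'

lemma Jn.refl {S : Set (ℤ × ℤ)} {x} : Jn S x x := Relation.ReflTransGen.refl

lemma Jn.step {S : Set (ℤ × ℤ)} {x y} (h : Hadj x y) (hx : x ∈ S) (hy : y ∈ S) : Jn S x y :=
  Relation.ReflTransGen.single ⟨h, hx, hy⟩

lemma Conn.singleton (x : ℤ × ℤ) : Conn {x} := by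
  intro a ha b hb
  rw [Set.mem_singleton_iff] at ha hb
  subst ha; subst hb; exact Jn.refl

lemma Conn.of_center {S : Set (ℤ × ℤ)} (x : ℤ × ℤ) (h : ∀ y ∈ S, Jn S x y) : Conn S :=
  fun a ha b hb => (h a ha).symm.trans (h b hb)

lemma Conn.union {S T : Set (ℤ × ℤ)} (hS : Conn S) (hT : Conn T) (h : (S ∩ T).Nonempty) :
    Conn (S ∪ T) := by
  obtain ⟨w, hw1, hw2⟩ := h
  refine Conn.of_center w ?_
  rintro y (hy | hy)
  · exact (hS w hw1 y hy).mono Set.subset_union_left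
  · exact (hT w hw2 y hy).mono Set.subset_union_right

lemma Conn.union_tch {S T : Set (ℤ × ℤ)} (hS : Conn S) (hT : Conn T) (h : Tch S T) :
    Conn (S ∪ T) := by
  obtain ⟨x, hx, y, hy, h⟩ := h
  refine Conn.of_center x ?_
  rintro z (hz | hz)
  · exact (hS x hx z hz).mono Set.subset_union_left
  · exact (Jn.step h (Or.inl hx) (Or.inr hy)).trans ((hT y hy z hz).mono Set.subset_union_right)

/-- Component of `x` in `S \ T`. -/
lemma Conn.first_hit {S T : Set (ℤ × ℤ)} (hS : Conn S) {x : ℤ × ℤ} (hx : x ∈ S) (hxT : x ∉ T)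
    (hT : (S ∩ T).Nonempty) :
    ∃ P ⊆ S, x ∈ P ∧ Conn P ∧ Disjoint P T ∧ ∃ p ∈ P, ∃ q ∈ S ∩ T, Hadj p q := by
  classical
  have key : ∀ y, Jn (S \ T) x y → Jn {z | z ∈ S \ T ∧ Jn (S \ T) x z} x y := by
    intro y h
    induction h with
    | refl => exact Jn.refl
    | tail hab hbc ih =>
      exact ih.trans (Jn.step hbc.1 ⟨hbc.2.1, hab⟩ ⟨hbc.2.2, hab.trans (Jn.step hbc.1 hbc.2.1 hbc.2.2)⟩)
  refine ⟨{z | z ∈ S \ T ∧ Jn (S \ T) x z}, fun z hz => hz.1.1, ⟨⟨hx, hxT⟩, Jn.refl⟩, ?_, ?_, ?_⟩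
  · exact Conn.of_center x fun y hy => key y hy.2
  · rw [Set.disjoint_left]; exact fun z hz => hz.1.2
  · by_contra hcon
    push Not at hcon
    obtain ⟨w, hwS, hwT⟩ := hT
    have : ∀ y, Jn S x y → (y ∈ S \ T ∧ Jn (S \ T) x y) := by
      intro y h
      induction h with
      | refl => exact ⟨⟨hx, hxT⟩, Jn.refl⟩
      | @tail b c hab hbc ih =>
        have hc : c ∉ T := fun hc => hcon b ih c ⟨hbc.2.2, hc⟩ hbc.1
        exact ⟨⟨hbc.2.2, hc⟩, ih.2.trans (Jn.step hbc.1 ih.1 ⟨hbc.2.2, hc⟩)⟩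
    exact (this w (hS x hx w hwS)).1.2 hwT

lemma Conn.exists_noncut {A : Set (ℤ × ℤ)} (hA : Conn A) (hf : A.Finite) (hn : A.Nontrivial) :
    ∃ v ∈ A, Conn (A \ {v}) := by
  classical
  let G : SimpleGraph A := ⟨fun a b => Hadj a b, ⟨fun a b h => Hadj.symm h⟩, ⟨fun a h => Hadj.ne h rfl⟩⟩
  have : Finite A := hf
  have : Nontrivial A := hn.coe_sort
  have hG : G.Connected := by
    obtain ⟨r, hr⟩ := hn.nonempty
    have : Nonempty A := ⟨⟨r, hr⟩⟩
    refine ⟨fun a b => ?_⟩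
    rw [SimpleGraph.reachable_iff_reflTransGen]
    obtain ⟨a, ha⟩ := a
    obtain ⟨b, hb⟩ := b
    have := hA a ha b hb
    have key : ∀ y, Jn A a y → ∀ hy : y ∈ A, Relation.ReflTransGen G.Adj ⟨a, ha⟩ ⟨y, hy⟩ := by
      intro y h
      induction h with
      | refl => intro _; exact Relation.ReflTransGen.refl
      | tail hab hbc ih => intro hy; exact (ih hbc.2.1).tail hbc.1
    exact key b this hb
  obtain ⟨v, hv⟩ := hG.exists_connected_induce_compl_singleton_of_finite_nontrivial
  refine ⟨v, v.2, fun x hx y hy => ?_⟩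
  have hx' : (⟨x, hx.1⟩ : A) ∈ ({v}ᶜ : Set A) := by
    intro h; apply hx.2; rw [Set.mem_singleton_iff] at *; rw [← h]
  have hy' : (⟨y, hy.1⟩ : A) ∈ ({v}ᶜ : Set A) := by
    intro h; apply hy.2; rw [Set.mem_singleton_iff] at *; rw [← h]
  have := hv.preconnected ⟨_, hx'⟩ ⟨_, hy'⟩
  rw [SimpleGraph.reachable_iff_reflTransGen] at this
  have h2 := Relation.ReflTransGen.lift (p := fun a b => Hadj a b ∧ a ∈ A \ {(v : ℤ × ℤ)} ∧ b ∈ A \ {(v : ℤ × ℤ)})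
    (fun z : ({v}ᶜ : Set A) => ((z : A) : ℤ × ℤ)) (by
      intro a b hab
      refine ⟨hab, ⟨a.1.2, ?_⟩, ⟨b.1.2, ?_⟩⟩
      · intro h; exact a.2 (Subtype.ext h)
      · intro h; exact b.2 (Subtype.ext h)) _ _ this
  exact h2


lemma Conn.tch_noncut {A : Set (ℤ × ℤ)} (hA : Conn A) {v : ℤ × ℤ} (hv : v ∈ A)
    (hn : (A \ {v}).Nonempty) : Tch {v} (A \ {v}) := by
  obtain ⟨w, hw⟩ := hn
  obtain ⟨P, hPA, hvP, _, hd, p, hp, q, hq, hpq⟩ := hA.first_hit (T := A \ {v}) hv (by simp)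
    ⟨w, hw.1, hw⟩
  refine ⟨p, ?_, q, hq.2, hpq⟩
  by_contra hne
  exact Set.disjoint_left.mp hd hp ⟨hPA hp, hne⟩

/-- Tripod lemma. -/
lemma tripod (m : ℕ) : ∀ (A : Set (ℤ × ℤ)) (B : Fin 3 → Set (ℤ × ℤ)), A.Finite → A.ncard = m →
    A.Nonempty → Conn A →
    (∀ j, Conn (B j)) → (∀ j, Disjoint A (B j)) → (∀ i j, i ≠ j → Disjoint (B i) (B j)) →
    (∀ j, Tch A (B j)) →
    ∃ a ∈ A, ∃ Y : Fin 3 → Set (ℤ × ℤ), (∀ j, B j ⊆ Y j) ∧ (∀ j, Y j ⊆ B j ∪ A) ∧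
      (∀ j, a ∉ Y j) ∧ (∀ j, Conn (Y j)) ∧ (∀ i j, i ≠ j → Disjoint (Y i) (Y j)) ∧
      (∀ j, Tch {a} (Y j)) := by
  induction m with
  | zero =>
    intro A B hf hc hne
    rw [Set.ncard_eq_zero hf] at hc
    subst hc; simp at hne
  | succ m ih =>
    intro A B hf hc hne hA hB hAB hBB hT
    by_cases hn : A.Nontrivial
    swap
    · rw [Set.not_nontrivial_iff] at hn
      obtain ⟨a, ha⟩ := hne
      have hAa : A = {a} := hn.eq_singleton_of_mem ha
      refine ⟨a, ha, B, fun j => le_rfl, fun j => Set.subset_union_left, fun j h => ?_, hB, hBB, ?_⟩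
      · exact Set.disjoint_left.mp (hAB j) ha h
      · rw [← hAa]; exact hT
    obtain ⟨v, hv, hcv⟩ := hA.exists_noncut hf hn
    have hA'f : (A \ {v}).Finite := hf.subset Set.sdiff_subset
    have hA'n : (A \ {v}).Nonempty := by
      obtain ⟨w, hw, hwv⟩ := hn.exists_ne v
      exact ⟨w, hw, hwv⟩
    have hA'c : (A \ {v}).ncard = m := by
      rw [Set.ncard_sdiff_singleton_of_mem hv]; omega
    have hsub : A \ {v} ⊆ A := Set.sdiff_subset
    have hvA' : Tch {v} (A \ {v}) := hA.tch_noncut hv hA'n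
    have hvB : ∀ j, v ∉ B j := fun j h => Set.disjoint_left.mp (hAB j) hv h
    have hor : ∀ j, Tch (A \ {v}) (B j) ∨ Tch {v} (B j) := by
      intro j
      obtain ⟨x, hx, y, hy, hxy⟩ := hT j
      by_cases hxv : x = v
      · right; exact ⟨x, hxv, y, hy, hxy⟩
      · left; exact ⟨x, ⟨hx, hxv⟩, y, hy, hxy⟩
    by_cases h1 : ∀ j, Tch (A \ {v}) (B j)
    · obtain ⟨a, ha, Y, hY1, hY2, hY3⟩ := ih (A \ {v}) B hA'f hA'c hA'n hcv hB
        (fun j => (hAB j).mono_left hsub) hBB h1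
      exact ⟨a, ha.1, Y, hY1, fun j => (hY2 j).trans (Set.union_subset_union_right _ hsub), hY3⟩
    push Not at h1
    obtain ⟨j, hj⟩ := h1
    have hvj := (hor j).resolve_left hj
    by_cases h2 : ∀ i, i ≠ j → Tch (A \ {v}) (B i)
    · obtain ⟨a, ha, Y, hY1, hY2, hY3⟩ := ih (A \ {v}) (fun i => if i = j then B i ∪ {v} else B i)
        hA'f hA'c hA'n hcv (by
          intro i; (try dsimp only)
          split_ifs with h
          · subst h; exact (hB i).union_tch (Conn.singleton v) hvj.symm
          · exact hB i) (by
          intro i; (try dsimp only)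
          split_ifs with h
          · rw [Set.disjoint_union_right]
            exact ⟨(hAB i).mono_left hsub, by simp⟩
          · exact (hAB i).mono_left hsub) (by
          intro i k hik; (try dsimp only)
          split_ifs with h h' h'
          · exact absurd (h.trans h'.symm) hik
          · rw [Set.disjoint_union_left]
            exact ⟨hBB i k hik, by simpa using hvB k⟩
          · rw [Set.disjoint_union_right]
            exact ⟨hBB i k hik, by simpa using hvB i⟩
          · exact hBB i k hik) (by
          intro i; (try dsimp only)
          split_ifs with h
          · exact hvA'.symm.mono le_rfl Set.subset_union_right
          · exact h2 i h)
      refine ⟨a, ha.1, Y, fun i => ?_, fun i => ?_, hY3⟩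
      · refine Set.Subset.trans ?_ (hY1 i)
        (try dsimp only); split_ifs
        · exact Set.subset_union_left
        · exact le_rfl
      · refine (hY2 i).trans ?_
        (try dsimp only); split_ifs
        · rintro x ((hx | hx) | hx)
          · exact Or.inl hx
          · rw [Set.mem_singleton_iff] at hx; subst hx; exact Or.inr hv
          · exact Or.inr hx.1
        · exact Set.union_subset_union_right _ hsub
    push Not at h2
    obtain ⟨i, hij, hi⟩ := h2
    have hvi := (hor i).resolve_left hi
    obtain ⟨l, hl⟩ : ∃ l : Fin 3, ∀ k, k = i ∨ k = j ∨ k = l := by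
      have h0 : ∀ i j : Fin 3, i ≠ j → ∃ l : Fin 3, ∀ k, k = i ∨ k = j ∨ k = l := by decide
      exact h0 i j hij
    by_cases h3 : Tch {v} (B l)
    · refine ⟨v, hv, B, fun j => le_rfl, fun j => Set.subset_union_left, hvB, hB, hBB, ?_⟩
      intro k
      rcases hl k with rfl | rfl | rfl <;> assumption
    have hlA := (hor l).resolve_right h3
    refine ⟨v, hv, fun k => if k = l then B k ∪ (A \ {v}) else B k, fun k => ?_, fun k => ?_,
      fun k => ?_, fun k => ?_, fun k k' hkk => ?_, fun k => ?_⟩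
    · (try dsimp only); split_ifs
      · exact Set.subset_union_left
      · exact le_rfl
    · (try dsimp only); split_ifs
      · exact Set.union_subset_union_right _ hsub
      · exact Set.subset_union_left
    · (try dsimp only); split_ifs
      · rintro (h | h)
        · exact hvB _ h
        · exact h.2 rfl
      · exact hvB k
    · (try dsimp only); split_ifs with h
      · subst h; exact (hB k).union_tch hcv hlA.symm
      · exact hB k
    · (try dsimp only)
      split_ifs with h h' h'
      · exact absurd (h.trans h'.symm) hkk
      · rw [Set.disjoint_union_left]
        exact ⟨hBB k k' hkk, (hAB k').mono_left hsub⟩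
      · rw [Set.disjoint_union_right]
        exact ⟨hBB k k' hkk, ((hAB k).mono_left hsub).symm⟩
      · exact hBB k k' hkk
    · (try dsimp only); split_ifs with h
      · exact hvA'.mono le_rfl Set.subset_union_right
      · rcases hl k with rfl | rfl | rfl
        · assumption
        · assumption
        · exact absurd rfl h

end SG


namespace SG

/-- Signed crossing counts of a walk from `u` to `v` inside `S`. -/
structure Chain (S : Set (ℤ × ℤ)) (u v : ℤ × ℤ) (F zh zv : ℤ → ℤ → ℤ) : Prop where
  hF : ∀ x y, F x (y - 1) = F x y + zh x y
  vF : ∀ x y, F (x - 1) y + zv x y + (if u.1 = x ∧ y < u.2 then 1 else 0) =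
    F x y + (if v.1 = x ∧ y < v.2 then 1 else 0)
  hz : ∀ x y, zh x y ≠ 0 → (x, y) ∈ S ∧ (x + 1, y) ∈ S
  vz : ∀ x y, zv x y ≠ 0 → (x, y) ∈ S ∧ (x, y + 1) ∈ S

lemma Chain.prepend {S : Set (ℤ × ℤ)} {u v : ℤ × ℤ} {F zh zv : ℤ → ℤ → ℤ}
    (h : Chain S u v F zh zv) (hu : u ∈ S) {w : ℤ × ℤ} (hw : Hadj w u) :
    ∃ F' zh' zv', Chain (insert w S) w v F' zh' zv' ∧
      zh' w.1 w.2 = zh w.1 w.2 + (if u.1 = w.1 + 1 then 1 else 0) ∧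
      zv' w.1 w.2 = zv w.1 w.2 + (if u.2 = w.2 + 1 then 1 else 0) := by
  obtain ⟨u1, u2⟩ := u
  obtain ⟨w1, w2⟩ := w
  obtain ⟨h1, h2, h3, h4⟩ := h
  have hS : ∀ p, p ∈ S → p ∈ insert (w1, w2) S := fun p hp => Set.mem_insert_of_mem _ hp
  have hwS : (w1, w2) ∈ insert (w1, w2) S := Set.mem_insert _ _
  unfold Hadj at hw
  dsimp only at *
  rcases hw with ⟨e, e' | e'⟩ | ⟨e, e' | e'⟩
  · refine ⟨F, zh, fun x y => zv x y - (if x = u1 ∧ y = u2 then 1 else 0), ⟨h1, ?_, ?_, ?_⟩, ?_, ?_⟩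
    · intro x y; have := h2 x y; split_ifs at * <;> omega
    · intro x y hxy; exact ⟨hS _ (h3 x y hxy).1, hS _ (h3 x y hxy).2⟩
    · intro x y hxy
      by_cases hx : x = u1 ∧ y = u2
      · obtain ⟨rfl, rfl⟩ := hx
        subst e e'
        exact ⟨hS _ hu, hwS⟩
      · simp only [hx, if_false, sub_zero] at hxy
        exact ⟨hS _ (h4 x y hxy).1, hS _ (h4 x y hxy).2⟩
    · split_ifs <;> omega
    · dsimp only; split_ifs <;> omega
  · refine ⟨F, zh, fun x y => zv x y + (if x = w1 ∧ y = w2 then 1 else 0), ⟨h1, ?_, ?_, ?_⟩, ?_, ?_⟩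
    · intro x y; have := h2 x y; split_ifs at * <;> omega
    · intro x y hxy; exact ⟨hS _ (h3 x y hxy).1, hS _ (h3 x y hxy).2⟩
    · intro x y hxy
      by_cases hx : x = w1 ∧ y = w2
      · obtain ⟨rfl, rfl⟩ := hx
        subst e e'
        exact ⟨hwS, hS _ hu⟩
      · simp only [hx, if_false, add_zero] at hxy
        exact ⟨hS _ (h4 x y hxy).1, hS _ (h4 x y hxy).2⟩
    · split_ifs <;> omega
    · dsimp only; split_ifs <;> omega
  · refine ⟨fun x y => F x y - (if x = u1 ∧ y < u2 then 1 else 0),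
      fun x y => zh x y - (if x = u1 ∧ y = u2 then 1 else 0), zv, ⟨?_, ?_, ?_, ?_⟩, ?_, ?_⟩
    · intro x y; have := h1 x y; split_ifs at * <;> omega
    · intro x y; have := h2 x y; split_ifs at * <;> omega
    · intro x y hxy
      by_cases hx : x = u1 ∧ y = u2
      · obtain ⟨rfl, rfl⟩ := hx
        subst e e'
        exact ⟨hS _ hu, hwS⟩
      · simp only [hx, if_false, sub_zero] at hxy
        exact ⟨hS _ (h3 x y hxy).1, hS _ (h3 x y hxy).2⟩
    · intro x y hxy; exact ⟨hS _ (h4 x y hxy).1, hS _ (h4 x y hxy).2⟩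
    · dsimp only; split_ifs <;> omega
    · split_ifs <;> omega
  · refine ⟨fun x y => F x y + (if x = w1 ∧ y < w2 then 1 else 0),
      fun x y => zh x y + (if x = w1 ∧ y = w2 then 1 else 0), zv, ⟨?_, ?_, ?_, ?_⟩, ?_, ?_⟩
    · intro x y; have := h1 x y; split_ifs at * <;> omega
    · intro x y; have := h2 x y; split_ifs at * <;> omega
    · intro x y hxy
      by_cases hx : x = w1 ∧ y = w2
      · obtain ⟨rfl, rfl⟩ := hx
        subst e e'
        exact ⟨hwS, hS _ hu⟩
      · simp only [hx, if_false, add_zero] at hxy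
        exact ⟨hS _ (h3 x y hxy).1, hS _ (h3 x y hxy).2⟩
    · intro x y hxy; exact ⟨hS _ (h4 x y hxy).1, hS _ (h4 x y hxy).2⟩
    · dsimp only; split_ifs <;> omega
    · split_ifs <;> omega

lemma Jn.exists_chain {S : Set (ℤ × ℤ)} {u v : ℤ × ℤ} (h : Jn S u v) :
    ∃ F zh zv, Chain S u v F zh zv := by
  induction h using Relation.ReflTransGen.head_induction_on with
  | refl => exact ⟨fun _ _ => 0, fun _ _ => 0, fun _ _ => 0, by simp, by simp, by simp, by simp⟩
  | head hab _ ih =>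
    obtain ⟨F, zh, zv, ih⟩ := ih
    obtain ⟨F', zh', zv', h', _⟩ := ih.prepend hab.2.2 hab.1
    rw [Set.insert_eq_of_mem hab.2.1] at h'
    exact ⟨F', zh', zv', h'⟩

/-- The difference of two chains with the same ends is locally constant off the supports. -/
lemma Chain.const {S S' T : Set (ℤ × ℤ)} {u v : ℤ × ℤ} {F zh zv F' zh' zv' : ℤ → ℤ → ℤ}
    (h : Chain S u v F zh zv) (h' : Chain S' u v F' zh' zv') (hT : Disjoint T S)
    (hT' : Disjoint T S') {x y : ℤ × ℤ} (hj : Jn T x y) :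
    F x.1 x.2 - F' x.1 x.2 = F y.1 y.2 - F' y.1 y.2 := by
  induction hj with
  | refl => rfl
  | @tail b c _ hbc ih =>
    rw [ih]
    obtain ⟨hbc, hb, hc⟩ := hbc
    have hb1 := Set.disjoint_left.mp hT hb
    have hb2 := Set.disjoint_left.mp hT' hb
    have hc1 := Set.disjoint_left.mp hT hc
    have hc2 := Set.disjoint_left.mp hT' hc
    have z1 : zh b.1 b.2 = 0 := by by_contra h0; exact hb1 (h.hz _ _ h0).1
    have z2 : zh' b.1 b.2 = 0 := by by_contra h0; exact hb2 (h'.hz _ _ h0).1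
    have z3 : zh c.1 c.2 = 0 := by by_contra h0; exact hc1 (h.hz _ _ h0).1
    have z4 : zh' c.1 c.2 = 0 := by by_contra h0; exact hc2 (h'.hz _ _ h0).1
    have z5 : zv b.1 b.2 = 0 := by by_contra h0; exact hb1 (h.vz _ _ h0).1
    have z6 : zv' b.1 b.2 = 0 := by by_contra h0; exact hb2 (h'.vz _ _ h0).1
    have z7 : zv c.1 c.2 = 0 := by by_contra h0; exact hc1 (h.vz _ _ h0).1
    have z8 : zv' c.1 c.2 = 0 := by by_contra h0; exact hc2 (h'.vz _ _ h0).1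
    have a1 := h.hF b.1 b.2
    have a2 := h'.hF b.1 b.2
    have a3 := h.hF c.1 c.2
    have a4 := h'.hF c.1 c.2
    have a5 := h.vF b.1 b.2
    have a6 := h'.vF b.1 b.2
    have a7 := h.vF c.1 c.2
    have a8 := h'.vF c.1 c.2
    obtain ⟨b1, b2⟩ := b
    obtain ⟨c1, c2⟩ := c
    clear ih hT hT'
    rcases hbc with ⟨e, e' | e'⟩ | ⟨e, e' | e'⟩ <;> dsimp only at e e' a1 a2 a3 a4 a5 a6 a7 a8 z1 z2 z3 z4 z5 z6 z7 z8 ⊢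
      <;> subst e e' <;> simp only [add_sub_cancel_right] at a1 a2 a3 a4 a5 a6 a7 a8 <;> omega

/-- Core of the nonplanarity of `K33` in the grid. -/
lemma noTheta {a b c : ℤ × ℤ} (n : Fin 3 → ℤ × ℤ) (hn : ∀ j, Hadj a (n j))
    (hinj : ∀ i j, i ≠ j → n i ≠ n j)
    (P : Fin 3 → Set (ℤ × ℤ)) (hP : ∀ j, n j ∈ P j) (hPb : ∀ j, Jn (P j) (n j) b)
    (ha : ∀ j, a ∉ P j)
    (S : Fin 3 → Set (ℤ × ℤ)) (hSn : ∀ j, n j ∈ S j) (hSc : ∀ j, Jn (S j) (n j) c)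
    (haS : ∀ j, a ∉ S j)
    (hd : ∀ i j, i ≠ j → Disjoint (S i) (P j)) : False := by
  have key : ∀ j, ∃ F zh zv, Chain (insert a (P j)) a b F zh zv ∧
      zh a.1 a.2 = (if (n j).1 = a.1 + 1 then 1 else 0) ∧
      zv a.1 a.2 = (if (n j).2 = a.2 + 1 then 1 else 0) := by
    intro j
    obtain ⟨F, zh, zv, h⟩ := (hPb j).exists_chain
    obtain ⟨F', zh', zv', h', e1, e2⟩ := h.prepend (hP j) (hn j)
    refine ⟨F', zh', zv', h', ?_, ?_⟩
    · rw [e1]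
      have : zh a.1 a.2 = 0 := by by_contra h0; exact ha j (h.hz _ _ h0).1
      rw [this, zero_add]
    · rw [e2]
      have : zv a.1 a.2 = 0 := by by_contra h0; exact ha j (h.vz _ _ h0).1
      rw [this, zero_add]
  choose F zh zv hC hh hv using key
  have hd' : ∀ i j, i ≠ j → Disjoint (S i) (insert a (P j)) := by
    intro i j hij
    rw [Set.disjoint_insert_right]
    exact ⟨haS i, hd i j hij⟩
  have c0 := (hC 1).const (hC 2) (hd' 0 1 (by decide)) (hd' 0 2 (by decide)) (hSc 0)
  have c1 := (hC 2).const (hC 0) (hd' 1 2 (by decide)) (hd' 1 0 (by decide)) (hSc 1)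
  have c2 := (hC 0).const (hC 1) (hd' 2 0 (by decide)) (hd' 2 1 (by decide)) (hSc 2)
  have loc : ∀ i j k, i ≠ j → i ≠ k →
      F j (n i).1 (n i).2 - F k (n i).1 (n i).2 = F j a.1 a.2 - F k a.1 a.2 +
        (if (n i).1 = a.1 - 1 then zv k a.1 a.2 - zv j a.1 a.2 else 0) +
        (if (n i).2 = a.2 - 1 then zh j a.1 a.2 - zh k a.1 a.2 else 0) := by
    intro i j k hij hik
    have m1 : n i ∉ insert a (P j) := Set.disjoint_left.mp (hd' i j hij) (hSn i)
    have m2 : n i ∉ insert a (P k) := Set.disjoint_left.mp (hd' i k hik) (hSn i)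
    have z1 : zh j (n i).1 (n i).2 = 0 := by by_contra h0; exact m1 ((hC j).hz _ _ h0).1
    have z2 : zh k (n i).1 (n i).2 = 0 := by by_contra h0; exact m2 ((hC k).hz _ _ h0).1
    have z3 : zv j (n i).1 (n i).2 = 0 := by by_contra h0; exact m1 ((hC j).vz _ _ h0).1
    have z4 : zv k (n i).1 (n i).2 = 0 := by by_contra h0; exact m2 ((hC k).vz _ _ h0).1
    have a1 := (hC j).hF (n i).1 (n i).2
    have a2 := (hC k).hF (n i).1 (n i).2
    have a3 := (hC j).vF (n i).1 (n i).2
    have a4 := (hC k).vF (n i).1 (n i).2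
    have a5 := (hC j).hF a.1 a.2
    have a6 := (hC k).hF a.1 a.2
    have a7 := (hC j).vF a.1 a.2
    have a8 := (hC k).vF a.1 a.2
    have hni := hn i
    generalize n i = w at hni z1 z2 z3 z4 a1 a2 a3 a4 ⊢
    obtain ⟨w1, w2⟩ := w
    unfold Hadj at hni
    dsimp only at hni z1 z2 z3 z4 a1 a2 a3 a4 ⊢
    rcases hni with ⟨e, e' | e'⟩ | ⟨e, e' | e'⟩
    · obtain rfl : w2 = a.2 - 1 := by omega
      subst e
      rw [if_neg (by omega), if_pos rfl]
      omega
    · subst e e'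
      rw [add_sub_cancel_right] at a1 a2
      rw [if_neg (by omega), if_neg (by omega)]
      omega
    · obtain rfl : w1 = a.1 - 1 := by omega
      subst e
      rw [if_pos rfl, if_neg (by omega)]
      omega
    · subst e e'
      rw [add_sub_cancel_right] at a3 a4
      rw [if_neg (by omega), if_neg (by omega)]
      omega
  have l0 := loc 0 1 2 (by decide) (by decide)
  have l1 := loc 1 2 0 (by decide) (by decide)
  have l2 := loc 2 0 1 (by decide) (by decide)
  simp only [hh, hv] at l0 l1 l2
  have i1 : (n 0).1 ≠ (n 1).1 ∨ (n 0).2 ≠ (n 1).2 := by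
    by_contra h; push Not at h; exact hinj 0 1 (by decide) (Prod.ext h.1 h.2)
  have i2 : (n 0).1 ≠ (n 2).1 ∨ (n 0).2 ≠ (n 2).2 := by
    by_contra h; push Not at h; exact hinj 0 2 (by decide) (Prod.ext h.1 h.2)
  have i3 : (n 1).1 ≠ (n 2).1 ∨ (n 1).2 ≠ (n 2).2 := by
    by_contra h; push Not at h; exact hinj 1 2 (by decide) (Prod.ext h.1 h.2)
  have hn0 := hn 0
  have hn1 := hn 1
  have hn2 := hn 2
  unfold Hadj at hn0 hn1 hn2
  have tot : (F 1 (n 0).1 (n 0).2 - F 2 (n 0).1 (n 0).2) + (F 2 (n 1).1 (n 1).2 - F 0 (n 1).1 (n 1).2)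
    + (F 0 (n 2).1 (n 2).2 - F 1 (n 2).1 (n 2).2) = 0 := by omega
  rw [l0, l1, l2] at tot
  clear l0 l1 l2 c0 c1 c2 loc hC hh hv hd'
  generalize (n 0).1 = x0 at *
  generalize (n 0).2 = y0 at *
  generalize (n 1).1 = x1 at *
  generalize (n 1).2 = y1 at *
  generalize (n 2).1 = x2 at *
  generalize (n 2).2 = y2 at *
  rcases hn0 with ⟨e, e' | e'⟩ | ⟨e, e' | e'⟩ <;>
  rcases hn1 with ⟨f, f' | f'⟩ | ⟨f, f' | f'⟩ <;>
  first
  | omega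
  | (rcases hn2 with ⟨g, g' | g'⟩ | ⟨g, g' | g'⟩ <;> first | omega | (split_ifs at tot <;> omega))

lemma noK33 (A1 A2 A3 : Set (ℤ × ℤ)) (B : Fin 3 → Set (ℤ × ℤ)) (hf : A2.Finite)
    (h1 : Conn A1) (h2 : Conn A2) (h3 : Conn A3) (hB : ∀ j, Conn (B j))
    (d12 : Disjoint A1 A2) (d13 : Disjoint A1 A3) (d23 : Disjoint A2 A3)
    (hBB : ∀ i j, i ≠ j → Disjoint (B i) (B j))
    (e1 : ∀ j, Disjoint A1 (B j)) (e2 : ∀ j, Disjoint A2 (B j)) (e3 : ∀ j, Disjoint A3 (B j))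
    (t1 : ∀ j, Tch A1 (B j)) (t2 : ∀ j, Tch A2 (B j)) (t3 : ∀ j, Tch A3 (B j)) : False := by
  obtain ⟨a, haA, Y, hY1, hY2, hY3, hY4, hY5, hY6⟩ :=
    tripod A2.ncard A2 B hf rfl (t2 0).ne_left h2 hB e2 hBB t2
  obtain ⟨b, hb⟩ := (t3 0).ne_left
  obtain ⟨c, hc⟩ := (t1 0).ne_left
  have hn : ∀ j, ∃ n, Hadj a n ∧ n ∈ Y j := by
    intro j
    obtain ⟨x, hx, y, hy, hxy⟩ := hY6 j
    rw [Set.mem_singleton_iff] at hx; subst hx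
    exact ⟨y, hxy, hy⟩
  choose n hn hnY using hn
  have Y1 : ∀ j, Disjoint A1 (Y j) := fun j =>
    (Set.disjoint_union_right.mpr ⟨e1 j, d12⟩).mono_right (hY2 j)
  have Y3 : ∀ j, Disjoint A3 (Y j) := fun j =>
    (Set.disjoint_union_right.mpr ⟨e3 j, d23.symm⟩).mono_right (hY2 j)
  refine noTheta (a := a) (b := b) (c := c) n hn ?_ (fun j => Y j ∪ A3) (fun j => Or.inl (hnY j)) ?_ ?_
    (fun j => Y j ∪ A1) (fun j => Or.inl (hnY j)) ?_ ?_ ?_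
  · intro i j hij h
    exact Set.disjoint_left.mp (hY5 i j hij) (hnY i) (h ▸ hnY j)
  · intro j
    exact ((hY4 j).union_tch h3 ((t3 j).symm.mono (hY1 j) le_rfl)) _ (Or.inl (hnY j)) _ (Or.inr hb)
  · rintro j (h | h)
    · exact hY3 j h
    · exact Set.disjoint_left.mp d23 haA h
  · intro j
    exact ((hY4 j).union_tch h1 ((t1 j).symm.mono (hY1 j) le_rfl)) _ (Or.inl (hnY j)) _ (Or.inr hc)
  · rintro j (h | h)
    · exact hY3 j h
    · exact Set.disjoint_left.mp d12 h haA
  · intro i j hij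
    simp only [Set.disjoint_union_left, Set.disjoint_union_right]
    exact ⟨⟨hY5 i j hij, Y1 j⟩, (Y3 i).symm, d13⟩

end SG


namespace SG

/-- Lazy grid paths. -/
def IsPath (f : ℕ → ℤ × ℤ) : Prop := ∀ i, f i = f (i + 1) ∨ Hadj (f i) (f (i + 1))

/-- Prefix before the first visit of `S`. -/
def pre (f : ℕ → ℤ × ℤ) (S : Set (ℤ × ℤ)) : Set (ℤ × ℤ) := {w | ∃ i, f i = w ∧ ∀ k ≤ i, f k ∉ S}

/-- `f` visits `S` strictly before visiting `S'`. -/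
def bef (f : ℕ → ℤ × ℤ) (S S' : Set (ℤ × ℤ)) : Prop := (pre f S' ∩ S).Nonempty

/-- Chord of `f` from the last visit of `α` to the first visit of `β`. -/
def ch (f : ℕ → ℤ × ℤ) (α β : Set (ℤ × ℤ)) : Set (ℤ × ℤ) :=
  {w | ∃ s i t, s < i ∧ i < t ∧ f i = w ∧ f s ∈ α ∧ f t ∈ β ∧ (∀ k < t, f k ∉ β) ∧
    ∀ k, s < k → k < t → f k ∉ α}

lemma Jn_seg {f : ℕ → ℤ × ℤ} (hf : IsPath f) {S : Set (ℤ × ℤ)} {p q : ℕ} (hpq : p ≤ q)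
    (h : ∀ k, p ≤ k → k ≤ q → f k ∈ S) : Jn S (f p) (f q) := by
  induction q, hpq using Nat.le_induction with
  | base => exact Jn.refl
  | succ q hq ih =>
    refine (ih fun k h1 h2 => h k h1 (by omega)).trans ?_
    rcases hf q with h' | h'
    · rw [← h']; exact Jn.refl
    · exact Jn.step h' (h q hq (by omega)) (h (q + 1) (by omega) le_rfl)

lemma IsPath.conn_range {f : ℕ → ℤ × ℤ} (hf : IsPath f) : Conn (Set.range f) := by
  refine Conn.of_center (f 0) ?_
  rintro _ ⟨i, rfl⟩
  exact Jn_seg hf (Nat.zero_le i) fun k _ _ => ⟨k, rfl⟩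

lemma pre_subset (f : ℕ → ℤ × ℤ) (S : Set (ℤ × ℤ)) : pre f S ⊆ Set.range f := by
  rintro w ⟨i, rfl, _⟩; exact ⟨i, rfl⟩

lemma pre_disjoint (f : ℕ → ℤ × ℤ) (S : Set (ℤ × ℤ)) : Disjoint (pre f S) S := by
  rw [Set.disjoint_left]
  rintro w ⟨i, rfl, h⟩; exact h i le_rfl

lemma pre_zero {f : ℕ → ℤ × ℤ} {S : Set (ℤ × ℤ)} (h : (pre f S).Nonempty) : f 0 ∈ pre f S := by
  obtain ⟨w, i, rfl, h⟩ := h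
  exact ⟨0, rfl, fun k hk => h k (by omega)⟩

lemma pre_conn {f : ℕ → ℤ × ℤ} (hf : IsPath f) (S : Set (ℤ × ℤ)) : Conn (pre f S) := by
  refine Conn.of_center (f 0) ?_
  rintro _ ⟨i, rfl, h⟩
  exact Jn_seg hf (Nat.zero_le i) fun k _ hk => ⟨k, rfl, fun l hl => h l (by omega)⟩

lemma exists_first {f : ℕ → ℤ × ℤ} {S : Set (ℤ × ℤ)} (h : ∃ i, f i ∈ S) :
    ∃ i, f i ∈ S ∧ ∀ k < i, f k ∉ S := by
  classical
  exact ⟨Nat.find h, Nat.find_spec h, fun k hk => Nat.find_min h hk⟩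

lemma pre_eq_of_first {f : ℕ → ℤ × ℤ} {S : Set (ℤ × ℤ)} {t : ℕ} (ht : f t ∈ S)
    (h : ∀ k < t, f k ∉ S) : pre f S = {w | ∃ i < t, f i = w} := by
  ext w
  constructor
  · rintro ⟨i, rfl, hi⟩
    refine ⟨i, ?_, rfl⟩
    by_contra hcon
    exact hi t (by omega) ht
  · rintro ⟨i, hi, rfl⟩
    exact ⟨i, rfl, fun k hk => h k (by omega)⟩

lemma exists_cut {f : ℕ → ℤ × ℤ} (hf : IsPath f) {S : Set (ℤ × ℤ)} (hne : (pre f S).Nonempty) :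
    ∃ c : ℕ → ℤ × ℤ, IsPath c ∧ c 0 = f 0 ∧ Set.range c = pre f S := by
  by_cases h : ∃ i, f i ∈ S
  · obtain ⟨t, ht, hmin⟩ := exists_first h
    have ht0 : 0 < t := by
      rcases Nat.eq_zero_or_pos t with rfl | h0
      · obtain ⟨i, hi, h2⟩ := pre_zero hne
        exact absurd ht (h2 0 (by omega))
      · exact h0
    refine ⟨fun i => f (min i (t - 1)), ?_, by simp, ?_⟩
    · intro i
      dsimp only
      by_cases hi : i < t - 1
      · rw [min_eq_left (by omega), min_eq_left (by omega)]; exact hf i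
      · rw [min_eq_right (by omega), min_eq_right (by omega)]; exact Or.inl rfl
    · rw [pre_eq_of_first ht hmin]
      ext w
      constructor
      · rintro ⟨i, rfl⟩
        exact ⟨min i (t - 1), by omega, rfl⟩
      · rintro ⟨i, hi, rfl⟩
        exact ⟨i, by dsimp only; rw [min_eq_left (by omega)]⟩
  · push Not at h
    refine ⟨f, hf, rfl, ?_⟩
    ext w
    constructor
    · rintro ⟨i, rfl⟩; exact ⟨i, rfl, fun k _ => h k⟩
    · rintro ⟨i, rfl, _⟩; exact ⟨i, rfl⟩

lemma exists_rev {f : ℕ → ℤ × ℤ} (hf : IsPath f) {S : Set (ℤ × ℤ)} (hne : (pre f S).Nonempty)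
    (h : ∃ i, f i ∈ S) :
    ∃ c : ℕ → ℤ × ℤ, IsPath c ∧ Tch S {c 0} ∧ Set.range c = pre f S := by
  obtain ⟨t, ht, hmin⟩ := exists_first h
  have ht0 : 0 < t := by
    rcases Nat.eq_zero_or_pos t with rfl | h0
    · obtain ⟨i, hi, h2⟩ := pre_zero hne
      exact absurd ht (h2 0 (by omega))
    · exact h0
  refine ⟨fun i => f (t - 1 - i), ?_, ?_, ?_⟩
  · intro i
    dsimp only
    by_cases hi : i < t - 1
    · have := hf (t - 1 - (i + 1))
      rw [show t - 1 - (i + 1) + 1 = t - 1 - i by omega] at this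
      rcases this with h | h
      · exact Or.inl h.symm
      · exact Or.inr h.symm
    · rw [show t - 1 - i = 0 by omega, show t - 1 - (i + 1) = 0 by omega]; exact Or.inl rfl
  · refine ⟨f t, ht, f (t - 1), rfl, ?_⟩
    have := hf (t - 1)
    rw [show t - 1 + 1 = t by omega] at this
    rcases this with h | h
    · exact absurd (h ▸ ht) (hmin (t - 1) (by omega))
    · exact h.symm
  · rw [pre_eq_of_first ht hmin]
    ext w
    constructor
    · rintro ⟨i, rfl⟩
      exact ⟨t - 1 - i, by omega, rfl⟩
    · rintro ⟨i, hi, rfl⟩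
      exact ⟨t - 1 - i, by dsimp only; congr 1; omega⟩

lemma ch_subset (f : ℕ → ℤ × ℤ) (α β : Set (ℤ × ℤ)) : ch f α β ⊆ Set.range f := by
  rintro w ⟨s, i, t, _, _, rfl, _⟩; exact ⟨i, rfl⟩

lemma ch_disjoint_left (f : ℕ → ℤ × ℤ) (α β : Set (ℤ × ℤ)) : Disjoint (ch f α β) α := by
  rw [Set.disjoint_left]
  rintro w ⟨s, i, t, h1, h2, rfl, _, _, _, h⟩; exact h i h1 h2

lemma ch_disjoint_right (f : ℕ → ℤ × ℤ) (α β : Set (ℤ × ℤ)) : Disjoint (ch f α β) β := by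
  rw [Set.disjoint_left]
  rintro w ⟨s, i, t, h1, h2, rfl, _, _, h, _⟩; exact h i h2

lemma ch_tch_left {f : ℕ → ℤ × ℤ} (hf : IsPath f) {α β : Set (ℤ × ℤ)} (hne : (ch f α β).Nonempty) :
    Tch (ch f α β) α := by
  obtain ⟨w, s, i, t, h1, h2, rfl, hs, ht, h3, h4⟩ := hne
  refine ⟨f (s + 1), ⟨s, s + 1, t, by omega, by omega, rfl, hs, ht, h3, h4⟩, f s, hs, ?_⟩
  rcases hf s with h | h
  · exact absurd (h ▸ hs) (h4 (s + 1) (by omega) (by omega))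
  · exact h.symm

lemma ch_tch_right {f : ℕ → ℤ × ℤ} (hf : IsPath f) {α β : Set (ℤ × ℤ)} (hne : (ch f α β).Nonempty) :
    Tch (ch f α β) β := by
  obtain ⟨w, s, i, t, h1, h2, rfl, hs, ht, h3, h4⟩ := hne
  refine ⟨f (t - 1), ⟨s, t - 1, t, by omega, by omega, rfl, hs, ht, h3, h4⟩, f t, ht, ?_⟩
  have := hf (t - 1)
  rw [show t - 1 + 1 = t by omega] at this
  rcases this with h | h
  · exact absurd (h ▸ ht) (h3 (t - 1) (by omega))
  · exact h

lemma ch_conn {f : ℕ → ℤ × ℤ} (hf : IsPath f) (α β : Set (ℤ × ℤ)) : Conn (ch f α β) := by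
  have key : ∀ s i t i' t', i ≤ i' → s < i → i < t → f s ∈ α → f t ∈ β → (∀ k < t, f k ∉ β) →
      (∀ k, s < k → k < t → f k ∉ α) → i' < t' → f t' ∈ β → (∀ k < t', f k ∉ β) →
      Jn (ch f α β) (f i) (f i') := by
    intro s i t i' t' hii h1 h2 hs ht h3 h4 h5 ht' h6
    have htt : t = t' := by
      rcases lt_trichotomy t t' with h | h | h
      · exact absurd ht (h6 t h)
      · exact h
      · exact absurd ht' (h3 t' h)
    exact Jn_seg hf hii fun k hk1 hk2 => ⟨s, k, t, by omega, by omega, rfl, hs, ht, h3, h4⟩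
  rintro x ⟨s, i, t, h1, h2, rfl, hs, ht, h3, h4⟩ y ⟨s', i', t', h1', h2', rfl, hs', ht', h3', h4'⟩
  rcases le_total i i' with h | h
  · exact key s i t i' t' h h1 h2 hs ht h3 h4 h2' ht' h3'
  · exact (key s' i' t' i t h h1' h2' hs' ht' h3' h4' h2 ht h3).symm

lemma exists_last {P : ℕ → Prop} {t : ℕ} (h : ∃ i < t, P i) :
    ∃ s < t, P s ∧ ∀ k, s < k → k < t → ¬ P k := by
  classical
  obtain ⟨i, hi, hP⟩ := h
  refine ⟨Nat.findGreatest P (t - 1), ?_, ?_, ?_⟩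
  · have := Nat.findGreatest_le (P := P) (t - 1); omega
  · exact Nat.findGreatest_spec (m := i) (by omega) hP
  · intro k h1 h2
    exact Nat.findGreatest_is_greatest h1 (by omega)

lemma two_sets {f : ℕ → ℤ × ℤ} {S1 S2 β : Set (ℤ × ℤ)} (hβ : ∃ i, f i ∈ β) (hd : Disjoint S1 S2)
    (h1 : (pre f β ∩ S1).Nonempty) (h2 : (pre f β ∩ S2).Nonempty) :
    (ch f S1 β ∩ S2).Nonempty ∨ (ch f S2 β ∩ S1).Nonempty := by
  obtain ⟨t, ht, hmin⟩ := exists_first hβ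
  rw [pre_eq_of_first ht hmin] at h1 h2
  obtain ⟨_, ⟨i, hi, rfl⟩, h1⟩ := h1
  obtain ⟨_, ⟨j, hj, rfl⟩, h2⟩ := h2
  obtain ⟨s1, hs1, hS1, hl1⟩ := exists_last (P := fun i => f i ∈ S1) ⟨i, hi, h1⟩
  obtain ⟨s2, hs2, hS2, hl2⟩ := exists_last (P := fun i => f i ∈ S2) ⟨j, hj, h2⟩
  rcases lt_trichotomy s1 s2 with h | h | h
  · left; exact ⟨f s2, ⟨s1, s2, t, h, hs2, rfl, hS1, ht, hmin, hl1⟩, hS2⟩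
  · subst h; exact absurd hS2 (Set.disjoint_left.mp hd hS1)
  · right; exact ⟨f s1, ⟨s2, s1, t, h, hs1, rfl, hS2, ht, hmin, hl2⟩, hS1⟩

lemma three_sets {f : ℕ → ℤ × ℤ} {P Q R : Set (ℤ × ℤ)} (hP : ∃ i, f i ∈ P) (hQ : ∃ i, f i ∈ Q)
    (hR : ∃ i, f i ∈ R) (dPQ : Disjoint P Q) (dPR : Disjoint P R) (dQR : Disjoint Q R) :
    (ch f P R ∩ Q).Nonempty ∨ (ch f Q R ∩ P).Nonempty ∨ (ch f P Q ∩ R).Nonempty ∨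
    (ch f R Q ∩ P).Nonempty ∨ (ch f Q P ∩ R).Nonempty ∨ (ch f R P ∩ Q).Nonempty := by
  obtain ⟨p, hp, hp'⟩ := exists_first hP
  obtain ⟨q, hq, hq'⟩ := exists_first hQ
  obtain ⟨r, hr, hr'⟩ := exists_first hR
  have npq : p ≠ q := by rintro rfl; exact Set.disjoint_left.mp dPQ hp hq
  have npr : p ≠ r := by rintro rfl; exact Set.disjoint_left.mp dPR hp hr
  have nqr : q ≠ r := by rintro rfl; exact Set.disjoint_left.mp dQR hq hr
  have mem : ∀ {X Y : Set (ℤ × ℤ)} {x y : ℕ}, x < y → f x ∈ X → f y ∈ Y → (∀ k < y, f k ∉ Y) →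
      (pre f Y ∩ X).Nonempty := by
    intro X Y x y hxy hx hy hk
    rw [pre_eq_of_first hy hk]
    exact ⟨f x, ⟨x, hxy, rfl⟩, hx⟩
  rcases (by omega : (p < r ∧ q < r) ∨ (p < q ∧ r < q) ∨ (q < p ∧ r < p)) with ⟨a, b⟩ | ⟨a, b⟩ | ⟨a, b⟩
  · have := two_sets hR dPQ (mem a hp hr hr') (mem b hq hr hr'); tauto
  · have := two_sets hQ dPR (mem a hp hq hq') (mem b hr hq hq'); tauto
  · have := two_sets hP dQR (mem a hq hp hp') (mem b hr hp hp'); tauto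

/-- Trichotomy of first visits. -/
lemma bef_tri {f : ℕ → ℤ × ℤ} {S S' : Set (ℤ × ℤ)} (h : ∃ i, f i ∈ S) :
    bef f S S' ∨ (bef f S' S ∧ ∃ i, f i ∈ S') ∨ (∃ i, f i ∈ S ∧ f i ∈ S' ∧ ∀ k < i, f k ∉ S) := by
  obtain ⟨i, hi, hmin⟩ := exists_first h
  by_cases h1 : ∃ k < i, f k ∈ S'
  · obtain ⟨k, hk, hkS⟩ := h1
    right; left
    refine ⟨?_, k, hkS⟩
    exact ⟨f k, ⟨k, rfl, fun l hl => hmin l (by omega)⟩, hkS⟩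
  · push Not at h1
    by_cases h2 : f i ∈ S'
    · right; right; exact ⟨i, hi, h2, hmin⟩
    · left
      refine ⟨f i, ⟨i, rfl, fun k hk => ?_⟩, hi⟩
      rcases Nat.lt_or_ge k i with h | h
      · exact h1 k h
      · obtain rfl : k = i := by omega
        exact h2

/-- Total preorder of first visits. -/
noncomputable def ft (f : ℕ → ℤ × ℤ) (S : Set (ℤ × ℤ)) : ℕ∞ := ⨅ i : {i : ℕ // f i ∈ S}, ((i : ℕ) : ℕ∞)

lemma bef_iff (f : ℕ → ℤ × ℤ) (S S' : Set (ℤ × ℤ)) : bef f S S' ↔ ft f S < ft f S' := by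
  constructor
  · rintro ⟨w, ⟨i, rfl, h⟩, hw⟩
    have h1 : ft f S ≤ i := iInf_le (fun i : {i : ℕ // f i ∈ S} => ((i : ℕ) : ℕ∞)) ⟨i, hw⟩
    have h2 : ((i + 1 : ℕ) : ℕ∞) ≤ ft f S' := by
      refine le_iInf ?_
      rintro ⟨k, hk⟩
      have : i < k := by by_contra hc; exact h k (by omega) hk
      exact_mod_cast this
    refine lt_of_le_of_lt h1 (lt_of_lt_of_le ?_ h2)
    exact_mod_cast Nat.lt_succ_self i
  · intro h
    obtain ⟨⟨i, hi⟩, h⟩ := iInf_lt_iff.mp h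
    refine ⟨f i, ⟨i, rfl, fun k hk hkS => ?_⟩, hi⟩
    have h1 : ft f S' ≤ k := iInf_le (fun i : {i : ℕ // f i ∈ S'} => ((i : ℕ) : ℕ∞)) ⟨k, hkS⟩
    have h2 : (i : ℕ∞) < k := lt_of_lt_of_le h h1
    have h3 : i < k := by exact_mod_cast h2
    omega

end SG


namespace SG

/-- Real indicator of a proposition. -/
noncomputable def ind (p : Prop) : ℝ := open Classical in if p then 1 else 0

/-- Average over a finite type. -/
noncomputable def av {V : Type} [Fintype V] (f : V → ℝ) : ℝ := (∑ v, f v) / (Fintype.card V : ℝ)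

lemma ind_true {p : Prop} (h : p) : ind p = 1 := by unfold ind; rw [if_pos h]
lemma ind_false {p : Prop} (h : ¬ p) : ind p = 0 := by unfold ind; rw [if_neg h]
lemma ind_nonneg (p : Prop) : 0 ≤ ind p := by unfold ind; split_ifs <;> norm_num
lemma ind_le_one (p : Prop) : ind p ≤ 1 := by unfold ind; split_ifs <;> norm_num
lemma ind_mono {p q : Prop} (h : p → q) : ind p ≤ ind q := by
  by_cases hp : p
  · rw [ind_true hp, ind_true (h hp)]
  · rw [ind_false hp]; exact ind_nonneg q
lemma ind_mul (p q : Prop) : ind p * ind q = ind (p ∧ q) := by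
  by_cases hp : p
  · by_cases hq : q
    · rw [ind_true hp, ind_true hq, ind_true ⟨hp, hq⟩, one_mul]
    · rw [ind_false hq, ind_false (p := p ∧ q) (fun h => hq h.2), mul_zero]
  · rw [ind_false hp, ind_false (p := p ∧ q) (fun h => hp h.1), zero_mul]
lemma ind_or {p q r : Prop} (h : p → q ∨ r) : ind p ≤ ind q + ind r := by
  by_cases hp : p
  · rcases h hp with h | h
    · rw [ind_true hp, ind_true h]; linarith [ind_nonneg r]
    · rw [ind_true hp, ind_true h]; linarith [ind_nonneg q]
  · rw [ind_false hp]; linarith [ind_nonneg q, ind_nonneg r]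

section
variable {V : Type} [Fintype V]

lemma av_mono {f g : V → ℝ} (h : ∀ v, f v ≤ g v) : av f ≤ av g := by
  unfold av
  exact div_le_div_of_nonneg_right (Finset.sum_le_sum fun v _ => h v) (Nat.cast_nonneg _)

lemma av_add (f g : V → ℝ) : av (fun v => f v + g v) = av f + av g := by
  unfold av; rw [Finset.sum_add_distrib, add_div]

lemma av_mul (c : ℝ) (f : V → ℝ) : av (fun v => c * f v) = c * av f := by
  unfold av; rw [← Finset.mul_sum, mul_div_assoc]

lemma av_mul' (c : ℝ) (f : V → ℝ) : av (fun v => f v * c) = av f * c := by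
  unfold av; rw [← Finset.sum_mul, div_mul_eq_mul_div]

lemma av_const [Nonempty V] (c : ℝ) : av (fun _ : V => c) = c := by
  unfold av
  rw [Finset.sum_const, Finset.card_univ, nsmul_eq_mul]
  have : (Fintype.card V : ℝ) ≠ 0 := by exact_mod_cast Fintype.card_ne_zero
  field_simp

lemma av_nonneg {f : V → ℝ} (h : ∀ v, 0 ≤ f v) : 0 ≤ av f := by
  unfold av; exact div_nonneg (Finset.sum_nonneg fun v _ => h v) (Nat.cast_nonneg _)

lemma av_comm (f : V → V → ℝ) : av (fun x => av fun y => f x y) = av (fun y => av fun x => f x y) := by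
  unfold av
  rw [← Finset.sum_div, ← Finset.sum_div, Finset.sum_comm]

lemma av_le_of_le [Nonempty V] {f : V → ℝ} {c : ℝ} (h : ∀ v, f v ≤ c) : av f ≤ c :=
  (av_mono h).trans (av_const c).le

lemma exists_le_av [Nonempty V] {f : V → ℝ} {c : ℝ} (h : c ≤ av f) : ∃ v, c ≤ f v := by
  by_contra hcon
  push Not at hcon
  have hc : (0 : ℝ) < Fintype.card V := by exact_mod_cast Fintype.card_pos
  have : av f < c := by
    unfold av
    rw [div_lt_iff₀ hc]
    calc ∑ v, f v < ∑ v : V, c := Finset.sum_lt_sum_of_nonempty Finset.univ_nonempty fun v _ => hcon v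
      _ = c * Fintype.card V := by rw [Finset.sum_const, Finset.card_univ, nsmul_eq_mul, mul_comm]
  linarith

lemma av_pow [Nonempty V] {f : V → ℝ} (hf : ∀ v, 0 ≤ f v) (k : ℕ) :
    (av f) ^ (k + 1) ≤ av (fun v => f v ^ (k + 1)) := by
  have hc : (0 : ℝ) < Fintype.card V := by exact_mod_cast Fintype.card_pos
  have h := pow_sum_div_card_le_sum_pow (s := (Finset.univ : Finset V)) (f := f) (n := k) (fun v _ => hf v)
  unfold av
  rw [div_pow, div_le_div_iff₀ (by positivity) hc]
  rw [div_le_iff₀ (by rw [Finset.card_univ]; positivity), Finset.card_univ] at h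
  calc (∑ v, f v) ^ (k + 1) * Fintype.card V ≤ ((∑ v, f v ^ (k + 1)) * (Fintype.card V : ℝ) ^ k) * Fintype.card V :=
        mul_le_mul_of_nonneg_right h hc.le
    _ = _ := by ring

lemma av_ind_card (P : V → Prop) [DecidablePred P] :
    av (fun v => ind (P v)) = ((Finset.univ.filter P).card : ℝ) / Fintype.card V := by
  unfold av
  congr 1
  rw [Finset.card_filter]
  push_cast
  refine Finset.sum_congr rfl fun v _ => ?_
  unfold ind
  by_cases h : P v <;> simp [h]

lemma guard_lemma [Nonempty V] (t : V → ℕ∞) (c : ℕ∞) (G : V → Prop) (hG : ∀ d, G d → c < t d) (η : ℝ)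
    (hη : 0 ≤ η) :
    η * (av (fun d => ind (G d)) - η) ≤
      av fun d => av fun e => ind (G d ∧ c < t e ∧ t e ≤ t d) := by
  classical
  set B : V → Prop := fun d => G d ∧ av (fun e => ind (c < t e ∧ t e ≤ t d)) < η with hB
  have hBη : av (fun d => ind (B d)) ≤ η := by
    by_cases hne : ∃ d, B d
    · obtain ⟨m, hm, hmax⟩ := Finset.exists_max_image (Finset.univ.filter B) t
        (by obtain ⟨d, hd⟩ := hne; exact ⟨d, by simp [hd]⟩)
      rw [Finset.mem_filter] at hm
      refine le_trans (av_mono fun d => ind_mono fun hd => ?_) hm.2.2.le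
      exact ⟨hG d hd.1, hmax d (by simp [hd])⟩
    · push Not at hne
      refine le_trans (av_le_of_le (c := 0) fun d => ?_) hη
      rw [ind_false (hne d)]
  have h1 : η * (av (fun d => ind (G d)) - av (fun d => ind (B d))) ≤
      av fun d => av fun e => ind (G d ∧ c < t e ∧ t e ≤ t d) := by
    have : av (fun d => η * ind (G d)) ≤
        av (fun d => η * ind (B d) + av fun e => ind (G d ∧ c < t e ∧ t e ≤ t d)) := by
      refine av_mono fun d => ?_
      have h0 : 0 ≤ av fun e => ind (G d ∧ c < t e ∧ t e ≤ t d) := av_nonneg fun e => ind_nonneg _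
      have h0' := mul_nonneg hη (ind_nonneg (B d))
      by_cases hg : G d
      · by_cases hb : B d
        · rw [ind_true hg, ind_true hb]; linarith
        · rw [ind_true hg]
          have : η ≤ av fun e => ind (c < t e ∧ t e ≤ t d) := by
            by_contra hc; exact hb ⟨hg, not_le.mp hc⟩
          have h2 : av (fun e => ind (c < t e ∧ t e ≤ t d)) ≤ av fun e => ind (G d ∧ c < t e ∧ t e ≤ t d) :=
            av_mono fun e => ind_mono fun h => ⟨hg, h⟩
          linarith
      · rw [ind_false hg]; linarith
    rw [av_add, av_mul, av_mul] at this
    linarith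
  nlinarith

/-- Ties along a path are rare. -/
lemma tie_bound [Nonempty V] {Im : V → Set (ℤ × ℤ)} {τ : ℝ} (hτ : 0 ≤ τ)
    (hdeg : ∀ w, av (fun v => ind (w ∈ Im v)) ≤ τ) {D : V → Set (ℤ × ℤ)} (hD : ∀ v, D v ⊆ Im v)
    (f : ℕ → ℤ × ℤ) (S : Set (ℤ × ℤ)) :
    av (fun u => ind (∃ i, f i ∈ S ∧ f i ∈ D u ∧ ∀ k < i, f k ∉ S)) ≤ τ := by
  by_cases h : ∃ i, f i ∈ S
  · obtain ⟨i, hi, hmin⟩ := exists_first h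
    refine (av_mono fun u => ind_mono ?_).trans (hdeg (f i))
    rintro ⟨j, hj, hju, hjm⟩
    have : j = i := by
      rcases lt_trichotomy j i with h | h | h
      · exact absurd hj (hmin j h)
      · exact h
      · exact absurd hi (hjm i h)
    subst this; exact hD u hju
  · refine (av_le_of_le (c := 0) fun u => ?_).trans hτ
    rw [ind_false]
    rintro ⟨i, hi, _⟩; exact h ⟨i, hi⟩

lemma good_triples [Nonempty V] {Im : V → Set (ℤ × ℤ)} {τ : ℝ} (hτ : 0 ≤ τ)
    (hdeg : ∀ w, av (fun v => ind (w ∈ Im v)) ≤ τ) {D : V → Set (ℤ × ℤ)} (hD : ∀ v, D v ⊆ Im v)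
    (a : V → ℕ → ℤ × ℤ) (N : V → V → Prop) (hN : ∀ p x, N p x → ∃ i, a p i ∈ D x) {ρ : ℝ} (hρ : 0 ≤ ρ)
    (h : ρ ≤ av fun p => av fun x => ind (N p x)) (hτρ : τ ≤ ρ ^ 2 / 3) :
    ρ ^ 2 / 3 ≤ av fun p => av fun x => av fun u => ind (N p x ∧ N p u ∧ bef (a p) (D x) (D u)) := by
  have h1 : ∀ p, (av fun x => ind (N p x)) ^ 2 ≤
      2 * (av fun x => av fun u => ind (N p x ∧ N p u ∧ bef (a p) (D x) (D u))) + τ := by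
    intro p
    have e : (av fun x => ind (N p x)) ^ 2 = av fun x => av fun u => ind (N p x ∧ N p u) := by
      rw [sq, ← av_mul']
      congr 1; funext x
      rw [← av_mul]
      congr 1; funext u
      rw [ind_mul]
    rw [e]
    have : (av fun x => av fun u => ind (N p x ∧ N p u)) ≤
      av fun x => ((av fun u => ind (N p x ∧ N p u ∧ bef (a p) (D x) (D u))) +
        ((av fun u => ind (N p u ∧ N p x ∧ bef (a p) (D u) (D x))) + τ)) := by
      refine av_mono fun x => ?_
      refine le_trans ?_ (add_le_add_right (add_le_add_right (tie_bound hτ hdeg hD (a p) (D x)) _) _)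
      rw [← av_add, ← av_add]
      refine av_mono fun u => ?_
      by_cases hp : N p x ∧ N p u
      · rcases bef_tri (S' := D u) (hN p x hp.1) with h | h | h
        · refine (ind_mono ?_).trans (le_add_of_nonneg_right (add_nonneg (ind_nonneg _) (ind_nonneg _)))
          exact fun _ => ⟨hp.1, hp.2, h⟩
        · refine le_trans (ind_mono ?_) ((le_add_of_nonneg_right (ind_nonneg _)).trans (le_add_of_nonneg_left (ind_nonneg _)))
          exact fun _ => ⟨hp.2, hp.1, h.1⟩
        · refine le_trans (ind_mono ?_) ((le_add_of_nonneg_left (ind_nonneg _)).trans (le_add_of_nonneg_left (ind_nonneg _)))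
          exact fun _ => h
      · rw [ind_false hp]
        exact add_nonneg (ind_nonneg _) (add_nonneg (ind_nonneg _) (ind_nonneg _))
    rw [av_add, av_add, av_const, av_comm (fun x u => ind (N p u ∧ N p x ∧ bef (a p) (D u) (D x)))] at this
    linarith
  have h2 : ρ ^ 2 ≤ av fun p => (av fun x => ind (N p x)) ^ 2 :=
    (pow_le_pow_left₀ hρ h 2).trans (av_pow (fun p => av_nonneg fun x => ind_nonneg _) 1)
  have h3 := h2.trans (av_mono h1)
  rw [av_add, av_mul, av_const] at h3
  linarith

/-- Cherry lemma. -/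
lemma cherry [Nonempty V] {Im : V → Set (ℤ × ℤ)} {τ : ℝ} (hτ : 0 ≤ τ)
    (hdeg : ∀ w, av (fun v => ind (w ∈ Im v)) ≤ τ) {R : V → Set (ℤ × ℤ)} (hR : ∀ v, R v ⊆ Im v)
    (a : V → ℕ → ℤ × ℤ) (A : V → Prop) (hA : ∀ v, A v → R v = Set.range (a v))
    (hA' : ∀ v, ¬ A v → R v = ∅) {ρ : ℝ} (hρ : 0 ≤ ρ) (hρ2 : ρ ≤ 1 / 2)
    (h : ρ ≤ av fun p => av fun x => ind (R p ∩ R x).Nonempty) (hτρ : τ ≤ ρ ^ 2 / 3) :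
    ρ ^ 10 ≤ av fun x => av fun y => av fun d => av fun e =>
      ind (A x ∧ A y ∧ A d ∧ bef (a y) (R x) (R e) ∧ (R x ∩ R d).Nonempty ∧ Disjoint (pre (a y) (R e)) (R d)) := by
  have hAne : ∀ v, (R v).Nonempty → A v := by
    intro v hv; by_contra hc; rw [hA' v hc] at hv; exact Set.not_nonempty_empty hv
  have hit : ∀ x y, (R x ∩ R y).Nonempty → ∃ i, a y i ∈ R x := by
    rintro x y ⟨w, h1, h2⟩
    rw [hA y (hAne y ⟨w, h2⟩)] at h2
    obtain ⟨i, rfl⟩ := h2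
    exact ⟨i, h1⟩
  let Gd : V → V → V → Prop := fun x y d => (R x ∩ R y).Nonempty ∧ (R x ∩ R d).Nonempty ∧ bef (a y) (R x) (R d)
  have h1 : ρ ^ 2 / 3 ≤ av fun x => av fun y => av fun d => ind (Gd x y d) := by
    have e1 : ρ ^ 2 ≤ av fun x => av fun y => av fun d => ind ((R x ∩ R y).Nonempty ∧ (R x ∩ R d).Nonempty) := by
      refine ((pow_le_pow_left₀ hρ h 2).trans (av_pow (fun p => av_nonneg fun x => ind_nonneg _) 1)).trans
        (le_of_eq ?_)
      congr 1; funext x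
      rw [show 1 + 1 = 2 from rfl, sq, ← av_mul']
      congr 1; funext y
      rw [← av_mul]
      congr 1; funext d
      rw [ind_mul]
    have e2 : (av fun x => av fun y => av fun d => ind ((R x ∩ R y).Nonempty ∧ (R x ∩ R d).Nonempty)) ≤
        av fun x => av fun y => (av fun d => ind (Gd x y d)) + ((av fun d => ind (Gd d y x)) + τ) := by
      refine av_mono fun x => av_mono fun y => ?_
      refine le_trans ?_ (add_le_add_right (add_le_add_right (tie_bound hτ hdeg hR (a y) (R x)) _) _)
      rw [← av_add, ← av_add]
      refine av_mono fun d => ?_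
      by_cases hp : (R x ∩ R y).Nonempty ∧ (R x ∩ R d).Nonempty
      · rcases bef_tri (S' := R d) (hit x y hp.1) with h | ⟨h, i, hi⟩ | h
        · refine (ind_mono ?_).trans (le_add_of_nonneg_right (add_nonneg (ind_nonneg _) (ind_nonneg _)))
          exact fun _ => ⟨hp.1, hp.2, h⟩
        · refine le_trans (ind_mono ?_) ((le_add_of_nonneg_right (ind_nonneg _)).trans (le_add_of_nonneg_left (ind_nonneg _)))
          have hy : A y := hAne y (hp.1.mono Set.inter_subset_right)
          refine fun _ => ⟨⟨a y i, hi, ?_⟩, ?_, h⟩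
          · rw [hA y hy]; exact ⟨i, rfl⟩
          · rw [Set.inter_comm]; exact hp.2
        · refine le_trans (ind_mono ?_) ((le_add_of_nonneg_left (ind_nonneg _)).trans (le_add_of_nonneg_left (ind_nonneg _)))
          exact fun _ => h
      · rw [ind_false hp]
        exact add_nonneg (ind_nonneg _) (add_nonneg (ind_nonneg _) (ind_nonneg _))
    have e3 : (av fun x => av fun y => av fun d => ind (Gd d y x)) =
        av fun x => av fun y => av fun d => ind (Gd x y d) := by
      rw [av_comm]
      have : (fun y => av fun x => av fun d => ind (Gd d y x)) = fun y => av fun x => av fun d => ind (Gd x y d) := by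
        funext y; rw [av_comm]
      rw [this, av_comm]
    simp only [av_add, av_const] at e2
    rw [e3] at e2
    linarith
  set η := ρ ^ 2 / 6 with hη
  have hη0 : 0 ≤ η := by positivity
  have h2 : η * (ρ ^ 2 / 3 - η) ≤ av fun x => av fun y => av fun d => av fun e =>
      ind (Gd x y d ∧ ft (a y) (R x) < ft (a y) (R e) ∧ ft (a y) (R e) ≤ ft (a y) (R d)) := by
    have e1 : (av fun x => av fun y => η * ((av fun d => ind (Gd x y d)) + (- η))) ≤
       av fun x => av fun y => av fun d => av fun e =>
      ind (Gd x y d ∧ ft (a y) (R x) < ft (a y) (R e) ∧ ft (a y) (R e) ≤ ft (a y) (R d)) := by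
      refine av_mono fun x => av_mono fun y => ?_
      exact guard_lemma (fun v => ft (a y) (R v)) (ft (a y) (R x)) (Gd x y)
        (fun d hd => (bef_iff _ _ _).mp hd.2.2) η hη0
    simp only [av_mul, av_add, av_const] at e1
    nlinarith
  have h3 : ρ ^ 10 ≤ η * (ρ ^ 2 / 3 - η) := by
    have : ρ ^ 6 ≤ (1 / 2) ^ 6 := pow_le_pow_left₀ hρ hρ2 6
    have h4 : 0 ≤ ρ ^ 4 := by positivity
    rw [hη]
    nlinarith
  refine h3.trans (h2.trans ?_)
  refine av_mono fun x => av_mono fun y => av_mono fun d => av_mono fun e => ind_mono ?_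
  rintro ⟨⟨g1, g2, g3⟩, g4, g5⟩
  refine ⟨hAne x (g1.mono Set.inter_subset_left), hAne y (g1.mono Set.inter_subset_right),
    hAne d (g2.mono Set.inter_subset_right), (bef_iff _ _ _).mpr g4, g2, ?_⟩
  rw [Set.disjoint_iff_inter_eq_empty, ← Set.not_nonempty_iff_eq_empty]
  intro hc
  exact absurd ((bef_iff (a y) (R d) (R e)).mp hc) (not_lt.mpr g5)

end

end SG


namespace SG

section
variable {V : Type} [Fintype V]

/-- The final structure: two poles, a hub, chords and branches. -/
def Final (Im : V → Set (ℤ × ℤ)) (ρ : ℝ) : Prop :=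
  ∃ (α β c0 : Set (ℤ × ℤ)) (C D : V → Set (ℤ × ℤ)) (Q : V → V → Prop),
    α.Finite ∧ Conn α ∧ Conn β ∧ Conn c0 ∧ Disjoint α β ∧ Disjoint α c0 ∧ Disjoint β c0 ∧
    Tch c0 α ∧ Tch c0 β ∧
    (∀ i j, Q i j → (C i ⊆ Im i ∧ Conn (C i) ∧ Disjoint (C i) α ∧ Disjoint (C i) β ∧
        Disjoint (C i) c0 ∧ Tch (C i) α ∧ Tch (C i) β) ∧
      (D j ⊆ Im j ∧ Conn (D j) ∧ Disjoint (D j) α ∧ Disjoint (D j) β ∧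
        Disjoint (D j) c0 ∧ Tch (D j) c0) ∧ (C i ∩ D j).Nonempty) ∧
    ρ ≤ av fun i => av fun j => ind (Q i j)

lemma Final.mono {Im : V → Set (ℤ × ℤ)} {ρ ρ' : ℝ} (h : Final Im ρ) (hρ : ρ' ≤ ρ) : Final Im ρ' := by
  obtain ⟨α, β, c0, C, D, Q, h1, h2, h3, h4, h5, h6, h7, h8, h9, h10, h11⟩ := h
  exact ⟨α, β, c0, C, D, Q, h1, h2, h3, h4, h5, h6, h7, h8, h9, h10, hρ.trans h11⟩

/-- Paths attached to a root. -/
def Rooted (Im : V → Set (ℤ × ℤ)) (z : Set (ℤ × ℤ)) (A : V → Prop) (a : V → ℕ → ℤ × ℤ) : Prop :=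
  ∀ p, A p → IsPath (a p) ∧ Set.range (a p) ⊆ Im p ∧ Disjoint (Set.range (a p)) z ∧ Tch z {a p 0}

/-- Paths avoiding a root. -/
def Avoid (Im : V → Set (ℤ × ℤ)) (z : Set (ℤ × ℤ)) (A : V → Prop) (a : V → ℕ → ℤ × ℤ) : Prop :=
  ∀ p, A p → IsPath (a p) ∧ Set.range (a p) ⊆ Im p ∧ Disjoint (Set.range (a p)) z

lemma Rooted.avoid {Im : V → Set (ℤ × ℤ)} {z : Set (ℤ × ℤ)} {A : V → Prop} {a : V → ℕ → ℤ × ℤ}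
    (h : Rooted Im z A a) : Avoid Im z A a := fun p hp => ⟨(h p hp).1, (h p hp).2.1, (h p hp).2.2.1⟩

lemma final_of {Im : V → Set (ℤ × ℤ)} {z α β : Set (ℤ × ℤ)} (hz : Conn z) (hα : α.Finite)
    (cα : Conn α) (cβ : Conn β) (dαβ : Disjoint α β) (dα : Disjoint α z) (dβ : Disjoint β z)
    (tα : Tch z α) (tβ : Tch z β) {X : V → Prop} {f : V → ℕ → ℤ × ℤ} (hX : Avoid Im z X f)
    {D : V → Set (ℤ × ℤ)} {ρ : ℝ}
    (h : ρ ≤ av fun i => av fun j => ind (X i ∧ (D j ⊆ Im j ∧ Conn (D j) ∧ Disjoint (D j) α ∧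
      Disjoint (D j) β ∧ Disjoint (D j) z ∧ Tch z (D j)) ∧ (ch (f i) α β ∩ D j).Nonempty)) :
    Final Im ρ := by
  refine ⟨α, β, z, fun i => ch (f i) α β, D, _, hα, cα, cβ, hz, dαβ, dα, dβ, tα, tβ, ?_, h⟩
  rintro i j ⟨hi, ⟨j1, j2, j3, j4, j5, j6⟩, hne⟩
  have hne' : (ch (f i) α β).Nonempty := hne.mono Set.inter_subset_left
  obtain ⟨i1, i2, i3⟩ := hX i hi
  exact ⟨⟨(ch_subset _ _ _).trans i2, ch_conn i1 _ _, ch_disjoint_left _ _ _, ch_disjoint_right _ _ _,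
    i3.mono_left (ch_subset _ _ _), ch_tch_left i1 hne', ch_tch_right i1 hne'⟩,
    ⟨j1, j2, j3, j4, j5, j6.symm⟩, hne⟩

lemma av3_swap12 (φ : V → V → V → ℝ) : (av fun p => av fun q => av fun r => φ q p r) =
    av fun p => av fun q => av fun r => φ p q r := by
  rw [av_comm]

lemma av3_swap23 (φ : V → V → V → ℝ) : (av fun p => av fun q => av fun r => φ p r q) =
    av fun p => av fun q => av fun r => φ p q r := by
  congr 1; funext p
  rw [av_comm]

lemma GH [Nonempty V] {Im : V → Set (ℤ × ℤ)} (hfin : ∀ v, (Im v).Finite) {τ : ℝ} (hτ : 0 ≤ τ)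
    (hdeg : ∀ w, av (fun v => ind (w ∈ Im v)) ≤ τ) {z : Set (ℤ × ℤ)} (hz : Conn z)
    {A X : V → Prop} {a d : V → ℕ → ℤ × ℤ} (hA : Rooted Im z A a) (hX : Avoid Im z X d)
    {ρ : ℝ} (hρ : 0 < ρ) (hρ2 : ρ ≤ 1 / 2) (hτρ : τ ≤ ρ ^ 2 / 3)
    (h : ρ ≤ av fun p => av fun x => ind (A p ∧ X x ∧ (Set.range (a p) ∩ Set.range (d x)).Nonempty)) :
    Final Im (ρ ^ 15) ∨ ∃ u, X u ∧ ρ ^ 15 ≤ av fun p => av fun q => ind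
      (A p ∧ A q ∧ (Set.range (a p) ∩ Set.range (d u)).Nonempty ∧
        (Set.range (a q) ∩ Set.range (d u)).Nonempty ∧
        (pre (a p) (Set.range (d u)) ∩ pre (a q) (Set.range (d u))).Nonempty) := by
  set D : V → Set (ℤ × ℤ) := fun u => {w | X u ∧ w ∈ Set.range (d u)} with hD
  have hDI : ∀ v, D v ⊆ Im v := fun v w hw => (hX v hw.1).2.1 hw.2
  have hDX : ∀ v, X v → D v = Set.range (d v) := fun v hv => by ext w; simp [hD, hv]
  set N : V → V → Prop := fun p x => A p ∧ X x ∧ (Set.range (a p) ∩ Set.range (d x)).Nonempty with hN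
  have hgood := good_triples hτ hdeg hDI a N (by
    rintro p x ⟨_, hx, _, ⟨i, rfl⟩, hw⟩
    exact ⟨i, hx, hw⟩) hρ.le h hτρ
  set θ := ρ ^ 2 / 3 with hθ
  set T : V → V → V → Prop := fun u x p => N p x ∧ N p u ∧ bef (a p) (D x) (D u) with hT
  have hθ0 : 0 ≤ θ := by positivity
  have g1 : θ ≤ av fun u => av fun x => av fun p => ind (T u x p) := by
    rw [av_comm]
    refine hgood.trans (le_of_eq ?_)
    rw [av_comm]
    congr 1; funext x
    rw [av_comm]
  have hc1 : ρ ^ 15 ≤ θ ^ 3 / 12 := by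
    rw [hθ]
    have : ρ ^ 9 ≤ (1 / 2) ^ 9 := pow_le_pow_left₀ hρ.le hρ2 9
    have h4 : 0 ≤ ρ ^ 6 := by positivity
    nlinarith
  have hcube : θ ^ 3 ≤ av fun u => av fun x => av fun p => av fun q => av fun r =>
      ind (T u x p ∧ T u x q ∧ T u x r) := by
    refine ((pow_le_pow_left₀ hθ0 g1 3).trans
      (av_pow (fun _ => av_nonneg fun _ => av_nonneg fun _ => ind_nonneg _) 2)).trans (av_mono fun u => ?_)
    refine (av_pow (fun _ => av_nonneg fun _ => ind_nonneg _) 2).trans (le_of_eq ?_)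
    congr 1; funext x
    simp only [← ind_mul, av_mul, av_mul']
    ring
  set E : V → V → V → Prop := fun u p q => X u ∧ (A p ∧ A q ∧ (Set.range (a p) ∩ Set.range (d u)).Nonempty ∧
        (Set.range (a q) ∩ Set.range (d u)).Nonempty ∧
        (pre (a p) (Set.range (d u)) ∩ pre (a q) (Set.range (d u))).Nonempty) with hE
  by_cases hG : ∃ u, θ ^ 3 / 6 ≤ av fun p => av fun q => ind (E u p q)
  · right
    obtain ⟨u, hu⟩ := hG
    have hX : X u := by
      by_contra hc
      have : (av fun p => av fun q => ind (E u p q)) ≤ 0 := by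
        refine av_le_of_le fun p => av_le_of_le fun q => ?_
        rw [ind_false]; exact fun h => hc h.1
      have : 0 < ρ ^ 15 := by positivity
      linarith
    refine ⟨u, hX, le_trans (by linarith [pow_nonneg hθ0 3]) (hu.trans ?_)⟩
    exact av_mono fun p => av_mono fun q => ind_mono fun h => h.2
  left
  push Not at hG
  set Φ : V → V → V → V → V → Prop := fun u x p q r => X x ∧ X u ∧ A p ∧ A q ∧ A r ∧
    (pre (a p) (D u)).Nonempty ∧ (pre (a q) (D u)).Nonempty ∧ (pre (a r) (D u)).Nonempty ∧
    Disjoint (pre (a p) (D u)) (pre (a q) (D u)) ∧ Disjoint (pre (a p) (D u)) (pre (a r) (D u)) ∧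
    Disjoint (pre (a q) (D u)) (pre (a r) (D u)) ∧
    (ch (d x) (pre (a p) (D u)) (pre (a r) (D u)) ∩ pre (a q) (D u)).Nonempty with hΦ
  have hpt : ∀ u x p q r, ind (T u x p ∧ T u x q ∧ T u x r) ≤ (ind (E u p q) + ind (E u p r) + ind (E u q r)) +
      (ind (Φ u x p q r) + ind (Φ u x q p r) + ind (Φ u x p r q) + ind (Φ u x r p q) + ind (Φ u x q r p) +
        ind (Φ u x r q p)) := by
    intro u x p q r
    have nn := fun P => ind_nonneg P
    by_cases hyp : T u x p ∧ T u x q ∧ T u x r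
    swap
    · rw [ind_false hyp]
      linarith [nn (E u p q), nn (E u p r), nn (E u q r), nn (Φ u x p q r), nn (Φ u x q p r),
        nn (Φ u x p r q), nn (Φ u x r p q), nn (Φ u x q r p), nn (Φ u x r q p)]
    rw [ind_true hyp]
    obtain ⟨⟨p1, p2, p3⟩, ⟨q1, q2, q3⟩, ⟨r1, r2, r3⟩⟩ := hyp
    have hXu : X u := p2.2.1
    have hXx : X x := p1.2.1
    have mkE : ∀ s t, N s u → N t u → ¬ Disjoint (pre (a s) (D u)) (pre (a t) (D u)) → ind (E u s t) = 1 := by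
      intro s t hs ht hd
      rw [Set.not_disjoint_iff_nonempty_inter, hDX u hXu] at hd
      exact ind_true ⟨hXu, hs.1, ht.1, hs.2.2, ht.2.2, hd⟩
    by_cases dpq : Disjoint (pre (a p) (D u)) (pre (a q) (D u))
    swap
    · linarith [mkE p q p2 q2 dpq, nn (E u p q), nn (E u p r), nn (E u q r), nn (Φ u x p q r), nn (Φ u x q p r),
        nn (Φ u x p r q), nn (Φ u x r p q), nn (Φ u x q r p), nn (Φ u x r q p)]
    by_cases dpr : Disjoint (pre (a p) (D u)) (pre (a r) (D u))
    swap
    · linarith [mkE p r p2 r2 dpr, nn (E u p q), nn (E u p r), nn (E u q r), nn (Φ u x p q r), nn (Φ u x q p r),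
        nn (Φ u x p r q), nn (Φ u x r p q), nn (Φ u x q r p), nn (Φ u x r q p)]
    by_cases dqr : Disjoint (pre (a q) (D u)) (pre (a r) (D u))
    swap
    · linarith [mkE q r q2 r2 dqr, nn (E u p q), nn (E u p r), nn (E u q r), nn (Φ u x p q r), nn (Φ u x q p r),
        nn (Φ u x p r q), nn (Φ u x r p q), nn (Φ u x q r p), nn (Φ u x r q p)]
    have hit : ∀ s, bef (a s) (D x) (D u) → ∃ i, d x i ∈ pre (a s) (D u) := by
      rintro s ⟨w, hw, _, i, rfl⟩
      exact ⟨i, hw⟩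
    have ne : ∀ s, bef (a s) (D x) (D u) → (pre (a s) (D u)).Nonempty :=
      fun s hs => hs.mono Set.inter_subset_left
    rcases three_sets (hit p p3) (hit q q3) (hit r r3) dpq dpr dqr with H | H | H | H | H | H
    · linarith [ind_true (p := Φ u x p q r) ⟨hXx, hXu, p1.1, q1.1, r1.1, ne p p3, ne q q3, ne r r3, dpq, dpr, dqr, H⟩,
        nn (E u p q), nn (E u p r), nn (E u q r), nn (Φ u x p q r), nn (Φ u x q p r),
        nn (Φ u x p r q), nn (Φ u x r p q), nn (Φ u x q r p), nn (Φ u x r q p)]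
    · linarith [ind_true (p := Φ u x q p r) ⟨hXx, hXu, q1.1, p1.1, r1.1, ne q q3, ne p p3, ne r r3, dpq.symm, dqr, dpr, H⟩,
        nn (E u p q), nn (E u p r), nn (E u q r), nn (Φ u x p q r), nn (Φ u x q p r),
        nn (Φ u x p r q), nn (Φ u x r p q), nn (Φ u x q r p), nn (Φ u x r q p)]
    · linarith [ind_true (p := Φ u x p r q) ⟨hXx, hXu, p1.1, r1.1, q1.1, ne p p3, ne r r3, ne q q3, dpr, dpq, dqr.symm, H⟩,
        nn (E u p q), nn (E u p r), nn (E u q r), nn (Φ u x p q r), nn (Φ u x q p r),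
        nn (Φ u x p r q), nn (Φ u x r p q), nn (Φ u x q r p), nn (Φ u x r q p)]
    · linarith [ind_true (p := Φ u x r p q) ⟨hXx, hXu, r1.1, p1.1, q1.1, ne r r3, ne p p3, ne q q3, dpr.symm, dqr.symm, dpq, H⟩,
        nn (E u p q), nn (E u p r), nn (E u q r), nn (Φ u x p q r), nn (Φ u x q p r),
        nn (Φ u x p r q), nn (Φ u x r p q), nn (Φ u x q r p), nn (Φ u x r q p)]
    · linarith [ind_true (p := Φ u x q r p) ⟨hXx, hXu, q1.1, r1.1, p1.1, ne q q3, ne r r3, ne p p3, dqr, dpq.symm, dpr.symm, H⟩,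
        nn (E u p q), nn (E u p r), nn (E u q r), nn (Φ u x p q r), nn (Φ u x q p r),
        nn (Φ u x p r q), nn (Φ u x r p q), nn (Φ u x q r p), nn (Φ u x r q p)]
    · linarith [ind_true (p := Φ u x r q p) ⟨hXx, hXu, r1.1, q1.1, p1.1, ne r r3, ne q q3, ne p p3, dqr.symm, dpr.symm, dpq.symm, H⟩,
        nn (E u p q), nn (E u p r), nn (E u q r), nn (Φ u x p q r), nn (Φ u x q p r),
        nn (Φ u x p r q), nn (Φ u x r p q), nn (Φ u x q r p), nn (Φ u x r q p)]
  have hbig : θ ^ 3 ≤ av fun u => av fun x => (3 * (θ ^ 3 / 6) +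
      6 * av fun p => av fun q => av fun r => ind (Φ u x p q r)) := by
    refine hcube.trans (av_mono fun u => av_mono fun x => ?_)
    refine (av_mono fun p => av_mono fun q => av_mono fun r => hpt u x p q r).trans ?_
    simp only [av_add, av_const]
    have s1 := av3_swap12 (fun p q r => ind (Φ u x p q r))
    have s2 := av3_swap23 (fun p q r => ind (Φ u x p q r))
    have s3 := av3_swap12 (fun p q r => ind (Φ u x p r q))
    have s4 := av3_swap23 (fun p q r => ind (Φ u x q p r))
    have s5 := av3_swap12 (fun p q r => ind (Φ u x q r p))
    have s6 := av3_swap23 (fun p q r => ind (Φ u x r p q))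
    have s7 := av3_swap23 (fun p q r => ind (Φ u x q r p))
    have s8 := av3_swap12 (fun p q r => ind (Φ u x r p q))
    have := hG u
    linarith
  simp only [av_add, av_const, av_mul] at hbig
  have hΦ2 : ρ ^ 15 ≤ av fun u => av fun x => av fun p => av fun q => av fun r => ind (Φ u x p q r) := by linarith
  obtain ⟨u, hu⟩ := exists_le_av hΦ2
  rw [av_comm] at hu
  obtain ⟨p, hp⟩ := exists_le_av hu
  have hp' : ρ ^ 15 ≤ av fun r => av fun x => av fun q => ind (Φ u x p q r) := by
    refine hp.trans (le_of_eq ?_)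
    rw [av_comm (fun r x => av fun q => ind (Φ u x p q r))]
    congr 1; funext x
    rw [av_comm]
  obtain ⟨r, hr⟩ := exists_le_av hp'
  obtain ⟨x0, hx0⟩ := exists_le_av hr
  obtain ⟨q0, hq0⟩ := exists_le_av hx0
  have h0 : Φ u x0 p q0 r := by
    by_contra hc
    rw [ind_false hc] at hq0
    have : 0 < ρ ^ 15 := by positivity
    linarith
  obtain ⟨_, hXu, hAp, _, hAr, nep, _, ner, _, dpr, _, _⟩ := h0
  have tch : ∀ s, A s → (pre (a s) (D u)).Nonempty → Tch z (pre (a s) (D u)) := by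
    intro s hs hne
    exact (hA s hs).2.2.2.mono le_rfl (Set.singleton_subset_iff.mpr (pre_zero hne))
  refine final_of (α := pre (a p) (D u)) (β := pre (a r) (D u)) (X := X) (f := d)
    (D := fun q => pre (a q) (D u)) hz ?_ (pre_conn (hA p hAp).1 _) (pre_conn (hA r hAr).1 _) dpr
    ((hA p hAp).2.2.1.mono_left (pre_subset _ _)) ((hA r hAr).2.2.1.mono_left (pre_subset _ _))
    (tch p hAp nep) (tch r hAr ner) hX ?_
  · exact (hfin p).subset ((pre_subset _ _).trans (hA p hAp).2.1)
  · refine hr.trans (av_mono fun x => av_mono fun q => ind_mono ?_)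
    rintro ⟨h1, h2, h3, h4, h5, h6, h7, h8, h9, h10, h11, h12⟩
    exact ⟨h1, ⟨(pre_subset _ _).trans (hA q h4).2.1, pre_conn (hA q h4).1 _, h9.symm, h11,
      (hA q h4).2.2.1.mono_left (pre_subset _ _), tch q h4 h7⟩, h12⟩

end

end SG


namespace SG

section
variable {V : Type} [Fintype V]

lemma restrict {Im : V → Set (ℤ × ℤ)} {z : Set (ℤ × ℤ)} {A : V → Prop} {a : V → ℕ → ℤ × ℤ}
    (hA : Rooted Im z A a) (S : Set (ℤ × ℤ)) :
    ∃ (A' : V → Prop) (a' : V → ℕ → ℤ × ℤ), Rooted Im z A' a' ∧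
      (∀ p, A' p → Set.range (a' p) = pre (a p) S ∧ A p ∧ ∃ i, a p i ∈ S) ∧
      ∀ p, A p → (Set.range (a p) ∩ S).Nonempty → (pre (a p) S).Nonempty → A' p := by
  have : ∀ p, ∃ c : ℕ → ℤ × ℤ, (A p ∧ (∃ i, a p i ∈ S) ∧ (pre (a p) S).Nonempty) →
      IsPath c ∧ c 0 = a p 0 ∧ Set.range c = pre (a p) S := by
    intro p
    by_cases h : A p ∧ (∃ i, a p i ∈ S) ∧ (pre (a p) S).Nonempty
    · obtain ⟨c, hc⟩ := exists_cut (hA p h.1).1 h.2.2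
      exact ⟨c, fun _ => hc⟩
    · exact ⟨fun _ => 0, fun h' => absurd h' h⟩
  choose c hc using this
  refine ⟨fun p => A p ∧ (∃ i, a p i ∈ S) ∧ (pre (a p) S).Nonempty, c, ?_, ?_, ?_⟩
  · intro p hp
    obtain ⟨h1, h2, h3⟩ := hc p hp
    obtain ⟨k1, k2, k3, k4⟩ := hA p hp.1
    refine ⟨h1, ?_, ?_, ?_⟩
    · rw [h3]; exact (pre_subset _ _).trans k2
    · rw [h3]; exact k3.mono_left (pre_subset _ _)
    · rw [h2]; exact k4
  · intro p hp
    exact ⟨(hc p hp).2.2, hp.1, hp.2.1⟩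
  · rintro p h1 ⟨_, ⟨i, rfl⟩, hi⟩ h3
    exact ⟨h1, ⟨i, hi⟩, h3⟩

lemma revs {g : V → ℕ → ℤ × ℤ} (hg : ∀ v, IsPath (g v)) (z : Set (ℤ × ℤ)) :
    ∃ (A : V → Prop) (a : V → ℕ → ℤ × ℤ), Rooted (fun v => Set.range (g v)) z A a ∧
      (∀ p, (∃ i, g p i ∈ z) → (pre (g p) z).Nonempty → A p ∧ Set.range (a p) = pre (g p) z) := by
  have : ∀ p, ∃ c : ℕ → ℤ × ℤ, ((∃ i, g p i ∈ z) ∧ (pre (g p) z).Nonempty) →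
      IsPath c ∧ Tch z {c 0} ∧ Set.range c = pre (g p) z := by
    intro p
    by_cases h : (∃ i, g p i ∈ z) ∧ (pre (g p) z).Nonempty
    · obtain ⟨c, hc⟩ := exists_rev (hg p) h.2 h.1
      exact ⟨c, fun _ => hc⟩
    · exact ⟨fun _ => 0, fun h' => absurd h' h⟩
  choose c hc using this
  refine ⟨fun p => (∃ i, g p i ∈ z) ∧ (pre (g p) z).Nonempty, c, ?_, ?_⟩
  · intro p hp
    obtain ⟨h1, h2, h3⟩ := hc p hp
    refine ⟨h1, ?_, ?_, h2⟩
    · rw [h3]; exact pre_subset _ _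
    · rw [h3]; exact pre_disjoint _ _
  · intro p h1 h2
    exact ⟨⟨h1, h2⟩, (hc p ⟨h1, h2⟩).2.2⟩

lemma stage1 [Nonempty V] {g : V → ℕ → ℤ × ℤ} (hg : ∀ v, IsPath (g v)) {τ : ℝ} (hτ : 0 ≤ τ)
    (hdeg : ∀ w, av (fun v => ind (w ∈ Set.range (g v))) ≤ τ)
    {ρ : ℝ} (hρ : 0 < ρ) (hρ2 : ρ ≤ 1 / 2) (hτρ : τ ≤ ρ ^ 2 / 3)
    (h : ρ ≤ av fun p => av fun x => ind (Set.range (g p) ∩ Set.range (g x)).Nonempty) :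
    ∃ (z : Set (ℤ × ℤ)) (A X : V → Prop) (a d : V → ℕ → ℤ × ℤ), Conn z ∧
      Rooted (fun v => Set.range (g v)) z A a ∧ Avoid (fun v => Set.range (g v)) z X d ∧
      ρ ^ 11 ≤ av fun p => av fun x => ind (A p ∧ X x ∧ (Set.range (a p) ∩ Set.range (d x)).Nonempty) := by
  have hch := cherry hτ hdeg (R := fun v => Set.range (g v)) (fun v => le_rfl) g (fun _ => True)
    (fun v _ => rfl) (fun v hv => absurd trivial hv) hρ.le hρ2 h hτρ
  set Y : V → V → Set (ℤ × ℤ) := fun y e => pre (g y) (Set.range (g e)) with hY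
  set P1 : V → V → V → V → Prop := fun x y d e => (Y y e).Nonempty ∧ (∃ i, g x i ∈ Set.range (g d)) ∧ Disjoint (Y y e) (Set.range (g d)) ∧
    bef (g x) (Y y e) (Set.range (g d)) with hP1
  set P2 : V → V → V → V → Prop := fun x y d e => (∃ i, g x i ∈ Y y e) ∧ Disjoint (Y y e) (Set.range (g d)) ∧
    bef (g x) (Set.range (g d)) (Y y e) with hP2
  have key : ρ ^ 10 ≤ (av fun x => av fun y => av fun d => av fun e => ind (P1 x y d e)) +
      av fun x => av fun y => av fun d => av fun e => ind (P2 x y d e) := by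
    simp only [← av_add]
    refine hch.trans (av_mono fun x => av_mono fun y => av_mono fun d => av_mono fun e => ind_or ?_)
    rintro ⟨-, -, -, h1, h2, h3⟩
    have hx : ∃ i, g x i ∈ Y y e := by
      obtain ⟨w, hw, i, rfl⟩ := h1
      exact ⟨i, hw⟩
    rcases bef_tri (S' := Set.range (g d)) hx with h | h | ⟨i, i1, i2, _⟩
    · left
      obtain ⟨_, ⟨i, rfl⟩, hi⟩ := h2
      exact ⟨h1.mono Set.inter_subset_left, ⟨i, hi⟩, h3, h⟩
    · right; exact ⟨hx, h3, h.1⟩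
    · exact absurd i2 (Set.disjoint_left.mp h3 i1)
  have h11 : 2 * ρ ^ 11 ≤ ρ ^ 10 := by
    have : 0 < ρ ^ 10 := by positivity
    rw [pow_succ]; nlinarith
  have hor : (ρ ^ 11 ≤ av fun x => av fun y => av fun d => av fun e => ind (P1 x y d e)) ∨
      (ρ ^ 11 ≤ av fun x => av fun y => av fun d => av fun e => ind (P2 x y d e)) := by
    by_contra hc; push Not at hc; linarith [hc.1, hc.2]
  rcases hor with H | H
  · have H' : ρ ^ 11 ≤ av fun d => av fun e => av fun x => av fun y => ind (P1 x y d e) := by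
      refine H.trans (le_of_eq ?_)
      calc _ = av fun x => av fun d => av fun y => av fun e => ind (P1 x y d e) := by
            congr 1; funext x; rw [av_comm]
        _ = av fun d => av fun x => av fun y => av fun e => ind (P1 x y d e) := by rw [av_comm]
        _ = av fun d => av fun x => av fun e => av fun y => ind (P1 x y d e) := by
            congr 1; funext d; congr 1; funext x; rw [av_comm]
        _ = _ := by congr 1; funext d; rw [av_comm]
    obtain ⟨d, hd⟩ := exists_le_av H'
    obtain ⟨e, he⟩ := exists_le_av hd
    obtain ⟨A, a, hA, hA2⟩ := revs hg (Set.range (g d))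
    have : ∀ y, ∃ c : ℕ → ℤ × ℤ, (Y y e).Nonempty → IsPath c ∧ Set.range c = Y y e := by
      intro y
      by_cases h : (Y y e).Nonempty
      · obtain ⟨c, hc⟩ := exists_cut (hg y) h
        exact ⟨c, fun _ => ⟨hc.1, hc.2.2⟩⟩
      · exact ⟨fun _ => 0, fun h' => absurd h' h⟩
    choose c hc using this
    refine ⟨Set.range (g d), A, fun y => (Y y e).Nonempty ∧ Disjoint (Y y e) (Set.range (g d)), a, c,
      (hg d).conn_range, hA, ?_, ?_⟩
    · rintro y ⟨h1, h2⟩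
      obtain ⟨c1, c2⟩ := hc y h1
      refine ⟨c1, ?_, ?_⟩
      · rw [c2]; exact pre_subset _ _
      · rw [c2]; exact h2
    · refine he.trans (av_mono fun x => av_mono fun y => ind_mono ?_)
      rintro ⟨h1, h2, h3, h4⟩
      obtain ⟨k1, k2⟩ := hA2 x h2 (h4.mono Set.inter_subset_left)
      refine ⟨k1, ⟨h1, h3⟩, ?_⟩
      rw [k2, (hc y h1).2]
      exact h4
  · have H' : ρ ^ 11 ≤ av fun y => av fun e => av fun x => av fun d => ind (P2 x y d e) := by
      refine H.trans (le_of_eq ?_)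
      calc _ = av fun y => av fun x => av fun d => av fun e => ind (P2 x y d e) := by rw [av_comm]
        _ = av fun y => av fun x => av fun e => av fun d => ind (P2 x y d e) := by
            congr 1; funext d; congr 1; funext x; rw [av_comm]
        _ = _ := by congr 1; funext d; rw [av_comm]
    obtain ⟨y, hy⟩ := exists_le_av H'
    obtain ⟨e, he⟩ := exists_le_av hy
    obtain ⟨A, a, hA, hA2⟩ := revs hg (Y y e)
    refine ⟨Y y e, A, fun d => Disjoint (Set.range (g d)) (Y y e), a, g, pre_conn (hg y) _, hA, ?_, ?_⟩
    · intro d h2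
      exact ⟨hg d, le_rfl, h2⟩
    · refine he.trans (av_mono fun x => av_mono fun d => ind_mono ?_)
      rintro ⟨h1, h2, h3⟩
      obtain ⟨k1, k2⟩ := hA2 x h1 (h3.mono Set.inter_subset_left)
      refine ⟨k1, h2.symm, ?_⟩
      rw [k2]
      exact h3

lemma stage4 [Nonempty V] {Im : V → Set (ℤ × ℤ)} (hfin : ∀ v, (Im v).Finite) {τ : ℝ} (hτ : 0 ≤ τ)
    (hdeg : ∀ w, av (fun v => ind (w ∈ Im v)) ≤ τ) {z : Set (ℤ × ℤ)} (hz : Conn z)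
    {A : V → Prop} {a : V → ℕ → ℤ × ℤ} (hA : Rooted Im z A a) {u : V} (hu : A u)
    {ρ : ℝ} (hρ : 0 < ρ) (hρ2 : ρ ≤ 1 / 2) (hτρ : τ ≤ ρ ^ 2 / 3)
    (h : ρ ≤ av fun p => av fun q => ind
      (A p ∧ A q ∧ (Set.range (a p) ∩ Set.range (a u)).Nonempty ∧
        (Set.range (a q) ∩ Set.range (a u)).Nonempty ∧
        (pre (a p) (Set.range (a u)) ∩ pre (a q) (Set.range (a u))).Nonempty)) :
    Final Im (ρ ^ 11) := by
  set β := Set.range (a u) with hβ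
  obtain ⟨B, b, hB, hBr, hBm⟩ := restrict hA β
  set R : V → Set (ℤ × ℤ) := fun v => {w | B v ∧ w ∈ Set.range (b v)} with hR
  have hRB : ∀ v, B v → R v = Set.range (b v) := fun v hv => by ext w; simp [hR, hv]
  have hRI : ∀ v, R v ⊆ Im v := fun v w hw => (hB v hw.1).2.1 hw.2
  have hch := cherry hτ hdeg hRI b B hRB
    (fun v hv => by ext w; simp [hR, hv]) hρ.le hρ2 (h.trans (av_mono fun p => av_mono fun q => ind_mono (by
      rintro ⟨h1, h2, h3, h4, h5⟩
      have p1 := hBm p h1 h3 (h5.mono Set.inter_subset_left)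
      have q1 := hBm q h2 h4 (h5.mono Set.inter_subset_right)
      rw [hRB p p1, hRB q q1, (hBr p p1).1, (hBr q q1).1]
      exact h5))) hτρ
  set Y : V → V → Set (ℤ × ℤ) := fun y e => pre (b y) (R e) with hY
  set P1 : V → V → V → V → Prop := fun x y d e => B x ∧ B y ∧ B d ∧ (Y y e).Nonempty ∧ (R d).Nonempty ∧
    Disjoint (Y y e) (R d) ∧ (ch (a x) (Y y e) β ∩ R d).Nonempty with hP1
  set P2 : V → V → V → V → Prop := fun x y d e => B x ∧ B y ∧ B d ∧ (Y y e).Nonempty ∧ (R d).Nonempty ∧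
    Disjoint (Y y e) (R d) ∧ (ch (a x) (R d) β ∩ Y y e).Nonempty with hP2
  have key : ρ ^ 10 ≤ (av fun x => av fun y => av fun d => av fun e => ind (P1 x y d e)) +
      av fun x => av fun y => av fun d => av fun e => ind (P2 x y d e) := by
    simp only [← av_add]
    refine hch.trans (av_mono fun x => av_mono fun y => av_mono fun d => av_mono fun e => ind_or ?_)
    rintro ⟨bx, bY, bd, h1, h2, h3⟩
    have hx : R x = pre (a x) β := by rw [hRB x bx, (hBr x bx).1]
    have e1 : (Y y e).Nonempty := h1.mono Set.inter_subset_left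
    have e2 : (R d).Nonempty := h2.mono Set.inter_subset_right
    rcases two_sets (hBr x bx).2.2 h3 (by rw [← hx, Set.inter_comm]; exact h1) (by rw [← hx]; exact h2) with H | H
    · left; exact ⟨bx, bY, bd, e1, e2, h3, H⟩
    · right; exact ⟨bx, bY, bd, e1, e2, h3, H⟩
  have h11 : 2 * ρ ^ 11 ≤ ρ ^ 10 := by
    have : 0 < ρ ^ 10 := by positivity
    rw [pow_succ]; nlinarith
  have hor : (ρ ^ 11 ≤ av fun x => av fun y => av fun d => av fun e => ind (P1 x y d e)) ∨
      (ρ ^ 11 ≤ av fun x => av fun y => av fun d => av fun e => ind (P2 x y d e)) := by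
    by_contra hc; push Not at hc; linarith [hc.1, hc.2]
  have hRn : ∀ d, B d → (R d ⊆ Im d ∧ Conn (R d) ∧ Disjoint (R d) β ∧ Disjoint (R d) z ∧ Tch z (R d)) := by
    intro d hd
    refine ⟨hRI d, ?_, ?_, ?_, ?_⟩
    · rw [hRB d hd]; exact (hB d hd).1.conn_range
    · rw [hRB d hd, (hBr d hd).1]; exact pre_disjoint _ _
    · rw [hRB d hd]; exact (hB d hd).2.2.1
    · rw [hRB d hd]; exact (hB d hd).2.2.2.mono le_rfl (Set.singleton_subset_iff.mpr ⟨0, rfl⟩)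
  have hYn : ∀ y e, B y → (Y y e).Nonempty →
      (Y y e ⊆ Im y ∧ Conn (Y y e) ∧ Disjoint (Y y e) β ∧ Disjoint (Y y e) z ∧ Tch z (Y y e)) := by
    intro y e hy hne
    have hs : Y y e ⊆ R y := by rw [hRB y hy]; exact pre_subset _ _
    obtain ⟨r1, r2, r3, r4, r5⟩ := hRn y hy
    refine ⟨hs.trans r1, pre_conn (hB y hy).1 _, r3.mono_left hs, r4.mono_left hs, ?_⟩
    exact (hB y hy).2.2.2.mono le_rfl (Set.singleton_subset_iff.mpr (pre_zero hne))
  have cβ : Conn β := (hA u hu).1.conn_range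
  have dβ : Disjoint β z := (hA u hu).2.2.1
  have tβ : Tch z β := (hA u hu).2.2.2.mono le_rfl (Set.singleton_subset_iff.mpr ⟨0, rfl⟩)
  have hpos : 0 < ρ ^ 11 := by positivity
  rcases hor with H | H
  · have H' : ρ ^ 11 ≤ av fun y => av fun e => av fun x => av fun d => ind (P1 x y d e) := by
      refine H.trans (le_of_eq ?_)
      calc _ = av fun y => av fun x => av fun d => av fun e => ind (P1 x y d e) := by rw [av_comm]
        _ = av fun y => av fun x => av fun e => av fun d => ind (P1 x y d e) := by
            congr 1; funext d; congr 1; funext x; rw [av_comm]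
        _ = _ := by congr 1; funext d; rw [av_comm]
    obtain ⟨y, hy⟩ := exists_le_av H'
    obtain ⟨e, he⟩ := exists_le_av hy
    obtain ⟨x0, hx0⟩ := exists_le_av he
    obtain ⟨d0, hd0⟩ := exists_le_av hx0
    have h0 : P1 x0 y d0 e := by
      by_contra hc; rw [ind_false hc] at hd0; linarith
    obtain ⟨r1, r2, r3, r4, r5⟩ := hYn y e h0.2.1 h0.2.2.2.1
    refine final_of (α := Y y e) (β := β) (X := A) (f := a) (D := R) hz ((hfin y).subset r1) r2 cβ r3 r4 dβ r5 tβ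
      hA.avoid (he.trans (av_mono fun x => av_mono fun d => ind_mono ?_))
    rintro ⟨h1, h2, h3, h4, h5, h6, h7⟩
    obtain ⟨s1, s2, s3, s4, s5⟩ := hRn d h3
    exact ⟨(hBr x h1).2.1, ⟨s1, s2, h6.symm, s3, s4, s5⟩, h7⟩
  · have H' : ρ ^ 11 ≤ av fun d => av fun e => av fun x => av fun y => ind (P2 x y d e) := by
      refine H.trans (le_of_eq ?_)
      calc _ = av fun x => av fun d => av fun y => av fun e => ind (P2 x y d e) := by
            congr 1; funext x; rw [av_comm]
        _ = av fun d => av fun x => av fun y => av fun e => ind (P2 x y d e) := by rw [av_comm]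
        _ = av fun d => av fun x => av fun e => av fun y => ind (P2 x y d e) := by
            congr 1; funext d; congr 1; funext x; rw [av_comm]
        _ = _ := by congr 1; funext d; rw [av_comm]
    obtain ⟨d, hd⟩ := exists_le_av H'
    obtain ⟨e, he⟩ := exists_le_av hd
    obtain ⟨x0, hx0⟩ := exists_le_av he
    obtain ⟨d0, hd0⟩ := exists_le_av hx0
    have h0 : P2 x0 d0 d e := by
      by_contra hc; rw [ind_false hc] at hd0; linarith
    obtain ⟨r1, r2, r3, r4, r5⟩ := hRn d h0.2.2.1
    refine final_of (α := R d) (β := β) (X := A) (f := a) (D := fun y => Y y e) hz ((hfin d).subset r1) r2 cβ r3 r4 dβ r5 tβ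
      hA.avoid (he.trans (av_mono fun x => av_mono fun y => ind_mono ?_))
    rintro ⟨h1, h2, h3, h4, h5, h6, h7⟩
    obtain ⟨s1, s2, s3, s4, s5⟩ := hYn y e h2 h4
    exact ⟨(hBr x h1).2.1, ⟨s1, s2, h6, s3, s4, s5⟩, h7⟩

lemma exists_final [Nonempty V] {g : V → ℕ → ℤ × ℤ} (hg : ∀ v, IsPath (g v))
    (hfin : ∀ v, (Set.range (g v)).Finite) {τ : ℝ} (hτ : 0 ≤ τ)
    (hdeg : ∀ w, av (fun v => ind (w ∈ Set.range (g v))) ≤ τ)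
    {ε : ℝ} (hε : 0 < ε) (hε2 : ε ≤ 1 / 2) (hτε : τ ≤ ε ^ 4950 / 3)
    (h : ε ≤ av fun p => av fun x => ind (Set.range (g p) ∩ Set.range (g x)).Nonempty) :
    Final (fun v => Set.range (g v)) (ε ^ 27225) := by
  have hε1 : ε ≤ 1 := by linarith
  have hle : ∀ k, k ≠ 0 → ε ^ k ≤ 1 / 2 := fun k hk => (pow_le_of_le_one hε.le hε1 hk).trans hε2
  have hτk : ∀ k, k * 2 ≤ 4950 → τ ≤ (ε ^ k) ^ 2 / 3 := fun k hk => by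
    rw [← pow_mul]
    have := pow_le_pow_of_le_one hε.le hε1 hk
    linarith
  obtain ⟨z, A, X, a, d, hz, hA, hX, h1⟩ := stage1 hg hτ hdeg hε hε2 (by simpa using hτk 1 (by norm_num)) h
  rcases GH hfin hτ hdeg hz hA hX (pow_pos hε 11) (hle 11 (by norm_num)) (hτk 11 (by norm_num)) h1 with H | ⟨u, hu, h2⟩
  · refine H.mono ?_
    rw [← pow_mul]
    exact pow_le_pow_of_le_one hε.le hε1 (by norm_num)
  rw [← pow_mul] at h2
  obtain ⟨A', a', hA', hr, hm⟩ := restrict hA (Set.range (d u))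
  have h3 : ε ^ (11 * 15) ≤ av fun p => av fun q => ind (A' p ∧ A' q ∧
      (Set.range (a' p) ∩ Set.range (a' q)).Nonempty) := by
    refine h2.trans (av_mono fun p => av_mono fun q => ind_mono ?_)
    rintro ⟨k1, k2, k3, k4, k5⟩
    have p1 := hm p k1 k3 (k5.mono Set.inter_subset_left)
    have q1 := hm q k2 k4 (k5.mono Set.inter_subset_right)
    refine ⟨p1, q1, ?_⟩
    rw [(hr p p1).1, (hr q q1).1]
    exact k5
  rcases GH hfin hτ hdeg hz hA' hA'.avoid (pow_pos hε _) (hle _ (by norm_num)) (hτk _ (by norm_num)) h3 with H | ⟨u', hu', h4⟩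
  · refine H.mono ?_
    rw [← pow_mul]
    exact pow_le_pow_of_le_one hε.le hε1 (by norm_num)
  rw [← pow_mul] at h4
  refine (stage4 hfin hτ hdeg hz hA' hu' (pow_pos hε _) (hle _ (by norm_num)) (hτk _ (by norm_num)) h4).mono ?_
  rw [← pow_mul]

end

end SG


namespace SG

/-- Data of chords hanging between two poles together with a hub. -/
structure Fan (V : Type) where
  α : Set (ℤ × ℤ)
  β : Set (ℤ × ℤ)
  c0 : Set (ℤ × ℤ)
  C : V → Set (ℤ × ℤ)
  κ : ℤ × ℤ
  I : V → Prop
  fα : α.Finite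
  cα : Conn α
  cβ : Conn β
  cc0 : Conn c0
  dαβ : Disjoint α β
  dα : Disjoint α c0
  dβ : Disjoint β c0
  tα : Tch c0 α
  tβ : Tch c0 β
  hκ : ∃ y ∈ c0, Hadj κ y
  hC : ∀ i, I i → κ ∉ C i ∧ Conn (C i) ∧ Disjoint (C i) α ∧ Disjoint (C i) β ∧
        Disjoint (C i) c0 ∧ Tch (C i) α ∧ Tch (C i) β

namespace Fan
variable {V : Type} (F : Fan V)

/-- `E` avoids poles and hub. -/
def Av (E : Set (ℤ × ℤ)) : Prop := Conn E ∧ Disjoint E F.α ∧ Disjoint E F.β ∧ Disjoint E F.c0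

/-- The order on chords. -/
def r (i k : V) : Prop := Disjoint (F.C i) (F.C k) ∧ ∃ P, F.Av P ∧ F.κ ∈ P ∧ Disjoint P (F.C i) ∧
  Disjoint P (F.C k) ∧ Tch P (F.C k)

variable {F}

lemma Av.union {E E' : Set (ℤ × ℤ)} (h : F.Av E) (h' : F.Av E') (hc : Conn (E ∪ E')) : F.Av (E ∪ E') :=
  ⟨hc, h.2.1.union_left h'.2.1, h.2.2.1.union_left h'.2.2.1, h.2.2.2.union_left h'.2.2.2⟩

lemma av_C {i : V} (hi : F.I i) : F.Av (F.C i) :=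
  ⟨(F.hC i hi).2.1, (F.hC i hi).2.2.1, (F.hC i hi).2.2.2.1, (F.hC i hi).2.2.2.2.1⟩

lemma mkr {i k : V} (hk : F.I k) (hd : Disjoint (F.C i) (F.C k)) {E : Set (ℤ × ℤ)}
    (hE : F.Av E) (hκ : F.κ ∈ E) (hEi : Disjoint E (F.C i)) (hEk : (E ∩ F.C k).Nonempty) : F.r i k := by
  obtain ⟨P, hPE, hxP, cP, dP, p, hp, q, hq, hpq⟩ := Conn.first_hit hE.1 hκ (F.hC k hk).1 hEk
  refine ⟨hd, P, ⟨cP, hE.2.1.mono_left hPE, hE.2.2.1.mono_left hPE, hE.2.2.2.mono_left hPE⟩, hxP,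
    hEi.mono_left hPE, dP, p, hp, q, hq.2, hpq⟩

lemma total {i k : V} (hi : F.I i) (hk : F.I k) (hd : Disjoint (F.C i) (F.C k)) {E : Set (ℤ × ℤ)}
    (hE : F.Av E) (hκ : F.κ ∈ E) (hEk : (E ∩ F.C k).Nonempty) : F.r i k ∨ F.r k i := by
  obtain ⟨P, hPE, hxP, cP, dP, p, hp, q, hq, hpq⟩ := Conn.first_hit (T := F.C i ∪ F.C k) hE.1 hκ
    (by rintro (h | h)
        · exact (F.hC i hi).1 h
        · exact (F.hC k hk).1 h) (hEk.mono (Set.inter_subset_inter_right _ Set.subset_union_right))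
  rw [Set.disjoint_union_right] at dP
  have hP : F.Av P := ⟨cP, hE.2.1.mono_left hPE, hE.2.2.1.mono_left hPE, hE.2.2.2.mono_left hPE⟩
  rcases hq.2 with h | h
  · right; exact ⟨hd.symm, P, hP, hxP, dP.2, dP.1, p, hp, q, h, hpq⟩
  · left; exact ⟨hd, P, hP, hxP, dP.1, dP.2, p, hp, q, h, hpq⟩

lemma asymm {i k : V} (hi : F.I i) (hk : F.I k) (h1 : F.r i k) (h2 : F.r k i) : False := by
  obtain ⟨hd, P1, a1, k1, di1, dk1, t1⟩ := h1
  obtain ⟨-, P2, a2, k2, dk2, di2, t2⟩ := h2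
  have aM : F.Av (P1 ∪ P2) := a1.union a2 (a1.1.union a2.1 ⟨F.κ, k1, k2⟩)
  obtain ⟨-, ci, diα, diβ, dic, tiα, tiβ⟩ := F.hC i hi
  obtain ⟨-, ck, dkα, dkβ, dkc, tkα, tkβ⟩ := F.hC k hk
  obtain ⟨y, hy, hκy⟩ := F.hκ
  refine noK33 F.β F.α (P1 ∪ P2) ![F.c0, F.C i, F.C k] F.fα F.cβ F.cα aM.1 ?_ F.dαβ.symm aM.2.2.1.symm
    aM.2.1.symm ?_ ?_ ?_ ?_ ?_ ?_ ?_
  · intro j; fin_cases j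
    exacts [F.cc0, ci, ck]
  · intro a b hab
    fin_cases a <;> fin_cases b <;> first | exact absurd rfl hab | skip
    exacts [dic.symm, dkc.symm, dic, hd, dkc, hd.symm]
  · intro j; fin_cases j
    exacts [F.dβ, diβ.symm, dkβ.symm]
  · intro j; fin_cases j
    exacts [F.dα, diα.symm, dkα.symm]
  · intro j; fin_cases j
    exacts [aM.2.2.2, di1.union_left di2, dk1.union_left dk2]
  · intro j; fin_cases j
    exacts [F.tβ.symm, tiβ.symm, tkβ.symm]
  · intro j; fin_cases j
    exacts [F.tα.symm, tiα.symm, tkα.symm]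
  · intro j; fin_cases j
    exacts [⟨F.κ, Or.inl k1, y, hy, hκy⟩, t2.mono Set.subset_union_right le_rfl,
      t1.mono Set.subset_union_left le_rfl]

lemma trans {i k l : V} (hi : F.I i) (hk : F.I k) (hl : F.I l) (h1 : F.r i k) (h2 : F.r k l) : F.r i l := by
  have h2' := h2
  obtain ⟨hd, P2, a2, k2, dk2, dl2, t2⟩ := h2'
  have aE : F.Av (P2 ∪ F.C l) := a2.union (av_C hl) (a2.1.union_tch (av_C hl).1 t2)
  have dE : Disjoint (P2 ∪ F.C l) (F.C i) := by
    by_contra hc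
    rw [Set.not_disjoint_iff_nonempty_inter] at hc
    exact asymm hi hk h1 (mkr hi h1.1.symm aE (Or.inl k2) (dk2.union_left hd.symm) hc)
  rw [Set.disjoint_union_left] at dE
  exact ⟨dE.2.symm, P2, a2, k2, dE.1, dl2, t2⟩

lemma between {i k l : V} (hi : F.I i) (hk : F.I k) (hl : F.I l) (h1 : F.r i k) (h2 : F.r k l)
    {D : Set (ℤ × ℤ)} (hD : F.Av D) (hDi : (F.C i ∩ D).Nonempty) (hDl : (F.C l ∩ D).Nonempty) :
    (F.C k ∩ D).Nonempty := by
  by_contra hc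
  rw [← Set.not_disjoint_iff_nonempty_inter, not_not] at hc
  obtain ⟨hd, P2, a2, k2, dk2, dl2, t2⟩ := h2
  have aE : F.Av (P2 ∪ F.C l) := a2.union (av_C hl) (a2.1.union_tch (av_C hl).1 t2)
  have aE' : F.Av (P2 ∪ F.C l ∪ D) := aE.union hD (aE.1.union hD.1
    (hDl.mono (Set.inter_subset_inter_left _ Set.subset_union_right)))
  refine asymm hi hk h1 (mkr hi h1.1.symm aE' (Or.inl (Or.inl k2)) ((dk2.union_left hd.symm).union_left hc.symm) ?_)
  rw [Set.inter_comm]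
  exact hDi.mono (Set.inter_subset_inter_right _ Set.subset_union_right)

end Fan

lemma order_of_final {V : Type} [Fintype V] [Nonempty V] {Im : V → Set (ℤ × ℤ)} {τ : ℝ}
    (hdeg : ∀ w, av (fun v => ind (w ∈ Im v)) ≤ τ) {ρ : ℝ} (hρ : 0 < ρ) (h : Final Im ρ) :
    ∃ (I : V → Prop) (r Q : V → V → Prop),
      (∀ i k, I i → I k → r i k → r k i → False) ∧
      (∀ i k l, I i → I k → I l → r i k → r k l → r i l) ∧
      (∀ i k, I i → I k → Disjoint (Im i) (Im k) → r i k ∨ r k i) ∧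
      (∀ i k l j, I i → I k → I l → r i k → r k l → Q i j → Q l j → (Im k ∩ Im j).Nonempty) ∧
      ρ ^ 2 - τ ≤ av fun i => av fun j => ind (I i ∧ Q i j) := by
  obtain ⟨α, β, c0, C, D, Q, h1, h2, h3, h4, h5, h6, h7, h8, h9, hQ, hden⟩ := h
  have hsq : ρ ^ 2 ≤ av fun j0 => av fun i => av fun j => ind (Q i j0 ∧ Q i j) := by
    refine ((pow_le_pow_left₀ hρ.le hden 2).trans
      (av_pow (fun _ => av_nonneg fun _ => ind_nonneg _) 1)).trans (le_of_eq ?_)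
    rw [av_comm]
    congr 1; funext i
    simp only [← ind_mul, av_mul, av_mul']
    ring
  obtain ⟨j0, hj0⟩ := exists_le_av hsq
  have hex : ∃ i, Q i j0 := by
    obtain ⟨i, hi⟩ := exists_le_av hj0
    obtain ⟨j, hj⟩ := exists_le_av hi
    refine ⟨i, ?_⟩
    by_contra hc
    rw [ind_false (fun h => hc h.1)] at hj
    have : 0 < ρ ^ 2 := by positivity
    linarith
  obtain ⟨i0, hi0⟩ := hex
  obtain ⟨-, ⟨d1, d2, d3, d4, d5, κ, hκ, y, hy, hκy⟩, -⟩ := hQ i0 j0 hi0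
  let F : Fan V := ⟨α, β, c0, C, κ, fun i => Q i j0 ∧ κ ∉ C i, h1, h2, h3, h4, h5, h6, h7, h8, h9, ⟨y, hy, hκy⟩,
    fun i hi => ⟨hi.2, (hQ i j0 hi.1).1.2⟩⟩
  have hCI : ∀ i, F.I i → C i ⊆ Im i := fun i hi => (hQ i j0 hi.1).1.1
  refine ⟨F.I, F.r, Q, fun i k hi hk => Fan.asymm hi hk, fun i k l hi hk hl => Fan.trans hi hk hl, ?_, ?_, ?_⟩
  · intro i k hi hk hd
    exact Fan.total hi hk (hd.mono (hCI i hi) (hCI k hk)) (E := D j0) ⟨d2, d3, d4, d5⟩ hκ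
      (by rw [Set.inter_comm]; exact (hQ k j0 hk.1).2.2)
  · intro i k l j hi hk hl r1 r2 q1 q2
    obtain ⟨-, ⟨e1, e2, e3, e4, e5, -⟩, e6⟩ := hQ i j q1
    refine (Fan.between hi hk hl r1 r2 (D := D j) ⟨e2, e3, e4, e5⟩ e6 (hQ l j q2).2.2).mono ?_
    exact Set.inter_subset_inter (hCI k hk) e1
  · have : (av fun i => av fun j => ind (Q i j0 ∧ Q i j)) ≤
        (av fun i => av fun j => ind (F.I i ∧ Q i j)) + τ := by
      refine le_trans ?_ (add_le_add_right (hdeg κ) _)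
      rw [← av_add]
      refine av_mono fun i => ?_
      rw [← av_const (V := V) (ind (κ ∈ Im i)), ← av_add]
      refine av_mono fun j => ind_or ?_
      rintro ⟨q1, q2⟩
      by_cases hc : κ ∈ C i
      · right; exact (hQ i j0 q1).1.1 hc
      · left; exact ⟨⟨q1, hc⟩, q2⟩
    linarith

end SG


namespace SG

section
variable {N t : ℕ} {r : ℕ → ℕ → Prop}

/-- Large disjoint families contain comparable pairs. -/
def Comp (N t : ℕ) (r : ℕ → ℕ → Prop) : Prop := ∀ A B : Finset ℕ, A ⊆ Finset.range N → B ⊆ Finset.range N →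
  Disjoint A B → t ≤ A.card → t ≤ B.card → ∃ a ∈ A, ∃ b ∈ B, r a b ∨ r b a

open Classical in
lemma up_lt (hE : Comp N t r) (hlt : ∀ a b, r a b → a < b) {U : Finset ℕ} {y : ℕ} (hU : U ⊆ Finset.range N)
    (hy : ∀ u ∈ U, u < y) (ht : t ≤ U.card) :
    ((Finset.Ico y N).filter fun k => ∀ u ∈ U, ¬ r u k).card < t := by
  by_contra hc
  push Not at hc
  obtain ⟨a, ha, b, hb, h⟩ := hE U _ hU (fun k hk => by
    rw [Finset.mem_filter, Finset.mem_Ico] at hk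
    exact Finset.mem_range.mpr hk.1.2) (by
    rw [Finset.disjoint_left]
    intro a ha hk
    rw [Finset.mem_filter, Finset.mem_Ico] at hk
    have := hy a ha; omega) ht hc
  rw [Finset.mem_filter, Finset.mem_Ico] at hb
  rcases h with h | h
  · exact hb.2 a ha h
  · have := hlt _ _ h; have := hy a ha; omega

open Classical in
lemma halve (hE : Comp N t r) (hlt : ∀ a b, r a b → a < b) (htr : ∀ a b c, r a b → r b c → r a c) (ht : 1 ≤ t)
    (R : ℕ) : ∀ (x : ℕ) (S : Finset ℕ), S.card ≤ 2 ^ R →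
    t ≤ ((Finset.Ico x (x + 3 * t)).filter fun k => k < N ∧ ∃ s ∈ S, r s k).card →
    ∃ s ∈ S, ((Finset.Ico (x + (R + 1) * (3 * t)) N).filter fun k => ¬ r s k).card < t := by
  have hUU : ∀ (x : ℕ) (S : Finset ℕ), t ≤ ((Finset.Ico x (x + 3 * t)).filter fun k => k < N ∧ ∃ s ∈ S, r s k).card →
      ((Finset.Ico (x + 3 * t) N).filter fun k => ∀ s ∈ S, ¬ r s k).card < t := by
    intro x S h
    refine lt_of_le_of_lt (Finset.card_le_card ?_) (up_lt hE hlt (y := x + 3 * t) (fun k hk => ?_) (fun k hk => ?_) h)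
    · intro k hk
      rw [Finset.mem_filter] at hk ⊢
      refine ⟨hk.1, fun u hu huk => ?_⟩
      rw [Finset.mem_filter] at hu
      obtain ⟨s, hs, hsu⟩ := hu.2.2
      exact hk.2 s hs (htr _ _ _ hsu huk)
    · rw [Finset.mem_filter] at hk
      exact Finset.mem_range.mpr hk.2.1
    · rw [Finset.mem_filter, Finset.mem_Ico] at hk
      exact hk.1.2
  induction R with
  | zero =>
    intro x S hS h
    have h1 := hUU x S h
    obtain ⟨k, hk⟩ : ((Finset.Ico x (x + 3 * t)).filter fun k => k < N ∧ ∃ s ∈ S, r s k).Nonempty :=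
      Finset.card_pos.mp (by omega)
    rw [Finset.mem_filter] at hk
    obtain ⟨s, hs, -⟩ := hk.2.2
    refine ⟨s, hs, lt_of_le_of_lt (Finset.card_le_card ?_) h1⟩
    intro k hk
    rw [Finset.mem_filter] at hk ⊢
    refine ⟨by simpa using hk.1, fun s' hs' => ?_⟩
    rw [pow_zero] at hS
    rw [Finset.card_le_one.mp hS s' hs' s hs]
    exact hk.2
  | succ R ih =>
    intro x S hS h
    have h1 := hUU x S h
    obtain ⟨k, hk⟩ : ((Finset.Ico x (x + 3 * t)).filter fun k => k < N ∧ ∃ s ∈ S, r s k).Nonempty :=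
      Finset.card_pos.mp (by omega)
    rw [Finset.mem_filter] at hk
    obtain ⟨s, hs, -⟩ := hk.2.2
    by_cases hN : N < x + 3 * t + 3 * t
    · refine ⟨s, hs, ?_⟩
      rw [Finset.Ico_eq_empty (by
        have : x + 3 * t + 3 * t ≤ x + (R + 1 + 1) * (3 * t) := by nlinarith [Nat.zero_le (R * t)]
        omega), Finset.filter_empty, Finset.card_empty]
      omega
    obtain ⟨S1, hS1, hc1⟩ := Finset.exists_subset_card_eq (s := S) (n := S.card / 2) (by omega)
    have hc2 : (S \ S1).card = S.card - S.card / 2 := by rw [Finset.card_sdiff_of_subset hS1, hc1]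
    rw [pow_succ] at hS
    have hcov : 2 * t ≤ ((Finset.Ico (x + 3 * t) (x + 3 * t + 3 * t)).filter fun k => k < N ∧ ∃ s ∈ S1, r s k).card +
        ((Finset.Ico (x + 3 * t) (x + 3 * t + 3 * t)).filter fun k => k < N ∧ ∃ s ∈ S \ S1, r s k).card := by
      refine le_trans ?_ (Finset.card_union_le _ _)
      have : 3 * t ≤ (((Finset.Ico (x + 3 * t) (x + 3 * t + 3 * t)).filter fun k => k < N ∧ ∃ s ∈ S1, r s k) ∪
        ((Finset.Ico (x + 3 * t) (x + 3 * t + 3 * t)).filter fun k => k < N ∧ ∃ s ∈ S \ S1, r s k)).card +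
          ((Finset.Ico (x + 3 * t) N).filter fun k => ∀ s ∈ S, ¬ r s k).card := by
        refine le_trans ?_ (Finset.card_union_le _ _)
        have hI : (Finset.Ico (x + 3 * t) (x + 3 * t + 3 * t)).card = 3 * t := by simp
        nth_rewrite 1 [← hI]
        refine Finset.card_le_card fun k hk => ?_
        have hk' := Finset.mem_Ico.mp hk
        by_cases hex : ∃ s ∈ S, r s k
        · obtain ⟨s, hs, hsk⟩ := hex
          refine Finset.mem_union_left _ ?_
          by_cases h1 : s ∈ S1
          · refine Finset.mem_union_left _ (Finset.mem_filter.mpr ⟨hk, by omega, s, h1, hsk⟩)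
          · refine Finset.mem_union_right _ (Finset.mem_filter.mpr ⟨hk, by omega, s, Finset.mem_sdiff.mpr ⟨hs, h1⟩, hsk⟩)
        · push Not at hex
          exact Finset.mem_union_right _ (Finset.mem_filter.mpr ⟨Finset.mem_Ico.mpr ⟨by omega, by omega⟩, hex⟩)
      omega
    have heq : x + 3 * t + (R + 1) * (3 * t) = x + (R + 1 + 1) * (3 * t) := by ring
    rw [← heq]
    rcases (by omega : t ≤ ((Finset.Ico (x + 3 * t) (x + 3 * t + 3 * t)).filter fun k => k < N ∧ ∃ s ∈ S1, r s k).card ∨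
        t ≤ ((Finset.Ico (x + 3 * t) (x + 3 * t + 3 * t)).filter fun k => k < N ∧ ∃ s ∈ S \ S1, r s k).card) with H | H
    · obtain ⟨s, hs, h⟩ := ih _ S1 (by omega) H
      exact ⟨s, hS1 hs, h⟩
    · obtain ⟨s, hs, h⟩ := ih _ (S \ S1) (by omega) H
      exact ⟨s, Finset.sdiff_subset hs, h⟩

open Classical in
lemma bad_block (hE : Comp N t r) (hlt : ∀ a b, r a b → a < b) (htr : ∀ a b c, r a b → r b c → r a c) (ht : 1 ≤ t)
    {R M : ℕ} (hR : N ≤ 2 ^ R) (hM : (R + 1) * (3 * t) ≤ M) (x : ℕ) :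
    ((Finset.range N).filter fun s => s < x ∧ t ≤ ((Finset.Ico (x + M) N).filter fun k => ¬ r s k).card).card < t := by
  by_contra hc
  push Not at hc
  set S := (Finset.range N).filter fun s => s < x ∧ t ≤ ((Finset.Ico (x + M) N).filter fun k => ¬ r s k).card with hS
  have hSN : S ⊆ Finset.range N := Finset.filter_subset _ _
  have h1 := up_lt hE hlt (y := x) hSN (fun u hu => (Finset.mem_filter.mp hu).2.1) hc
  have hfin : ∃ s ∈ S, ((Finset.Ico (x + (R + 1) * (3 * t)) N).filter fun k => ¬ r s k).card < t := by
    by_cases hN : N < x + 3 * t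
    · obtain ⟨s, hs⟩ : S.Nonempty := Finset.card_pos.mp (by omega)
      refine ⟨s, hs, ?_⟩
      rw [Finset.Ico_eq_empty (by
        have : x + 3 * t ≤ x + (R + 1) * (3 * t) := by nlinarith [Nat.zero_le (R * t)]
        omega), Finset.filter_empty, Finset.card_empty]
      omega
    · refine halve hE hlt htr ht R x S ?_ ?_
      · have := Finset.card_le_card hSN
        rw [Finset.card_range] at this
        omega
      · have : 3 * t ≤ ((Finset.Ico x (x + 3 * t)).filter fun k => k < N ∧ ∃ s ∈ S, r s k).card +
            ((Finset.Ico x N).filter fun k => ∀ u ∈ S, ¬ r u k).card := by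
          refine le_trans ?_ (Finset.card_union_le _ _)
          have hI : (Finset.Ico x (x + 3 * t)).card = 3 * t := by simp
          nth_rewrite 1 [← hI]
          refine Finset.card_le_card fun k hk => ?_
          have hk' := Finset.mem_Ico.mp hk
          by_cases hex : ∃ s ∈ S, r s k
          · exact Finset.mem_union_left _ (Finset.mem_filter.mpr ⟨hk, by omega, hex⟩)
          · push Not at hex
            exact Finset.mem_union_right _ (Finset.mem_filter.mpr ⟨Finset.mem_Ico.mpr ⟨by omega, by omega⟩, hex⟩)
        omega
  obtain ⟨s, hs, h⟩ := hfin
  have h2 := (Finset.mem_filter.mp hs).2.2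
  have h3 : ((Finset.Ico (x + M) N).filter fun k => ¬ r s k).card ≤
      ((Finset.Ico (x + (R + 1) * (3 * t)) N).filter fun k => ¬ r s k).card :=
    Finset.card_le_card (Finset.filter_subset_filter _ (Finset.Ico_subset_Ico_left (by omega)))
  omega

open Classical in
lemma bad_card (hE : Comp N t r) (hlt : ∀ a b, r a b → a < b) (htr : ∀ a b c, r a b → r b c → r a c) (ht : 1 ≤ t)
    {R M : ℕ} (hR : N ≤ 2 ^ R) (hM : (R + 1) * (3 * t) ≤ M) :
    ((Finset.range N).filter fun s => t ≤ ((Finset.Ico (s + 2 * M) N).filter fun k => ¬ r s k).card).card ≤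
      (N / M + 1) * t := by
  have hM0 : 0 < M := by nlinarith
  have hsub : ((Finset.range N).filter fun s => t ≤ ((Finset.Ico (s + 2 * M) N).filter fun k => ¬ r s k).card) ⊆
      (Finset.range (N / M + 1)).biUnion fun q => (Finset.range N).filter fun s => s < (q + 1) * M ∧
        t ≤ ((Finset.Ico ((q + 1) * M + M) N).filter fun k => ¬ r s k).card := by
    intro s hs
    rw [Finset.mem_filter, Finset.mem_range] at hs
    rw [Finset.mem_biUnion]
    refine ⟨s / M, ?_, ?_⟩
    · rw [Finset.mem_range]
      exact Nat.lt_succ_of_le (Nat.div_le_div_right hs.1.le)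
    · rw [Finset.mem_filter, Finset.mem_range]
      refine ⟨hs.1, ?_, hs.2.trans (Finset.card_le_card (Finset.filter_subset_filter _ (Finset.Ico_subset_Ico_left ?_)))⟩
      · exact (Nat.div_lt_iff_lt_mul hM0).mp (Nat.lt_succ_self _)
      · have := Nat.div_mul_le_self s M
        rw [add_mul]; omega
  refine (Finset.card_le_card hsub).trans ((Finset.card_biUnion_le_card_mul _ _ t fun q _ => ?_).trans ?_)
  · exact (bad_block hE hlt htr ht hR hM _).le
  · rw [Finset.card_range]

open Classical in
lemma bad_card' (hE : Comp N t r) (hlt : ∀ a b, r a b → a < b) (htr : ∀ a b c, r a b → r b c → r a c) (ht : 1 ≤ t)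
    {R M : ℕ} (hR : N ≤ 2 ^ R) (hM : (R + 1) * (3 * t) ≤ M) :
    ((Finset.range N).filter fun l => t ≤ ((Finset.range N).filter fun k => k + 2 * M ≤ l ∧ ¬ r k l).card).card ≤
      (N / M + 1) * t := by
  obtain ⟨r', hr'⟩ : ∃ r' : ℕ → ℕ → Prop, ∀ a b, r' a b ↔ (a < N ∧ b < N ∧ r (N - 1 - b) (N - 1 - a)) :=
    ⟨fun a b => a < N ∧ b < N ∧ r (N - 1 - b) (N - 1 - a), fun _ _ => Iff.rfl⟩
  have hinj : ∀ A : Finset ℕ, A ⊆ Finset.range N → (A.image fun a => N - 1 - a).card = A.card := by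
    intro A hA
    refine Finset.card_image_of_injOn fun a ha b hb hab => ?_
    have h1 := Finset.mem_range.mp (hA ha)
    have h2 := Finset.mem_range.mp (hA hb)
    have hab : N - 1 - a = N - 1 - b := hab
    omega
  have hE' : Comp N t r' := by
    intro A B hA hB hd hAt hBt
    obtain ⟨_, ha0, _, hb0, h⟩ := hE (A.image fun a => N - 1 - a) (B.image fun a => N - 1 - a) (by
      intro k hk
      obtain ⟨a, ha, rfl⟩ := Finset.mem_image.mp hk
      have h1 := Finset.mem_range.mp (hA ha)
      exact Finset.mem_range.mpr (by omega)) (by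
      intro k hk
      obtain ⟨a, ha, rfl⟩ := Finset.mem_image.mp hk
      have h1 := Finset.mem_range.mp (hB ha)
      exact Finset.mem_range.mpr (by omega)) (by
      rw [Finset.disjoint_left]
      intro k hk hk'
      obtain ⟨a, ha, rfl⟩ := Finset.mem_image.mp hk
      obtain ⟨b, hb, hab⟩ := Finset.mem_image.mp hk'
      have h1 := Finset.mem_range.mp (hA ha)
      have h2 := Finset.mem_range.mp (hB hb)
      have : a = b := by omega
      subst this
      exact Finset.disjoint_left.mp hd ha hb) (by rw [hinj A hA]; exact hAt) (by rw [hinj B hB]; exact hBt)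
    obtain ⟨a, ha, rfl⟩ := Finset.mem_image.mp ha0
    obtain ⟨b, hb, rfl⟩ := Finset.mem_image.mp hb0
    have h1 := Finset.mem_range.mp (hA ha)
    have h2 := Finset.mem_range.mp (hB hb)
    rcases h with h | h
    · exact ⟨a, ha, b, hb, Or.inr ((hr' _ _).mpr ⟨h2, h1, h⟩)⟩
    · exact ⟨a, ha, b, hb, Or.inl ((hr' _ _).mpr ⟨h1, h2, h⟩)⟩
  have h := bad_card hE' (fun a b h => by
    rw [hr'] at h
    have := hlt _ _ h.2.2
    have := h.1; have := h.2.1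
    omega) (fun a b c h1 h2 => by
      rw [hr'] at *
      exact ⟨h1.1, h2.2.1, htr _ _ _ h2.2.2 h1.2.2⟩) ht hR hM
  refine le_trans ?_ h
  rw [← hinj _ (Finset.filter_subset _ _)]
  refine Finset.card_le_card fun s hs => ?_
  obtain ⟨l, hl, rfl⟩ := Finset.mem_image.mp hs
  rw [Finset.mem_filter, Finset.mem_range] at hl ⊢
  refine ⟨by omega, hl.2.trans ?_⟩
  rw [← hinj _ (Finset.filter_subset _ _)]
  refine Finset.card_le_card fun k hk0 => ?_
  obtain ⟨k, hk, rfl⟩ := Finset.mem_image.mp hk0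
  rw [Finset.mem_filter, Finset.mem_range] at hk
  refine Finset.mem_filter.mpr ⟨Finset.mem_Ico.mpr (by omega), fun hh => hk.2.2 ?_⟩
  have := ((hr' _ _).mp hh).2.2
  rwa [show N - 1 - (N - 1 - k) = k by omega, show N - 1 - (N - 1 - l) = l by omega] at this

end

end SG


namespace SG

lemma rank_exists {V : Type} [Fintype V] [Nonempty V] (I : V → Prop) (r : V → V → Prop)
    (has : ∀ i k, I i → I k → r i k → r k i → False)
    (htr : ∀ i k l, I i → I k → I l → r i k → r k l → r i l) :
    ∃ (N : ℕ) (φ : ℕ → V) (e : V → ℕ), N ≤ Fintype.card V ∧ (∀ k < N, I (φ k) ∧ e (φ k) = k) ∧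
      (∀ v, I v → e v < N ∧ φ (e v) = v) ∧ ∀ i k, I i → I k → r i k → e i < e k := by
  classical
  let J := {v // I v}
  let s : J → J → Prop := fun a b => a = b ∨ r a b
  have hs : IsPartialOrder J s :=
    { refl := fun a => Or.inl rfl
      trans := by
        rintro a b c (rfl | h1) (rfl | h2)
        · exact Or.inl rfl
        · exact Or.inr h2
        · exact Or.inr h1
        · exact Or.inr (htr _ _ _ a.2 b.2 c.2 h1 h2)
      antisymm := by
        rintro a b (rfl | h1) (h | h2)
        · rfl
        · rfl
        · exact h.symm
        · exact (has _ _ a.2 b.2 h1 h2).elim }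
  obtain ⟨s', hs', hss⟩ := extend_partialOrder s
  letI : LinearOrder J :=
    { le := s'
      le_refl := hs'.refl
      le_trans := hs'.trans
      le_antisymm := hs'.antisymm
      le_total := hs'.total
      toDecidableLE := Classical.decRel _ }
  let m := monoEquivOfFin J rfl
  refine ⟨Fintype.card J, fun k => if h : k < Fintype.card J then (m ⟨k, h⟩).1 else Classical.arbitrary V,
    fun v => if h : I v then (m.symm ⟨v, h⟩).1 else 0, Fintype.card_subtype_le _, ?_, ?_, ?_⟩
  · intro k hk
    have h := (m ⟨k, hk⟩).2
    simp only [dif_pos hk]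
    refine ⟨h, ?_⟩
    rw [dif_pos h]
    simp
  · intro v hv
    simp only [dif_pos hv]
    refine ⟨(m.symm ⟨v, hv⟩).2, ?_⟩
    rw [dif_pos (m.symm ⟨v, hv⟩).2]
    simp
  · intro i k hi hk h
    simp only [dif_pos hi, dif_pos hk]
    have h1 : (⟨i, hi⟩ : J) ≤ ⟨k, hk⟩ := hss _ _ (Or.inr h)
    have h2 : (⟨i, hi⟩ : J) ≠ ⟨k, hk⟩ := by
      intro he
      have : i = k := congrArg Subtype.val he
      subst this
      exact has _ _ hi hi h h
    exact m.symm.strictMono (lt_of_le_of_ne h1 h2)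

set_option maxHeartbeats 1000000 in
open Classical in
lemma poset_main {V : Type} [Fintype V] [Nonempty V] {X : V → V → Prop} {t R : ℕ} (ht : 1 ≤ t)
    (hX : ∀ A B : Finset V, Disjoint A B → t ≤ A.card → t ≤ B.card → ∃ a ∈ A, ∃ b ∈ B, ¬ X a b)
    {I : V → Prop} {r Q : V → V → Prop}
    (has : ∀ i k, I i → I k → r i k → r k i → False)
    (htr : ∀ i k l, I i → I k → I l → r i k → r k l → r i l)
    (htot : ∀ i k, I i → I k → ¬ X i k → r i k ∨ r k i)
    (hbet : ∀ i k l j, I i → I k → I l → r i k → r k l → Q i j → Q l j → X k j)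
    (hR : Fintype.card V ≤ 2 ^ R) {σ : ℝ} (hσ : 0 < σ)
    (hden : σ ≤ av fun i => av fun j => ind (I i ∧ Q i j))
    (hbig : 1000 * (t : ℝ) * (R + 2) ≤ σ ^ 3 * Fintype.card V) : False := by
  obtain ⟨N, φ, e, hN, hφ, he, hmono⟩ := rank_exists I r has htr
  set n := Fintype.card V with hn
  have hn0 : (0 : ℝ) < n := by exact_mod_cast Fintype.card_pos
  have hσ1 : σ ≤ 1 := hden.trans (av_le_of_le fun i => av_le_of_le fun j => ind_le_one _)
  have htR : (1 : ℝ) ≤ t := by exact_mod_cast ht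
  have hRR : (0 : ℝ) ≤ R := Nat.cast_nonneg _
  obtain ⟨r', hr'⟩ : ∃ r' : ℕ → ℕ → Prop, ∀ a b, r' a b ↔ (a < N ∧ b < N ∧ r (φ a) (φ b)) :=
    ⟨fun a b => a < N ∧ b < N ∧ r (φ a) (φ b), fun _ _ => Iff.rfl⟩
  have hE : Comp N t r' := by
    intro A B hA hB hd hAt hBt
    have hinj : ∀ A : Finset ℕ, A ⊆ Finset.range N → (A.image φ).card = A.card := by
      intro A hA
      refine Finset.card_image_of_injOn fun a ha b hb hab => ?_
      have h1 := Finset.mem_range.mp (hA ha)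
      have h2 := Finset.mem_range.mp (hA hb)
      rw [← (hφ a h1).2, ← (hφ b h2).2, hab]
    obtain ⟨_, ha0, _, hb0, h⟩ := hX (A.image φ) (B.image φ) (by
      rw [Finset.disjoint_left]
      intro k hk hk'
      obtain ⟨a, ha, rfl⟩ := Finset.mem_image.mp hk
      obtain ⟨b, hb, hab⟩ := Finset.mem_image.mp hk'
      have h1 := Finset.mem_range.mp (hA ha)
      have h2 := Finset.mem_range.mp (hB hb)
      have : a = b := by rw [← (hφ a h1).2, ← (hφ b h2).2, hab]
      subst this
      exact Finset.disjoint_left.mp hd ha hb) (by rw [hinj A hA]; exact hAt) (by rw [hinj B hB]; exact hBt)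
    obtain ⟨a, ha, rfl⟩ := Finset.mem_image.mp ha0
    obtain ⟨b, hb, rfl⟩ := Finset.mem_image.mp hb0
    have h1 := Finset.mem_range.mp (hA ha)
    have h2 := Finset.mem_range.mp (hB hb)
    refine ⟨a, ha, b, hb, ?_⟩
    rw [hr', hr']
    rcases htot _ _ (hφ a h1).1 (hφ b h2).1 h with h | h
    · exact Or.inl ⟨h1, h2, h⟩
    · exact Or.inr ⟨h2, h1, h⟩
  have hlt' : ∀ a b, r' a b → a < b := by
    intro a b h
    rw [hr'] at h
    have := hmono _ _ (hφ a h.1).1 (hφ b h.2.1).1 h.2.2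
    rwa [(hφ a h.1).2, (hφ b h.2.1).2] at this
  have htr' : ∀ a b c, r' a b → r' b c → r' a c := by
    intro a b c h1 h2
    rw [hr'] at h1 h2 ⊢
    exact ⟨h1.1, h2.2.1, htr _ _ _ (hφ a h1.1).1 (hφ b h2.1).1 (hφ c h2.2.1).1 h1.2.2 h2.2.2⟩
  set M := ⌊σ ^ 2 * n / 80⌋₊ with hM
  have hσ3 : σ ^ 3 * n ≤ σ ^ 2 * n := by
    have : σ ^ 3 ≤ σ ^ 2 := pow_le_pow_of_le_one hσ.le hσ1 (by norm_num)
    exact mul_le_mul_of_nonneg_right this hn0.le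
  have htt : (t : ℝ) * 2 ≤ t * (R + 2) := mul_le_mul_of_nonneg_left (by linarith) (by linarith)
  have hM1 : (M : ℝ) ≤ σ ^ 2 * n / 80 := Nat.floor_le (by positivity)
  have hM2 : σ ^ 2 * n / 160 ≤ (M : ℝ) := by
    have := Nat.lt_floor_add_one (σ ^ 2 * n / 80)
    rw [← hM] at this
    linarith
  have hM3 : (R + 1) * (3 * t) ≤ M := by
    have : (((R + 1) * (3 * t) : ℕ) : ℝ) ≤ M := by
      push_cast
      have : (t : ℝ) * (R + 2) = (R + 1) * t + t := by ring
      have h0 : 0 ≤ (R + 1 : ℝ) * t := by positivity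
      linarith
    exact_mod_cast this
  have hM4 : 4 * t ≤ M := by
    have : ((4 * t : ℕ) : ℝ) ≤ M := by
      push_cast
      linarith
    exact_mod_cast this
  have hM5 : 8 * (t : ℝ) ≤ σ * M := by
    have := mul_le_mul_of_nonneg_left hM2 hσ.le
    have h2 : σ * (σ ^ 2 * n / 160) = σ ^ 3 * n / 160 := by ring
    linarith
  have hM0 : (0 : ℝ) < M := by
    have : 0 < M := by omega
    exact_mod_cast this
  have hMn : (M : ℝ) ≤ n := by
    have : σ ^ 2 ≤ 1 := pow_le_one₀ hσ.le hσ1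
    nlinarith
  have hRN : N ≤ 2 ^ R := hN.trans hR
  have hb1 := bad_card hE hlt' htr' ht hRN hM3
  have hb2 := bad_card' hE hlt' htr' ht hRN hM3
  set B1 := (Finset.range N).filter fun s => t ≤ ((Finset.Ico (s + 2 * M) N).filter fun k => ¬ r' s k).card with hB1
  set B2 := (Finset.range N).filter fun l => t ≤ ((Finset.range N).filter fun k => k + 2 * M ≤ l ∧ ¬ r' k l).card with hB2
  have hcardle : ∀ (P : V → Prop) (B : Finset ℕ), (∀ v, P v → I v ∧ e v ∈ B) →
      av (fun v => ind (P v)) ≤ (B.card : ℝ) / n := by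
    intro P B h
    rw [av_ind_card]
    refine div_le_div_of_nonneg_right ?_ hn0.le
    have : (Finset.univ.filter P).card ≤ B.card := by
      refine Finset.card_le_card_of_injOn e (fun v hv => ?_) (fun a ha b hb hab => ?_)
      · exact (h v (by simpa using hv)).2
      · rw [← (he a (h a (by simpa using ha)).1).2, ← (he b (h b (by simpa using hb)).1).2, hab]
    exact_mod_cast this
  have hbd : ∀ B : Finset ℕ, B.card ≤ (N / M + 1) * t → (B.card : ℝ) / n ≤ σ / 4 := by
    intro B hB
    have h1 : (B.card : ℝ) ≤ ((N / M : ℕ) + 1) * t := by exact_mod_cast hB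
    have h2 : ((N / M : ℕ) : ℝ) ≤ (n : ℝ) / M :=
      Nat.cast_div_le.trans (div_le_div_of_nonneg_right (by exact_mod_cast hN) hM0.le)
    rw [div_le_iff₀ hn0]
    have h3 : (1 : ℝ) ≤ n / M := by rw [le_div_iff₀ hM0]; linarith
    have h4 : (((N / M : ℕ) : ℝ) + 1) * t ≤ (2 * (n / M)) * t :=
      mul_le_mul_of_nonneg_right (by linarith) (by linarith)
    refine h1.trans (h4.trans ?_)
    have h5 : 2 * ((n : ℝ) / M) * t = (2 * t * n) / M := by ring
    rw [h5, div_le_iff₀ hM0]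
    nlinarith
  set g : V → V → Prop := fun i j => I i ∧ Q i j ∧ e i ∉ B1 ∧ e i ∉ B2 with hg
  have hgden : σ / 2 ≤ av fun i => av fun j => ind (g i j) := by
    have h1 := (hcardle (fun v => I v ∧ e v ∈ B1) B1 (fun v hv => hv)).trans (hbd B1 hb1)
    have h2 := (hcardle (fun v => I v ∧ e v ∈ B2) B2 (fun v hv => hv)).trans (hbd B2 hb2)
    have h3 : (av fun i => av fun j => ind (I i ∧ Q i j)) ≤ (av fun i => av fun j => ind (g i j)) +
        ((av fun v => ind (I v ∧ e v ∈ B1)) + av fun v => ind (I v ∧ e v ∈ B2)) := by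
      simp only [← av_add]
      refine av_mono fun i => ?_
      rw [← av_const (V := V) (ind (I i ∧ e i ∈ B1) + ind (I i ∧ e i ∈ B2)), ← av_add]
      refine av_mono fun j => ?_
      refine (ind_or (q := g i j) (r := (I i ∧ e i ∈ B1) ∨ (I i ∧ e i ∈ B2)) ?_).trans (add_le_add le_rfl (ind_or id))
      rintro ⟨h1, h2⟩
      by_cases c1 : e i ∈ B1
      · exact Or.inr (Or.inl ⟨h1, c1⟩)
      by_cases c2 : e i ∈ B2
      · exact Or.inr (Or.inr ⟨h1, c2⟩)
      exact Or.inl ⟨h1, h2, c1, c2⟩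
    linarith
  have hsq : σ ^ 2 / 4 ≤ av fun a => av fun b => av fun j => ind (g a j ∧ g b j) := by
    rw [av_comm] at hgden
    have h0 : σ ^ 2 / 4 = (σ / 2) ^ 2 := by ring
    rw [h0]
    refine ((pow_le_pow_left₀ (by positivity) hgden 2).trans
      (av_pow (fun _ => av_nonneg fun _ => ind_nonneg _) 1)).trans (le_of_eq ?_)
    calc _ = av fun j => av fun a => av fun b => ind (g a j ∧ g b j) := by
          congr 1; funext j
          simp only [← ind_mul, av_mul, av_mul']
          ring
      _ = av fun a => av fun j => av fun b => ind (g a j ∧ g b j) := by rw [av_comm]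
      _ = _ := by congr 1; funext a; rw [av_comm]
  set cl : V → V → Prop := fun a b => I b ∧ e a < e b + 5 * M ∧ e b < e a + 5 * M with hcl
  have hclb : (av fun a => av fun b => ind (cl a b)) ≤ σ ^ 2 / 8 := by
    refine av_le_of_le fun a => ?_
    refine (hcardle (fun b => cl a b) (Finset.Ico (e a + 1 - 5 * M) (e a + 5 * M)) (fun v hv => ⟨hv.1, ?_⟩)).trans ?_
    · rw [Finset.mem_Ico]
      have := hv.2.1; have := hv.2.2
      omega
    · rw [Nat.card_Ico, div_le_iff₀ hn0]
      have : e a + 5 * M - (e a + 1 - 5 * M) ≤ 10 * M := by omega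
      have : ((e a + 5 * M - (e a + 1 - 5 * M) : ℕ) : ℝ) ≤ 10 * M := by exact_mod_cast this
      linarith
  have fin : ∀ a b, e a + 5 * M ≤ e b → I a → I b → e a ∉ B1 → e b ∉ B2 →
      σ ^ 2 / 8 ≤ (av fun j => ind (g a j ∧ g b j)) → False := by
    intro a b hab ha hb ha1 hb2 hj
    set B := Finset.univ.filter fun j => Q a j ∧ Q b j with hB
    have hBc : 2 * t ≤ B.card := by
      have h1 : σ ^ 2 / 8 ≤ (B.card : ℝ) / n := by
        rw [hB, hn, ← av_ind_card]
        exact hj.trans (av_mono fun j => ind_mono fun h => ⟨h.1.2.1, h.2.2.1⟩)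
      rw [le_div_iff₀ hn0] at h1
      have : ((2 * t : ℕ) : ℝ) ≤ B.card := by push_cast; linarith
      exact_mod_cast this
    set A := Finset.univ.filter fun k => I k ∧ r a k ∧ r k b with hA
    have hea := (he a ha)
    have heb := (he b hb)
    have c1 : ((Finset.Ico (e a + 2 * M) N).filter fun k => ¬ r' (e a) k).card < t := by
      by_contra hc
      push Not at hc
      exact ha1 (Finset.mem_filter.mpr ⟨Finset.mem_range.mpr hea.1, hc⟩)
    have c2 : ((Finset.range N).filter fun k => k + 2 * M ≤ e b ∧ ¬ r' k (e b)).card < t := by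
      by_contra hc
      push Not at hc
      exact hb2 (Finset.mem_filter.mpr ⟨Finset.mem_range.mpr heb.1, hc⟩)
    have hsub : Finset.Ico (e a + 2 * M) (e b - 2 * M) ⊆ (A.image e ∪
        ((Finset.Ico (e a + 2 * M) N).filter fun k => ¬ r' (e a) k)) ∪
        ((Finset.range N).filter fun k => k + 2 * M ≤ e b ∧ ¬ r' k (e b)) := by
      intro k hk
      rw [Finset.mem_Ico] at hk
      have hkN : k < N := by omega
      by_cases h1 : r' (e a) k
      · by_cases h2 : r' k (e b)
        · refine Finset.mem_union_left _ (Finset.mem_union_left _ (Finset.mem_image.mpr ⟨φ k, ?_, (hφ k hkN).2⟩))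
          rw [hr'] at h1 h2
          refine Finset.mem_filter.mpr ⟨Finset.mem_univ _, (hφ k hkN).1, ?_, ?_⟩
          · have := h1.2.2; rwa [hea.2] at this
          · have := h2.2.2; rwa [heb.2] at this
        · exact Finset.mem_union_right _ (Finset.mem_filter.mpr ⟨Finset.mem_range.mpr hkN, by omega, h2⟩)
      · exact Finset.mem_union_left _ (Finset.mem_union_right _ (Finset.mem_filter.mpr
          ⟨Finset.mem_Ico.mpr ⟨by omega, hkN⟩, h1⟩))
    have hAc : t ≤ A.card := by
      have h1 := (Finset.card_le_card hsub).trans ((Finset.card_union_le _ _).trans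
        (add_le_add_left (Finset.card_union_le _ _) _))
      rw [Nat.card_Ico] at h1
      have h2 := Finset.card_image_le (s := A) (f := e)
      omega
    obtain ⟨A', hA', hAc'⟩ := Finset.exists_subset_card_eq hAc
    obtain ⟨k, hk, j, hj, hkj⟩ := hX A' (B \ A') Finset.disjoint_sdiff hAc'.ge (by
      have := Finset.le_card_sdiff A' B
      omega)
    have hk' := (Finset.mem_filter.mp (hA' hk)).2
    have hj' := (Finset.mem_filter.mp (Finset.sdiff_subset hj)).2
    exact hkj (hbet a k b j ha hk'.1 hb hk'.2.1 hk'.2.2 hj'.1 hj'.2)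
  have hfinal : σ ^ 2 / 8 ≤ av fun a => av fun b => ((av fun j => ind (g a j ∧ g b j)) + (-1) * ind (cl a b)) := by
    simp only [av_add, av_mul]
    linarith
  obtain ⟨a, ha⟩ := exists_le_av hfinal
  obtain ⟨b, hb⟩ := exists_le_av ha
  have hσ2 : 0 < σ ^ 2 / 8 := by positivity
  have hnn := ind_nonneg (cl a b)
  have hjd : σ ^ 2 / 8 ≤ av fun j => ind (g a j ∧ g b j) := by linarith
  obtain ⟨j, hj⟩ := exists_le_av hjd
  have hgj : g a j ∧ g b j := by
    by_contra hc; rw [ind_false hc] at hj; linarith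
  obtain ⟨⟨a1, -, a2, a3⟩, ⟨b1, -, b2, b3⟩⟩ := hgj
  have hncl : ¬ cl a b := by
    intro hc
    rw [ind_true hc] at hb
    have : (av fun j => ind (g a j ∧ g b j)) ≤ 1 := av_le_of_le fun _ => ind_le_one _
    linarith
  rcases le_total (e a) (e b) with h | h
  · refine fin a b ?_ a1 b1 a2 b3 hjd
    by_contra hc
    exact hncl ⟨b1, by omega, by omega⟩
  · refine fin b a ?_ b1 a1 b2 a3 (hjd.trans (av_mono fun j => ind_mono fun h => ⟨h.2, h.1⟩))
    by_contra hc
    exact hncl ⟨b1, by omega, by omega⟩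

end SG


namespace SG

lemma extend_walk {S : Set (ℤ × ℤ)} {x y : ℤ × ℤ} (h : Jn S x y) (hx : x ∈ S) {g : ℕ → ℤ × ℤ} (hg : IsPath g)
    (hgS : Set.range g ⊆ S) (hm : ∃ m, ∀ i ≥ m, g i = x) :
    ∃ g' : ℕ → ℤ × ℤ, IsPath g' ∧ Set.range g ⊆ Set.range g' ∧ Set.range g' ⊆ S ∧ ∃ m, ∀ i ≥ m, g' i = y := by
  induction h with
  | refl => exact ⟨g, hg, le_rfl, hgS, hm⟩
  | @tail b c _ hbc ih =>
    obtain ⟨g', h1, h2, h3, m, h4⟩ := ih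
    refine ⟨fun i => if i ≤ m then g' i else c, ?_, ?_, ?_, m + 1, ?_⟩
    · intro i
      simp only
      rcases lt_trichotomy i m with h | h | h
      · rw [if_pos (by omega), if_pos (by omega)]; exact h1 i
      · right
        rw [if_pos (by omega), if_neg (by omega), h4 i (by omega)]; exact hbc.1
      · left
        rw [if_neg (by omega), if_neg (by omega)]
    · refine h2.trans ?_
      rintro _ ⟨i, rfl⟩
      by_cases hi : i ≤ m
      · exact ⟨i, by simp [hi]⟩
      · refine ⟨m, ?_⟩
        simp only [le_refl, if_true]
        rw [h4 m le_rfl, h4 i (by omega)]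
    · rintro _ ⟨i, rfl⟩
      simp only
      split_ifs
      · exact h3 ⟨i, rfl⟩
      · exact hbc.2.2
    · intro i hi
      simp only
      rw [if_neg (by omega)]

lemma exists_walk {S : Set (ℤ × ℤ)} (hS : Conn S) (hf : S.Finite) (hne : S.Nonempty) :
    ∃ g : ℕ → ℤ × ℤ, IsPath g ∧ Set.range g = S := by
  classical
  obtain ⟨x0, hx0⟩ := hne
  have key : ∀ F : Finset (ℤ × ℤ), (F : Set (ℤ × ℤ)) ⊆ S → ∃ g : ℕ → ℤ × ℤ, IsPath g ∧ (F : Set (ℤ × ℤ)) ⊆ Set.range g ∧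
      Set.range g ⊆ S ∧ ∃ x ∈ S, ∃ m, ∀ i ≥ m, g i = x := by
    intro F
    induction F using Finset.induction_on with
    | empty =>
      intro _
      refine ⟨fun _ => x0, fun i => Or.inl rfl, by simp, ?_, x0, hx0, 0, fun _ _ => rfl⟩
      rintro _ ⟨i, rfl⟩; exact hx0
    | insert c F _ ih =>
      intro hF
      rw [Finset.coe_insert, Set.insert_subset_iff] at hF
      obtain ⟨g, h1, h2, h3, x, hx, hm⟩ := ih hF.2
      obtain ⟨g', k1, k2, k3, m, k4⟩ := extend_walk (hS x hx c hF.1) hx h1 h3 hm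
      refine ⟨g', k1, ?_, k3, c, hF.1, m, k4⟩
      rw [Finset.coe_insert, Set.insert_subset_iff]
      exact ⟨⟨m, k4 m le_rfl⟩, h2.trans k2⟩
  obtain ⟨g, h1, h2, h3, -⟩ := key hf.toFinset (by simp)
  refine ⟨g, h1, h3.antisymm ?_⟩
  simpa using h2

/-- Grid points close to `p` at scale `s`. -/
def Nb (s : ℝ) (p : ℝ × ℝ) : Set (ℤ × ℤ) := {c | |p.1 - s * c.1| < s ∧ |p.2 - s * c.2| < s}

lemma fl_abs {s : ℝ} (hs : 0 < s) (x : ℝ) : |x - s * (⌊x / s⌋ : ℤ)| < s := by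
  have h1 := Int.floor_le (x / s)
  have h2 := Int.lt_floor_add_one (x / s)
  rw [le_div_iff₀ hs] at h1
  rw [div_lt_iff₀ hs] at h2
  rw [abs_lt]
  constructor <;> nlinarith

lemma fl_cases {s : ℝ} (hs : 0 < s) {x : ℝ} {a : ℤ} (h : |x - s * a| < s) : a = ⌊x / s⌋ ∨ a = ⌊x / s⌋ + 1 := by
  have h1 := Int.floor_le (x / s)
  have h2 := Int.lt_floor_add_one (x / s)
  rw [le_div_iff₀ hs] at h1
  rw [div_lt_iff₀ hs] at h2
  rw [abs_lt] at h
  have h3 : (⌊x / s⌋ : ℝ) < a + 1 := by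
    by_contra hc; push Not at hc
    nlinarith
  have h4 : (a : ℝ) < ⌊x / s⌋ + 1 + 1 := by
    by_contra hc; push Not at hc
    nlinarith
  have h3' : ⌊x / s⌋ < a + 1 := by exact_mod_cast h3
  have h4' : a < ⌊x / s⌋ + 1 + 1 := by exact_mod_cast h4
  omega

/-- Floor corner. -/
noncomputable def fl (s : ℝ) (p : ℝ × ℝ) : ℤ × ℤ := (⌊p.1 / s⌋, ⌊p.2 / s⌋)

lemma fl_mem {s : ℝ} (hs : 0 < s) (p : ℝ × ℝ) : fl s p ∈ Nb s p := ⟨fl_abs hs _, fl_abs hs _⟩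

lemma Nb_conn {s : ℝ} (hs : 0 < s) (p : ℝ × ℝ) : Conn (Nb s p) := by
  refine Conn.of_center (fl s p) ?_
  rintro ⟨a, b⟩ ⟨ha, hb⟩
  have m1 : ((a, (fl s p).2) : ℤ × ℤ) ∈ Nb s p := ⟨ha, (fl_mem hs p).2⟩
  have s1 : Jn (Nb s p) (fl s p) (a, (fl s p).2) := by
    rcases fl_cases hs ha with h | h
    · have : ((a, (fl s p).2) : ℤ × ℤ) = fl s p := Prod.ext h rfl
      rw [this]; exact Jn.refl
    · refine Jn.step ?_ (fl_mem hs p) m1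
      right; exact ⟨rfl, Or.inr h⟩
  refine s1.trans ?_
  rcases fl_cases hs hb with h | h
  · have : ((a, (fl s p).2) : ℤ × ℤ) = (a, b) := Prod.ext rfl h.symm
    rw [this]; exact Jn.refl
  · refine Jn.step ?_ m1 ⟨ha, hb⟩
    left; exact ⟨rfl, Or.inr h⟩

lemma disc_curve {f : ℝ → ℝ × ℝ} (hf : ContinuousOn f (Set.Icc 0 1)) {s : ℝ} (hs : 0 < s) :
    ∃ g : ℕ → ℤ × ℤ, IsPath g ∧ (Set.range g).Finite ∧ Set.range g = {c | ∃ p ∈ f '' Set.Icc 0 1, c ∈ Nb s p} := by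
  set S : Set (ℤ × ℤ) := {c | ∃ p ∈ f '' Set.Icc 0 1, c ∈ Nb s p} with hS
  have hsub : ∀ x ∈ Set.Icc (0 : ℝ) 1, Nb s (f x) ⊆ S := fun x hx c hc => ⟨f x, ⟨x, hx, rfl⟩, hc⟩
  have hfin : S.Finite := by
    have hb := (isCompact_Icc.image_of_continuousOn hf).isBounded
    obtain ⟨K, hK⟩ := hb.exists_norm_le
    refine Set.Finite.subset (Set.finite_Icc ((-⌈K / s + 1⌉, -⌈K / s + 1⌉) : ℤ × ℤ) (⌈K / s + 1⌉, ⌈K / s + 1⌉)) ?_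
    have aux : ∀ (x : ℝ) (a : ℤ), |x| ≤ K → |x - s * a| < s → -⌈K / s + 1⌉ ≤ a ∧ a ≤ ⌈K / s + 1⌉ := by
      intro x a h1 h2
      rw [abs_le] at h1
      rw [abs_lt] at h2
      have h3 : (a : ℝ) ≤ K / s + 1 := by
        have : (a : ℝ) - 1 ≤ K / s := by rw [le_div_iff₀ hs]; nlinarith
        linarith
      have h4 : -(a : ℝ) ≤ K / s + 1 := by
        have : -(a : ℝ) - 1 ≤ K / s := by rw [le_div_iff₀ hs]; nlinarith
        linarith
      have h5 := Int.le_ceil (K / s + 1)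
      have h6 : (a : ℝ) ≤ ⌈K / s + 1⌉ := h3.trans h5
      have h7 : ((-a : ℤ) : ℝ) ≤ ⌈K / s + 1⌉ := by push_cast; exact h4.trans h5
      have h6' : a ≤ ⌈K / s + 1⌉ := by exact_mod_cast h6
      have h7' : -a ≤ ⌈K / s + 1⌉ := by exact_mod_cast h7
      omega
    rintro ⟨a, b⟩ ⟨p, hp, h1, h2⟩
    have hpK := hK p hp
    rw [Prod.norm_def, max_le_iff, Real.norm_eq_abs, Real.norm_eq_abs] at hpK
    have ha := aux _ _ hpK.1 h1
    have hb := aux _ _ hpK.2 h2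
    exact ⟨⟨ha.1, hb.1⟩, ⟨ha.2, hb.2⟩⟩
  have hconn : Conn S := by
    have hP : ∀ x ∈ Set.Icc (0 : ℝ) 1, ∀ y ∈ Set.Icc (0 : ℝ) 1, Jn S (fl s (f x)) (fl s (f y)) := by
      intro x hx y hy
      refine (isPreconnected_Icc (a := (0 : ℝ)) (b := 1)).induction₂ (fun x y => Jn S (fl s (f x)) (fl s (f y))) ?_
        ?_ ?_ hx hy
      · intro x hx
        have hc := hf x hx
        have h1 : Filter.Tendsto (fun y => |(f y).1 - s * (fl s (f x)).1|) (nhdsWithin x (Set.Icc 0 1))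
            (nhds |(f x).1 - s * (fl s (f x)).1|) := ((hc.fst).sub continuousWithinAt_const).abs
        have h2 : Filter.Tendsto (fun y => |(f y).2 - s * (fl s (f x)).2|) (nhdsWithin x (Set.Icc 0 1))
            (nhds |(f x).2 - s * (fl s (f x)).2|) := ((hc.snd).sub continuousWithinAt_const).abs
        filter_upwards [h1.eventually_lt_const (fl_mem hs (f x)).1, h2.eventually_lt_const (fl_mem hs (f x)).2,
          self_mem_nhdsWithin] with y e1 e2 hy
        exact (Nb_conn hs (f y) _ ⟨e1, e2⟩ _ (fl_mem hs _)).mono (hsub y hy)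
      · intro x y z _ _ _ h1 h2; exact h1.trans h2
      · intro x y _ _ h; exact h.symm
    have h0 : (0 : ℝ) ∈ Set.Icc (0 : ℝ) 1 := by simp
    refine Conn.of_center (fl s (f 0)) ?_
    rintro c ⟨_, ⟨x, hx, rfl⟩, hc⟩
    exact (hP 0 h0 x hx).trans ((Nb_conn hs (f x) _ (fl_mem hs _) _ hc).mono (hsub x hx))
  have hne : S.Nonempty := ⟨fl s (f 0), hsub 0 (by simp) (fl_mem hs _)⟩
  obtain ⟨g, h1, h2⟩ := exists_walk hconn hfin hne
  exact ⟨g, h1, h2 ▸ hfin, h2⟩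

lemma discretize {V : Type} [Fintype V] {γ : V → Set (ℝ × ℝ)}
    (hγ : ∀ v, ∃ f : ℝ → ℝ × ℝ, ContinuousOn f (Set.Icc 0 1) ∧ γ v = f '' Set.Icc 0 1) :
    ∃ g : V → ℕ → ℤ × ℤ, (∀ v, IsPath (g v)) ∧ (∀ v, (Set.range (g v)).Finite) ∧
      ∀ u v, (Set.range (g u) ∩ Set.range (g v)).Nonempty ↔ (γ u ∩ γ v).Nonempty := by
  choose f hf hfγ using hγ
  have hcomp : ∀ v, IsCompact (γ v) := fun v => by
    rw [hfγ v]; exact isCompact_Icc.image_of_continuousOn (hf v)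
  have hδ : ∀ u v, ∃ δ : ℝ, 0 < δ ∧ (Disjoint (γ u) (γ v) → ∀ p ∈ γ u, ∀ q ∈ γ v, δ ≤ dist p q) := by
    intro u v
    by_cases hd : Disjoint (γ u) (γ v)
    · obtain ⟨δ, h0, h⟩ := hd.exists_thickenings (hcomp u) (hcomp v).isClosed
      refine ⟨δ, h0, fun _ p hp q hq => ?_⟩
      by_contra hc
      push Not at hc
      exact Set.disjoint_left.mp h (show q ∈ Metric.thickening δ (γ u) from
        Metric.mem_thickening_iff.mpr ⟨p, hp, by rw [dist_comm]; exact hc⟩)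
        (Metric.self_subset_thickening h0 _ hq)
    · exact ⟨1, one_pos, fun h => absurd h hd⟩
  choose δ hδ0 hδd using hδ
  obtain ⟨s, hs0, hs⟩ : ∃ s : ℝ, 0 < s ∧ ∀ u v, s < δ u v / 2 := by
    have h1 : ∀ᶠ s : ℝ in nhdsWithin 0 (Set.Ioi 0), ∀ u v, s < δ u v / 2 := by
      rw [Filter.eventually_all]; intro u
      rw [Filter.eventually_all]; intro v
      exact (eventually_lt_nhds (half_pos (hδ0 u v))).filter_mono nhdsWithin_le_nhds
    obtain ⟨s, hs, hs0⟩ := (h1.and self_mem_nhdsWithin).exists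
    exact ⟨s, hs0, hs⟩
  have := fun v => disc_curve (hf v) hs0
  choose g h1 h2 h3 using this
  refine ⟨g, h1, h2, fun u v => ?_⟩
  rw [h3 u, h3 v, ← hfγ u, ← hfγ v]
  constructor
  · rintro ⟨c, ⟨p, hp, hcp⟩, ⟨q, hq, hcq⟩⟩
    by_contra hne
    rw [← Set.not_disjoint_iff_nonempty_inter, not_not] at hne
    have hd := hδd u v hne p hp q hq
    have hlt := hs u v
    have : dist p q < 2 * s := by
      rw [Prod.dist_eq, max_lt_iff, Real.dist_eq, Real.dist_eq, abs_lt, abs_lt]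
      obtain ⟨a1, a2⟩ := hcp
      obtain ⟨b1, b2⟩ := hcq
      rw [abs_lt] at a1 a2 b1 b2
      refine ⟨⟨?_, ?_⟩, ⟨?_, ?_⟩⟩ <;> linarith
    linarith
  · rintro ⟨p, hp, hq⟩
    exact ⟨fl s p, ⟨p, hp, fl_mem hs0 p⟩, ⟨p, hq, fl_mem hs0 p⟩⟩

end SG

namespace SG

lemma dens_of_edges {V : Type} [Fintype V] (G : SimpleGraph V) [DecidableRel G.Adj]
    {Y : V → V → Prop} (hY : ∀ u v, G.Adj u v → Y u v) {ε : ℝ} (hε : 0 ≤ ε)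
    (hn : 0 < Fintype.card V) (hE : ε * (Fintype.card V : ℝ) ^ 2 ≤ G.edgeFinset.card) :
    ε ≤ av fun p => av fun x => ind (Y p x) := by
  classical
  have hn' : (0 : ℝ) < Fintype.card V := by exact_mod_cast hn
  have h1 : av (fun p => av fun x => ind (G.Adj p x)) ≤ av fun p => av fun x => ind (Y p x) :=
    av_mono fun p => av_mono fun x => ind_mono (hY p x)
  refine le_trans ?_ h1
  have h2 : ∀ p, av (fun x => ind (G.Adj p x)) = (G.degree p : ℝ) / Fintype.card V := by
    intro p
    rw [av_ind_card]
    congr 2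
    rw [← SimpleGraph.card_neighborFinset_eq_degree, SimpleGraph.neighborFinset_eq_filter]
  simp_rw [h2]
  unfold av
  rw [← Finset.sum_div, ← Nat.cast_sum, SimpleGraph.sum_degrees_eq_twice_card_edges, div_div,
    le_div_iff₀ (by positivity)]
  push_cast
  nlinarith [mul_nonneg hε (sq_nonneg (Fintype.card V : ℝ))]

lemma eps_le_half {V : Type} [Fintype V] (G : SimpleGraph V) [DecidableRel G.Adj] {ε : ℝ}
    (hn : 0 < Fintype.card V) (hE : ε * (Fintype.card V : ℝ) ^ 2 ≤ G.edgeFinset.card) :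
    ε ≤ 1 / 2 := by
  classical
  have hn' : (0 : ℝ) < Fintype.card V := by exact_mod_cast hn
  have h1 : 2 * G.edgeFinset.card ≤ Fintype.card V * Fintype.card V := by
    rw [← SimpleGraph.sum_degrees_eq_twice_card_edges]
    calc ∑ v, G.degree v ≤ ∑ _v : V, Fintype.card V :=
          Finset.sum_le_sum fun v _ => (G.degree_lt_card_verts v).le
      _ = _ := by simp
  have h2 : 2 * (G.edgeFinset.card : ℝ) ≤ (Fintype.card V : ℝ) * Fintype.card V := by
    exact_mod_cast h1
  by_contra hc
  push Not at hc
  nlinarith [mul_pos hn' hn']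

lemma core {V : Type} [Fintype V] (G : SimpleGraph V) [DecidableRel G.Adj]
    {g : V → ℕ → ℤ × ℤ} (hg : ∀ v, IsPath (g v)) (hfin : ∀ v, (Set.range (g v)).Finite)
    (hadj : ∀ u v, u ≠ v → (G.Adj u v ↔ (Set.range (g u) ∩ Set.range (g v)).Nonempty))
    (hn : 2 ≤ Fintype.card V) {ε : ℝ} (hε : 0 < ε)
    (hE : ε * (Fintype.card V : ℝ) ^ 2 ≤ G.edgeFinset.card) {t : ℕ} (ht : 1 ≤ t)
    (hsmall : (t : ℝ) * Real.logb 2 (Fintype.card V) ≤ 2 * ε ^ (27225 * 6 + 16) * Fintype.card V)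
    (hX : ∀ A B : Finset V, Disjoint A B → t ≤ A.card → t ≤ B.card →
      ∃ a ∈ A, ∃ b ∈ B, ¬ G.Adj a b) : False := by
  classical
  have hpos : 0 < Fintype.card V := by omega
  haveI : Nonempty V := Fintype.card_pos_iff.mp hpos
  have hX' : ∀ A B : Finset V, Disjoint A B → t ≤ A.card → t ≤ B.card →
      ∃ a ∈ A, ∃ b ∈ B, ¬ (Set.range (g a) ∩ Set.range (g b)).Nonempty := by
    intro A B hd hA hB
    obtain ⟨a, ha, b, hb, h⟩ := hX A B hd hA hB
    have hab : a ≠ b := fun h => Finset.disjoint_left.mp hd ha (h ▸ hb)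
    exact ⟨a, ha, b, hb, fun h' => h ((hadj a b hab).mpr h')⟩
  have hhalf := eps_le_half G hpos hE
  have hden := dens_of_edges G (Y := fun p x => (Set.range (g p) ∩ Set.range (g x)).Nonempty)
    (fun u v h => (hadj u v h.ne).mp h) hε.le hpos hE
  set n : ℝ := (Fintype.card V : ℝ) with hnn
  have hn2 : (2 : ℝ) ≤ n := by rw [hnn]; exact_mod_cast hn
  have hn0 : 0 < n := by linarith
  have hdeg : ∀ w, av (fun v => ind (w ∈ Set.range (g v))) ≤ 2 * t / n := by
    intro w
    rw [av_ind_card]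
    refine div_le_div_of_nonneg_right ?_ hn0.le
    by_contra hc
    push Not at hc
    have hc' : 2 * t < (Finset.univ.filter fun v => w ∈ Set.range (g v)).card := by
      exact_mod_cast hc
    obtain ⟨A, hA, hAc⟩ := Finset.exists_subset_card_eq
      (show t ≤ (Finset.univ.filter fun v => w ∈ Set.range (g v)).card by omega)
    obtain ⟨a, ha, b, hb, h⟩ := hX' A ((Finset.univ.filter fun v => w ∈ Set.range (g v)) \ A)
      Finset.disjoint_sdiff hAc.ge (by rw [Finset.card_sdiff_of_subset hA]; omega)
    refine h ⟨w, ?_, ?_⟩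
    · exact (Finset.mem_filter.mp (hA ha)).2
    · exact (Finset.mem_filter.mp (Finset.mem_sdiff.mp hb).1).2
  have hL1 : 1 ≤ Real.logb 2 n := by
    rw [Real.le_logb_iff_rpow_le one_lt_two hn0]; simpa using hn2
  have hpow : ε ^ (27225 * 6 + 16) = (ε ^ 27225) ^ 6 * ε ^ 16 := by rw [pow_add, pow_mul]
  rw [hpow] at hsmall
  have h16 : ε ^ 16 ≤ 1 / 65536 := by
    calc ε ^ 16 ≤ (1 / 2) ^ 16 := pow_le_pow_left₀ hε.le hhalf _
      _ = _ := by norm_num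
  have hae : ε ^ 27225 ≤ ε ^ 4950 := pow_le_pow_of_le_one hε.le (by linarith) (by norm_num)
  have ha0 : 0 < ε ^ 27225 := pow_pos hε _
  have ha1 : ε ^ 27225 ≤ 1 := pow_le_one₀ hε.le (by linarith)
  have key := fun hτε => exists_final hg hfin (τ := 2 * t / n) (by positivity) hdeg hε hhalf hτε hden
  generalize ε ^ 27225 = a at *
  generalize ε ^ 4950 = c at *
  have hp0 : 0 ≤ ε ^ 16 := by positivity
  generalize ε ^ 16 = q at *
  have ha6 : a ^ 6 ≤ a := by simpa using pow_le_pow_of_le_one ha0.le ha1 (show 1 ≤ 6 by norm_num)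
  have ha62 : a ^ 6 ≤ a ^ 2 := pow_le_pow_of_le_one ha0.le ha1 (by norm_num)
  have ha6p : 0 < a ^ 6 := by positivity
  have haq : a ^ 6 * q ≤ a ^ 6 / 65536 := by nlinarith
  have htL : (t : ℝ) * Real.logb 2 n ≤ a ^ 6 / 32768 * n := by
    refine hsmall.trans ?_
    refine mul_le_mul_of_nonneg_right ?_ hn0.le
    linarith
  have ht0 : (0 : ℝ) ≤ t := Nat.cast_nonneg _
  have htn : (t : ℝ) ≤ a ^ 6 / 32768 * n := le_trans (by nlinarith) htL
  have hτ : 2 * t / n ≤ a ^ 6 / 16384 := by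
    rw [div_le_iff₀ hn0]; linarith
  have hF := key (by linarith)
  obtain ⟨I, r, Q, has, htr, htot, hbet, hd⟩ := order_of_final hdeg ha0 hF
  have hσ : a ^ 2 / 2 ≤ av fun i => av fun j => ind (I i ∧ Q i j) := by linarith
  refine poset_main (X := fun a b => (Set.range (g a) ∩ Set.range (g b)).Nonempty)
    (R := Nat.clog 2 (Fintype.card V)) ht hX' has htr ?_ hbet
    (Nat.le_pow_clog one_lt_two _) (σ := a ^ 2 / 2) (by positivity) hσ ?_
  · intro i k hi hk h
    exact htot i k hi hk (Set.disjoint_iff_inter_eq_empty.mpr (Set.not_nonempty_iff_eq_empty.mp h))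
  · have hR : (Nat.clog 2 (Fintype.card V) : ℝ) ≤ Real.logb 2 n + 1 := by
      have h1 : 2 ^ (Nat.clog 2 (Fintype.card V)).pred < Fintype.card V :=
        Nat.pow_pred_clog_lt_self one_lt_two hn
      have h2 : ((2 : ℝ) ^ ((Nat.clog 2 (Fintype.card V)).pred : ℕ)) ≤ n := by
        rw [hnn]; exact_mod_cast h1.le
      have h3 : ((Nat.clog 2 (Fintype.card V)).pred : ℝ) ≤ Real.logb 2 n := by
        rw [Real.le_logb_iff_rpow_le one_lt_two hn0, Real.rpow_natCast]; exact h2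
      have h4 : Nat.clog 2 (Fintype.card V) ≤ (Nat.clog 2 (Fintype.card V)).pred + 1 := by
        rw [Nat.pred_eq_sub_one]; omega
      have h5 : (Nat.clog 2 (Fintype.card V) : ℝ) ≤ ((Nat.clog 2 (Fintype.card V)).pred : ℝ) + 1 := by
        exact_mod_cast h4
      linarith
    have h1 : (t : ℝ) * ((Nat.clog 2 (Fintype.card V) : ℝ) + 2) ≤ 4 * (t * Real.logb 2 n) := by
      have : (Nat.clog 2 (Fintype.card V) : ℝ) + 2 ≤ 4 * Real.logb 2 n := by linarith
      nlinarith
    have h2 : (a ^ 2 / 2) ^ 3 * n = a ^ 6 / 8 * n := by ring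
    rw [h2]
    have : 0 < a ^ 6 * n := by positivity
    nlinarith

lemma main (b : ℝ) (hb : b = ((27225 * 6 + 16 : ℕ) : ℝ)) {ε : ℝ} (hε : 0 < ε)
    {V : Type} [Fintype V] (G : SimpleGraph V) [DecidableRel G.Adj] {γ : V → Set (ℝ × ℝ)}
    (hγ : ∀ v, ∃ f : ℝ → ℝ × ℝ, ContinuousOn f (Set.Icc 0 1) ∧ γ v = f '' Set.Icc 0 1)
    (hG : ∀ u v : V, u ≠ v → (G.Adj u v ↔ (γ u ∩ γ v).Nonempty))
    (hn : 2 ≤ Fintype.card V) (hE : ε * (Fintype.card V : ℝ) ^ 2 ≤ G.edgeFinset.card) :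
    ∃ A B : Finset V, Disjoint A B ∧
      ε ^ b * (Fintype.card V : ℝ) / Real.logb 2 (Fintype.card V) ≤ A.card ∧
      ε ^ b * (Fintype.card V : ℝ) / Real.logb 2 (Fintype.card V) ≤ B.card ∧
      ∀ a ∈ A, ∀ b' ∈ B, G.Adj a b' := by
  classical
  rw [hb, Real.rpow_natCast]
  have hn2 : (2 : ℝ) ≤ Fintype.card V := by exact_mod_cast hn
  have hL1 : 1 ≤ Real.logb 2 (Fintype.card V) := by
    rw [Real.le_logb_iff_rpow_le one_lt_two (by linarith)]; simpa using hn2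
  by_cases h1 : ε ^ (27225 * 6 + 16) * (Fintype.card V : ℝ) / Real.logb 2 (Fintype.card V) ≤ 1
  · have hpos : (0 : ℝ) < G.edgeFinset.card := lt_of_lt_of_le (by positivity) hE
    have hpos' : 0 < G.edgeFinset.card := by exact_mod_cast hpos
    obtain ⟨e, he⟩ := Finset.card_pos.mp hpos'
    induction e with
    | _ u v =>
      have huv : G.Adj u v := by simpa using he
      refine ⟨{u}, {v}, by simpa using huv.ne, by simpa using h1, by simpa using h1, ?_⟩
      simpa using huv
  · push Not at h1
    by_contra hcon
    obtain ⟨g, hg, hfin, hinter⟩ := discretize hγ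
    set T := ε ^ (27225 * 6 + 16) * (Fintype.card V : ℝ) / Real.logb 2 (Fintype.card V) with hT
    have hceil : (⌈T⌉₊ : ℝ) ≤ 2 * T := by
      have := Nat.ceil_lt_add_one (show 0 ≤ T by linarith)
      linarith
    have hTL : T * Real.logb 2 (Fintype.card V) = ε ^ (27225 * 6 + 16) * (Fintype.card V : ℝ) := by
      rw [hT]; exact div_mul_cancel₀ _ (by linarith)
    refine core G hg hfin (fun u v huv => (hG u v huv).trans (hinter u v).symm) hn hε hE
      (t := ⌈T⌉₊) (Nat.one_le_ceil_iff.mpr (by linarith)) ?_ ?_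
    · calc (⌈T⌉₊ : ℝ) * Real.logb 2 (Fintype.card V) ≤ 2 * T * Real.logb 2 (Fintype.card V) :=
            mul_le_mul_of_nonneg_right hceil (by linarith)
        _ = 2 * (T * Real.logb 2 (Fintype.card V)) := by rw [mul_assoc]
        _ = _ := by rw [hTL, mul_assoc]
    · intro A B hd hA hB
      by_contra hno
      push Not at hno
      exact hcon ⟨A, B, hd, Nat.ceil_le.mp hA, Nat.ceil_le.mp hB, hno⟩

end SG


/-- There is a constant `b ≥ 1` such that for every real `0 < ε ≤ 1`, every string graph
with `n ≥ 2` vertices and at least `ε·n²` edges contains a complete bipartite subgraph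
whose two parts each have size at least `ε^b·n/log₂ n`. -/
theorem dense_string_graph_bipartite :
    ∃ b : ℝ, 1 ≤ b ∧
      ∀ (ε : ℝ), 0 < ε → ε ≤ 1 →
        ∀ (V : Type) [Fintype V] (G : SimpleGraph V) [DecidableRel G.Adj],
          IsStringGraph G → 2 ≤ Fintype.card V →
          ε * (Fintype.card V : ℝ) ^ 2 ≤ G.edgeFinset.card →
          ∃ A B : Finset V, Disjoint A B ∧
            ε ^ b * (Fintype.card V : ℝ) / Real.logb 2 (Fintype.card V) ≤ A.card ∧
            ε ^ b * (Fintype.card V : ℝ) / Real.logb 2 (Fintype.card V) ≤ B.card ∧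
            ∀ a ∈ A, ∀ b' ∈ B, G.Adj a b' := by
  refine ⟨((27225 * 6 + 16 : ℕ) : ℝ), by exact_mod_cast (by norm_num : 1 ≤ 27225 * 6 + 16), ?_⟩
  intro ε hε _ V _ G _ hG hn hE
  obtain ⟨γ, hγ, hadj⟩ := hG
  exact SG.main _ rfl hε G hγ hadj hn hE
end

section
/- Let s ≥ 0 be a real number and let G be a finite simple graph on n ≥ 3 vertices such that every induced subgraph of G on k ≥ 3 vertices contains an independent set of size at least k·(log₂ k)^{−s}. Then the chromatic number of G is at most 4·(log₂ n)^{s+1}. -/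
theorem greedy_color (V : Type) (G : SimpleGraph V) (a : ℝ) (ha : 0 < a) (N : ℕ)
    (h : ∀ W : Finset V, 3 ≤ W.card → W.card ≤ N →
      ∃ I : Finset V, I ⊆ W ∧ (I : Set V).Pairwise (fun u v => ¬ G.Adj u v) ∧
        (W.card : ℝ) * a ≤ I.card) :
    ∀ m : ℕ, m ≤ N → ∀ W : Finset V, W.card = m → 0 < m →
      ∃ (k : ℕ) (c : V → ℕ), (∀ v ∈ W, c v < k) ∧
        (∀ u ∈ W, ∀ v ∈ W, G.Adj u v → c u ≠ c v) ∧
        (k : ℝ) ≤ Real.log m / a + 2 := by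
  classical
  intro m
  induction m using Nat.strong_induction_on with
  | _ m ih =>
  intro hmN W hW hm
  have hm1 : (1 : ℝ) ≤ m := by exact_mod_cast hm
  have hlog : 0 ≤ Real.log m / a := div_nonneg (Real.log_nonneg hm1) ha.le
  by_cases h3 : 3 ≤ m
  · obtain ⟨I, hIW, hI, hIc⟩ := h W (by omega) (by omega)
    rw [hW] at hIc
    have hIpos : 0 < I.card := by
      have : (0 : ℝ) < I.card := lt_of_lt_of_le (by positivity) hIc
      exact_mod_cast this
    have hcard : (W \ I).card + I.card = m := by
      rw [Finset.card_sdiff_add_card_eq_card hIW, hW]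
    by_cases h0 : (W \ I).card = 0
    · have hWI : W ⊆ I := by
        rw [Finset.card_eq_zero] at h0
        exact Finset.sdiff_eq_empty_iff_subset.mp h0
      refine ⟨1, fun _ => 0, fun _ _ => by simp, ?_, by push_cast; linarith⟩
      intro u hu v hv huv
      exact absurd huv (hI (hWI hu) (hWI hv) huv.ne)
    · obtain ⟨k, c, hc1, hc2, hk⟩ :=
        ih (W \ I).card (by omega) (by omega) (W \ I) rfl (by omega)
      refine ⟨k + 1, fun v => if v ∈ I then k else c v, ?_, ?_, ?_⟩
      · intro v hv
        by_cases hvI : v ∈ I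
        · simp [hvI]
        · have := hc1 v (Finset.mem_sdiff.mpr ⟨hv, hvI⟩)
          simp only [hvI, if_false]; omega
      · intro u hu v hv huv
        by_cases huI : u ∈ I <;> by_cases hvI : v ∈ I
        · exact absurd huv (hI huI hvI huv.ne)
        · have := hc1 v (Finset.mem_sdiff.mpr ⟨hv, hvI⟩)
          simp only [huI, hvI, if_false, if_true]; omega
        · have := hc1 u (Finset.mem_sdiff.mpr ⟨hu, huI⟩)
          simp only [huI, hvI, if_false, if_true]; omega
        · simp only [huI, hvI, if_false]
          exact hc2 u (Finset.mem_sdiff.mpr ⟨hu, huI⟩) v (Finset.mem_sdiff.mpr ⟨hv, hvI⟩) huv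
      · have hx : (0 : ℝ) < (W \ I).card := by exact_mod_cast Nat.pos_of_ne_zero h0
        have hmp : (0 : ℝ) < m := by linarith
        have hcr : ((W \ I).card : ℝ) + I.card = m := by exact_mod_cast hcard
        have h1 := Real.log_le_sub_one_of_pos (div_pos hx hmp)
        rw [Real.log_div hx.ne' hmp.ne'] at h1
        have h2 : ((W \ I).card : ℝ) / m ≤ 1 - a := by
          rw [div_le_iff₀ hmp]; nlinarith
        have h4 : Real.log (W \ I).card / a ≤ Real.log m / a - 1 := by
          rw [div_sub_one ha.ne']
          exact div_le_div_of_nonneg_right (by linarith) ha.le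
        push_cast
        linarith
  · refine ⟨m, fun v => if hv : v ∈ W then (W.equivFin ⟨v, hv⟩ : ℕ) else 0, ?_, ?_, ?_⟩
    · intro v hv
      simp only [hv, dite_true]
      exact lt_of_lt_of_eq (Fin.is_lt _) hW
    · intro u hu v hv huv heq
      simp only [hu, hv, dite_true] at heq
      have := W.equivFin.injective (Fin.ext heq)
      exact huv.ne (congrArg Subtype.val this)
    · have : (m : ℝ) ≤ 2 := by exact_mod_cast (by omega : m ≤ 2)
      linarith

/-- If every induced subgraph of `G` on `k ≥ 3` vertices contains an independent set of
size at least `k·(log₂ k)^(−s)`, where `s ≥ 0` and `G` has `n ≥ 3` vertices, then the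
chromatic number of `G` is at most `4·(log₂ n)^(s+1)`. -/
theorem chromatic_number_from_independence
    (s : ℝ) (hs : 0 ≤ s)
    (V : Type) [Fintype V] (G : SimpleGraph V)
    (hn : 3 ≤ Fintype.card V)
    (hind : ∀ W : Finset V, 3 ≤ W.card →
      ∃ I : Finset V, I ⊆ W ∧ (I : Set V).Pairwise (fun u v => ¬ G.Adj u v) ∧
        (W.card : ℝ) * (Real.logb 2 W.card) ^ (-s) ≤ I.card) :
    ∃ k : ℕ, G.Colorable k ∧
      (k : ℝ) ≤ 4 * (Real.logb 2 (Fintype.card V)) ^ (s + 1) := by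
  set n := Fintype.card V with hnd
  have hn3 : (3 : ℝ) ≤ n := by exact_mod_cast hn
  set L := Real.logb 2 n with hL
  have hL1 : 1 ≤ L := by
    rw [hL, Real.le_logb_iff_rpow_le (by norm_num) (by linarith)]
    norm_num; linarith
  have hL0 : 0 < L := by linarith
  obtain ⟨k, c, hc1, hc2, hk⟩ := greedy_color V G (L ^ (-s)) (Real.rpow_pos_of_pos hL0 _) n
    (by
      intro W h3 hWn
      obtain ⟨I, h1, h2, h4⟩ := hind W h3
      refine ⟨I, h1, h2, le_trans ?_ h4⟩
      have hW3 : (3 : ℝ) ≤ W.card := by exact_mod_cast h3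
      have hWn' : (W.card : ℝ) ≤ n := by exact_mod_cast hWn
      refine mul_le_mul_of_nonneg_left ?_ (by linarith)
      refine Real.rpow_le_rpow_of_nonpos (Real.logb_pos (by norm_num) (by linarith)) ?_
        (by linarith)
      exact Real.logb_le_logb_of_le (by norm_num) (by linarith) hWn')
    n le_rfl Finset.univ Finset.card_univ (by omega)
  refine ⟨k, ⟨SimpleGraph.Coloring.mk (fun v => (⟨c v, hc1 v (Finset.mem_univ v)⟩ : Fin k)) ?_⟩, ?_⟩
  · intro u v huv heq
    exact hc2 u (Finset.mem_univ u) v (Finset.mem_univ v) huv (congrArg Fin.val heq)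
  · have hl2 : 0 < Real.log 2 := Real.log_pos (by norm_num)
    have hl2' : Real.log 2 ≤ 1 := by
      have := Real.log_le_sub_one_of_pos (show (0 : ℝ) < 2 by norm_num)
      linarith
    have hlog : Real.log n = L * Real.log 2 := by
      rw [hL, Real.logb]; field_simp
    have hP : 1 ≤ L ^ (s + 1) := Real.one_le_rpow hL1 (by linarith)
    have hdiv : Real.log n / L ^ (-s) = L ^ (s + 1) * Real.log 2 := by
      rw [hlog, Real.rpow_neg hL0.le, div_inv_eq_mul, Real.rpow_add hL0, Real.rpow_one]
      ring
    rw [hdiv] at hk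
    nlinarith
end
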